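/- arXiv:1311.6024 — 2 statements merged into one kernel-verified Lean document; each statement's English description precedes it below -/
import Mathlib

section
/- Let R ≥ 0 and let x be a feasible solution to the configuration LP (P) for RVRP of value k* = Σ_P x_P. Then there exist at most (8 + 4√3)·k* + 1 rooted paths, each of regret at most R, whose union covers all of V. In particular, the integrality gap of (P) is at most 9 + 4√3. -/
/-!
Write `D v = c r v`. The regret of a rooted path is its length with respect to the asymmetric
cost `reg u v = D u + c u v - D v`, which is nonnegative and satisfies the triangle inequality, so
shortcutting never increases regret. A closed walk has the same length for `reg` and for `c`. Fix
`θ` with `0 < θ < 1`, and let `k` be the value of the fractional solution `x`.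

*Segments.* Every path is cut, along its order, into segments such that `D` is strictly larger on
later segments than on earlier ones, and such that the `c`-length inside the segments is at most
`3/2` times the regret of the path (`exists_segments`): every level of `D` within the range of a
segment is traversed backwards by the path.

*Forest.* Call a set of nodes active if, from each of its nodes, the segments that leave the set
have weight at least `θ`. Repeatedly merge two parts of the partition into singletons along the
shortest edge that leaves an active part. An active set is crossed by segment edges of total
weight at least `θ`, so letting active parts load the edges that leave them is a feasible
dual of the segment solution up to a factor `1/θ`, and the doubled edges used cost at most
`4/θ * 3/2 * R * k = 6/θ * R * k` (`exists_forest`). All final parts are inactive, so each of them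
contains a witness from which segments of weight less than `θ` leave the part.

*Chains.* On each path keep only the witnesses whose segment stays inside their part. A segment
keeps at most one witness, so `D` is strictly increasing along what is kept, and the kept paths,
scaled by `1/(1 - θ)`, cover the witnesses fractionally (`keep_pairwise`). Covering chains in an
acyclic order are a bipartite matching problem, so Birkhoff's theorem rounds this to `⌈k/(1 - θ)⌉`
rooted walks through all witnesses of total regret at most `R * k/(1 - θ)`
(`IsFracCover.exists_perm`).

*Cutting.* Inserting at each witness a tour of its part gives walks that visit everything
(`exists_walks`). Cutting every walk whenever its regret exceeds `R`, and joining the pieces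
directly to the root, yields at most `2 k/(1 - θ) + 1 + 6 k/θ` paths (`exists_paths_of_cover`).
The choice `θ = √3/(1 + √3)` gives `(8 + 4√3) k + 1`.
-/

/-- Total cost of traversing the list of nodes in order. -/
def pathCost {α : Type*} (c : α → α → ℝ) : List α → ℝ
  | [] => 0
  | [_] => 0
  | a :: b :: l => c a b + pathCost c (b :: l)

/-- A rooted path: a list of distinct nodes starting at the root `r`. -/
def IsRootedPath {α : Type*} (r : α) (w : List α) : Prop :=
  w.head? = some r ∧ w.Nodup

/-- The regret of a rooted path: its cost minus the distance from `r` to its last node. -/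
def pathRegret {α : Type*} (c : α → α → ℝ) (r : α) (w : List α) : ℝ :=
  pathCost c w - c r (w.getLastD r)


namespace RVRP

/-! ### Sums along consecutive pairs of a list -/

section PathCost

variable {α : Type*}

@[simp] lemma pathCost_nil (g : α → α → ℝ) : pathCost g [] = 0 := rfl

@[simp] lemma pathCost_singleton (g : α → α → ℝ) (a : α) : pathCost g [a] = 0 := rfl

@[simp] lemma pathCost_cons_cons (g : α → α → ℝ) (a b : α) (l : List α) :
    pathCost g (a :: b :: l) = g a b + pathCost g (b :: l) := rfl

lemma pathCost_add (g h : α → α → ℝ) : ∀ l : List α,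
    pathCost (fun a b => g a b + h a b) l = pathCost g l + pathCost h l
  | [] => by simp
  | [a] => by simp
  | a :: b :: l => by
    simp only [pathCost_cons_cons, pathCost_add g h (b :: l)]; ring

lemma pathCost_const_mul (t : ℝ) (g : α → α → ℝ) : ∀ l : List α,
    pathCost (fun a b => t * g a b) l = t * pathCost g l
  | [] => by simp
  | [a] => by simp
  | a :: b :: l => by
    simp only [pathCost_cons_cons, pathCost_const_mul t g (b :: l)]; ring

lemma pathCost_sum {κ : Type*} (s : Finset κ) (g : κ → α → α → ℝ) : ∀ l : List α,
    pathCost (fun a b => ∑ k ∈ s, g k a b) l = ∑ k ∈ s, pathCost (g k) l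
  | [] => by simp
  | [a] => by simp
  | a :: b :: l => by
    simp only [pathCost_cons_cons, pathCost_sum s g (b :: l), Finset.sum_add_distrib]

lemma pathCost_mono {g h : α → α → ℝ} : ∀ l : List α,
    (∀ a ∈ l, ∀ b ∈ l, g a b ≤ h a b) → pathCost g l ≤ pathCost h l
  | [], _ => by simp
  | [a], _ => by simp
  | a :: b :: l, H => by
    have h1 := pathCost_mono (b :: l)
      (fun x hx y hy => H x (List.mem_cons_of_mem _ hx) y (List.mem_cons_of_mem _ hy))
    have h2 := H a (by simp) b (by simp)
    simp only [pathCost_cons_cons]; linarith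

lemma pathCost_nonneg {g : α → α → ℝ} (hg : ∀ a b, 0 ≤ g a b) : ∀ l : List α,
    0 ≤ pathCost g l
  | [] => by simp
  | [a] => by simp
  | a :: b :: l => by
    have := pathCost_nonneg hg (b :: l)
    have := hg a b
    simp only [pathCost_cons_cons]; linarith

lemma pathCost_append_cons (g : α → α → ℝ) (a : α) (l' : List α) : ∀ l : List α,
    pathCost g (l ++ a :: l') = pathCost g (l ++ [a]) + pathCost g (a :: l')
  | [] => by simp
  | [b] => by simp
  | b :: d :: l => by
    have := pathCost_append_cons g a l' (d :: l)
    simp only [List.cons_append, pathCost_cons_cons] at this ⊢; linarith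

/-- Shortcutting: under the directed triangle inequality, deleting nodes never increases cost.
Symmetry is not needed, so this applies to regret distances. -/
lemma pathCost_sublist {g : α → α → ℝ} (hg : ∀ a b, 0 ≤ g a b)
    (ht : ∀ u v w, g u v ≤ g u w + g w v) {l₁ l₂ : List α} (h : l₁.Sublist l₂) :
    pathCost g l₁ ≤ pathCost g l₂ ∧ ∀ a, pathCost g (a :: l₁) ≤ pathCost g (a :: l₂) := by
  induction h with
  | slnil => simp
  | @cons l₁ l₂ b _ ih =>
    have drop : pathCost g l₂ ≤ pathCost g (b :: l₂) := by
      cases l₂ with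
      | nil => simp
      | cons d l => simpa using hg b d
    refine ⟨ih.1.trans drop, fun a => (ih.2 a).trans ?_⟩
    cases l₂ with
    | nil => simpa using hg a b
    | cons d l =>
      have := ht a d b
      simp only [pathCost_cons_cons]; linarith
  | @cons_cons l₁ l₂ b _ ih =>
    refine ⟨ih.2 b, fun a => ?_⟩
    have := ih.2 b
    simp only [pathCost_cons_cons]; linarith

/-- Summing a function of the first node of each consecutive pair. -/
lemma pathCost_fst (φ : α → ℝ) (b : α) : ∀ (a : α) (l : List α),
    pathCost (fun x _ => φ x) (a :: (l ++ [b])) = φ a + (l.map φ).sum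
  | a, [] => by simp
  | a, d :: l => by
    have := pathCost_fst φ b d l
    simp only [List.cons_append, pathCost_cons_cons, List.map_cons, List.sum_cons] at this ⊢
    linarith

lemma pathCost_snd (φ : α → ℝ) (b : α) : ∀ (a : α) (l : List α),
    pathCost (fun _ y => φ y) (a :: (l ++ [b])) = (l.map φ).sum + φ b
  | a, [] => by simp
  | a, d :: l => by
    have := pathCost_snd φ b d l
    simp only [List.cons_append, pathCost_cons_cons, List.map_cons, List.sum_cons] at this ⊢
    linarith

/-- The number of times `v` directly follows `u`. -/
def nxt [DecidableEq α] (u v : α) (l : List α) : ℝ :=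
  pathCost (fun a b => if a = u ∧ b = v then 1 else 0) l

lemma nxt_nonneg [DecidableEq α] (u v : α) (l : List α) : 0 ≤ nxt u v l :=
  pathCost_nonneg (fun a b => by split_ifs <;> norm_num) l

lemma pathCost_eq_sum_nxt [Fintype α] [DecidableEq α] (g : α → α → ℝ) (l : List α) :
    pathCost g l = ∑ u, ∑ v, g u v * nxt u v l := by
  have : g = fun a b => ∑ u, ∑ v, g u v * (if a = u ∧ b = v then (1 : ℝ) else 0) := by
    funext a b
    simp [ite_and]
  conv_lhs => rw [this]
  rw [pathCost_sum]
  refine Finset.sum_congr rfl fun u _ => ?_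
  rw [pathCost_sum]
  refine Finset.sum_congr rfl fun v _ => ?_
  rw [pathCost_const_mul]; rfl

lemma sum_nxt_right [Fintype α] [DecidableEq α] (u : α) (l : List α) :
    ∑ v, nxt u v l = pathCost (fun a _ => if a = u then 1 else 0) l := by
  unfold nxt
  rw [← pathCost_sum]
  congr 1; funext a b
  simp [ite_and]

lemma sum_nxt_left [Fintype α] [DecidableEq α] (v : α) (l : List α) :
    ∑ u, nxt u v l = pathCost (fun _ b => if b = v then 1 else 0) l := by
  unfold nxt
  rw [← pathCost_sum]
  congr 1; funext a b
  simp [ite_and]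

lemma sum_map_indicator [DecidableEq α] (u : α) : ∀ (l : List α), l.Nodup →
    (l.map (fun a => if a = u then (1 : ℝ) else 0)).sum = if u ∈ l then 1 else 0
  | [], _ => by simp
  | a :: l, h => by
    rw [List.nodup_cons] at h
    have := sum_map_indicator u l h.2
    simp only [List.map_cons, List.sum_cons, this, List.mem_cons]
    by_cases hau : a = u
    · subst hau; simp [h.1]
    · have : ¬ u = a := fun h => hau h.symm
      simp [hau, this]

end PathCost

/-! ### Regret distances -/

section Regret

variable {α : Type*} {c : α → α → ℝ} {r : α}

/-- The regret distance `D_u + c(u,v) - D_v`, a nonnegative directed metric. The regret of a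
rooted path is the sum of the regret distances of its edges. -/
def reg (c : α → α → ℝ) (r u v : α) : ℝ := c r u + c u v - c r v

lemma reg_nonneg (htri : ∀ u v w, c u v ≤ c u w + c w v) (u v : α) : 0 ≤ reg c r u v := by
  have := htri r v u
  unfold reg; linarith

lemma reg_tri (htri : ∀ u v w, c u v ≤ c u w + c w v) (u v w : α) :
    reg c r u v ≤ reg c r u w + reg c r w v := by
  have := htri u v w
  unfold reg; linarith

lemma pathCost_reg (a : α) : ∀ l : List α,
    pathCost (reg c r) (a :: l) = c r a + pathCost c (a :: l) - c r ((a :: l).getLastD r) := by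
  intro l
  induction l generalizing a with
  | nil => simp
  | cons b l ih =>
    have := ih b
    simp only [pathCost_cons_cons, List.getLastD_cons] at this ⊢
    rw [this]; unfold reg; ring

lemma pathRegret_eq (hrefl : ∀ u, c u u = 0) (l : List α) :
    pathRegret c r (r :: l) = pathCost (reg c r) (r :: l) := by
  rw [pathCost_reg, hrefl]; unfold pathRegret; ring

/-- Along a closed walk the distances to the root telescope away. -/
lemma pathCost_reg_closed (a : α) (l : List α) :
    pathCost (reg c r) (a :: (l ++ [a])) = pathCost c (a :: (l ++ [a])) := by
  rw [pathCost_reg]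
  have : (a :: (l ++ [a])).getLastD r = a := by
    rw [← List.cons_append, List.getLastD_eq_getLast?, List.getLast?_concat]; rfl
  rw [this]; ring

/-- Any list of regret cost at most `R` is covered by a rooted path of regret at most `R`:
go directly from the root to its first node, and skip repetitions. -/
lemma exists_rootedPath [DecidableEq α] (htri : ∀ u v w, c u v ≤ c u w + c w v)
    (hrefl : ∀ u, c u u = 0) {R : ℝ} (hR : 0 ≤ R) (p : List α)
    (hp : pathCost (reg c r) p ≤ R) :
    ∃ q : List α, (IsRootedPath r q ∧ pathRegret c r q ≤ R) ∧
      ∀ v ∈ p, v ≠ r → v ∈ q.tail := by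
  refine ⟨r :: (p.filter (· ≠ r)).dedup, ⟨⟨rfl, ?_⟩, ?_⟩, ?_⟩
  · rw [List.nodup_cons]
    exact ⟨by simp, List.nodup_dedup _⟩
  · rw [pathRegret_eq hrefl]
    have hs : ((p.filter (· ≠ r)).dedup).Sublist p :=
      (List.dedup_sublist _).trans List.filter_sublist
    refine ((pathCost_sublist (reg_nonneg htri) (reg_tri htri) hs).2 r).trans ?_
    cases p with
    | nil => simpa using hR
    | cons b l =>
      have : reg c r r b = 0 := by unfold reg; rw [hrefl]; ring
      simp only [pathCost_cons_cons, this]; linarith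
  · intro v hv hvr
    simp [hv, hvr]

/-- Greedy cutting from the end: each piece of `ps`, together with the edge that precedes it, has
cost above `R`. -/
lemma exists_cut {g : α → α → ℝ} {R : ℝ} (hR : 0 ≤ R) (a : α) (l : List α) :
    ∃ (p : List α) (ps : List (List α)), pathCost g (a :: p) ≤ R ∧
      (∀ q ∈ ps, pathCost g q ≤ R) ∧ (∀ v ∈ a :: l, v ∈ a :: p ∨ ∃ q ∈ ps, v ∈ q) ∧
      ps.length * R + pathCost g (a :: p) ≤ pathCost g (a :: l) := by
  induction l generalizing a with
  | nil => exact ⟨[], [], by simpa using hR, by simp, by simp, by simp⟩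
  | cons b l ih =>
    obtain ⟨p, ps, h1, h2, h3, h4⟩ := ih b
    by_cases h : g a b + pathCost g (b :: p) ≤ R
    · refine ⟨b :: p, ps, by simpa using h, h2, ?_, ?_⟩
      · intro v hv
        rcases List.mem_cons.1 hv with rfl | hv
        · simp
        · rcases h3 v hv with h | h
          · exact Or.inl (List.mem_cons_of_mem _ h)
          · exact Or.inr h
      · simp only [pathCost_cons_cons]; linarith
    · push Not at h
      refine ⟨[], (b :: p) :: ps, by simpa using hR, ?_, ?_, ?_⟩
      · intro q hq
        rcases List.mem_cons.1 hq with rfl | hq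
        · exact h1
        · exact h2 q hq
      · intro v hv
        rcases List.mem_cons.1 hv with rfl | hv
        · simp
        · rcases h3 v hv with h | ⟨q, hq, hv⟩
          · exact Or.inr ⟨b :: p, by simp, h⟩
          · exact Or.inr ⟨q, by simp [hq], hv⟩
      · simp only [pathCost_cons_cons, pathCost_singleton, List.length_cons, Nat.cast_add,
          Nat.cast_one]
        linarith

/-- A walk of total regret `S` from the root is covered by `1 + S / R` rooted paths of regret at
most `R`. If `R = 0` then `S = 0` is assumed, and the junk value `S / 0 = 0` gives the right
count. -/
lemma exists_rootedPaths [DecidableEq α] (htri : ∀ u v w, c u v ≤ c u w + c w v)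
    (hrefl : ∀ u, c u u = 0) {R : ℝ} (hR : 0 ≤ R) (l : List α)
    (h0 : R = 0 → pathCost (reg c r) (r :: l) ≤ 0) :
    ∃ Qs : List (List α), (Qs.length : ℝ) ≤ 1 + pathCost (reg c r) (r :: l) / R ∧
      (∀ q ∈ Qs, IsRootedPath r q ∧ pathRegret c r q ≤ R) ∧
      ∀ v ∈ l, v ≠ r → ∃ q ∈ Qs, v ∈ q.tail := by
  have key : ∃ ps : List (List α), (ps.length : ℝ) ≤ 1 + pathCost (reg c r) (r :: l) / R ∧
      (∀ p ∈ ps, pathCost (reg c r) p ≤ R) ∧ ∀ v ∈ l, ∃ p ∈ ps, v ∈ p := by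
    rcases hR.eq_or_lt with hR0 | hR0
    · refine ⟨[r :: l], by simp [← hR0], ?_, fun v hv => ⟨r :: l, by simp, by simp [hv]⟩⟩
      intro p hp
      rw [List.mem_singleton.1 hp]
      exact (h0 hR0.symm).trans hR
    · obtain ⟨p, ps, h1, h2, h3, h4⟩ := exists_cut (g := reg c r) hR r l
      refine ⟨(r :: p) :: ps, ?_, ?_, ?_⟩
      · have := pathCost_nonneg (reg_nonneg (r := r) htri) (r :: p)
        have : (ps.length : ℝ) ≤ pathCost (reg c r) (r :: l) / R := by
          rw [le_div_iff₀ hR0]; linarith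
        simp only [List.length_cons, Nat.cast_add, Nat.cast_one]; linarith
      · intro q hq
        rcases List.mem_cons.1 hq with rfl | hq
        · exact h1
        · exact h2 q hq
      · intro v hv
        rcases h3 v (by simp [hv]) with h | ⟨q, hq, hv⟩
        · exact ⟨r :: p, by simp, h⟩
        · exact ⟨q, by simp [hq], hv⟩
  obtain ⟨ps, h1, h2, h3⟩ := key
  choose! F hF using fun p hp => exists_rootedPath (r := r) htri hrefl hR p hp
  refine ⟨ps.map F, by simpa using h1, ?_, ?_⟩
  · intro q hq
    obtain ⟨p, hp, rfl⟩ := List.mem_map.1 hq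
    exact (hF p (h2 p hp)).1
  · intro v hv hvr
    obtain ⟨p, hp, hvp⟩ := h3 v hv
    exact ⟨F p, List.mem_map_of_mem hp, (hF p (h2 p hp)).2 v hvp hvr⟩

end Regret

/-! ### Red segments of a path -/

section Segments

variable {α : Type*} {c : α → α → ℝ} {r : α}

/-- The total cost inside the segments of a segmented path. -/
def segCost (g : α → α → ℝ) (ss : List (List α)) : ℝ := (ss.map (pathCost g)).sum

/-- Induction for the red-segment decomposition of the remainder `a :: l` of a path. `M` is the
largest distance from the root seen so far and `μ` the smallest one still to come. An edge is
cut (blue) exactly if everything before it is closer to the root than everything after it. The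
potential `M - 2 D_a + μ` accounts, level by level, for the fact that a level which is crossed
by a red edge is crossed downwards at least half as often as upwards. -/
lemma exists_segments_aux (hsymm : ∀ u v, c u v = c v u)
    (htri : ∀ u v w, c u v ≤ c u w + c w v) (a : α) (l : List α) (M : ℝ) (hM : c r a ≤ M) :
    ∃ (s : List α) (ss : List (List α)) (μ : ℝ),
      (∀ z ∈ a :: l, μ ≤ c r z) ∧ (∃ z ∈ a :: l, μ = c r z) ∧
      a :: l = (a :: s) ++ ss.flatten ∧
      (∀ t ∈ ss, ∀ z ∈ t, M < c r z) ∧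
      ((a :: s) :: ss).Pairwise (fun t t' => ∀ u ∈ t, ∀ v ∈ t', c r u < c r v) ∧
      segCost c ((a :: s) :: ss) ≤
        3 / 2 * pathCost (reg c r) (a :: l) + M - 2 * c r a + μ := by
  induction l generalizing a M with
  | nil =>
    refine ⟨[], [], c r a, by simp, by simp, by simp, by simp, by simp, ?_⟩
    simp [segCost]; linarith
  | cons b l ih =>
    obtain ⟨s, ss, μ, h1, ⟨z₀, hz₀, hμ⟩, h3, h4, h5, h6⟩ := ih b (max M (c r b)) (le_max_right _ _)
    have hμb : μ ≤ c r b := h1 b (by simp)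
    have t1 : c r b - c r a ≤ c a b := by have := htri r b a; linarith
    have t2 : c r a - c r b ≤ c a b := by have := htri r a b; rw [hsymm b a] at this; linarith
    -- the new minimum
    have hmin : ∃ ν : ℝ, (∀ z ∈ a :: b :: l, ν ≤ c r z) ∧ (∃ z ∈ a :: b :: l, ν = c r z) ∧
        ν = min (c r a) μ := by
      refine ⟨min (c r a) μ, ?_, ?_, rfl⟩
      · intro z hz
        rcases List.mem_cons.1 hz with rfl | hz
        · exact min_le_left _ _
        · exact (min_le_right _ _).trans (h1 z hz)
      · rcases le_total (c r a) μ with h | h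
        · exact ⟨a, by simp, min_eq_left h⟩
        · exact ⟨z₀, List.mem_cons_of_mem _ hz₀, by rw [min_eq_right h, hμ]⟩
    obtain ⟨ν, n1, n2, n3⟩ := hmin
    by_cases hred : μ ≤ M
    · -- the edge from `a` to `b` is red
      refine ⟨b :: s, ss, ν, n1, n2, by rw [h3]; simp, ?_, ?_, ?_⟩
      · exact fun t ht z hz => (le_max_left _ _).trans_lt (h4 t ht z hz)
      · rw [List.pairwise_cons] at h5 ⊢
        refine ⟨fun t ht u hu v hv => ?_, h5.2⟩
        rcases List.mem_cons.1 hu with rfl | hu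
        · exact (hM.trans (le_max_left _ _)).trans_lt (h4 t ht v hv)
        · exact h5.1 t ht u hu v hv
      · simp only [segCost, List.map_cons, List.sum_cons, pathCost_cons_cons] at h6 ⊢
        unfold reg at h6 ⊢
        rcases max_cases M (c r b) with ⟨hm, _⟩ | ⟨hm, _⟩ <;>
        rcases min_cases (c r a) μ with ⟨hn, _⟩ | ⟨hn, _⟩ <;>
        rw [hm] at h6 <;> rw [n3, hn] <;> rcases le_total (c r a) (c r b) with h | h <;> linarith
    · -- the edge from `a` to `b` is blue
      push Not at hred
      have ha : ∀ z ∈ b :: l, M < c r z := fun z hz => hred.trans_le (h1 z hz)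
      have hmem : ∀ t ∈ (b :: s) :: ss, ∀ z ∈ t, z ∈ b :: l := by
        intro t ht z hz
        rw [h3, ← List.flatten_cons]
        exact List.mem_flatten.2 ⟨t, ht, hz⟩
      refine ⟨[], (b :: s) :: ss, ν, n1, n2, by rw [h3]; simp, ?_, ?_, ?_⟩
      · exact fun t ht z hz => ha z (hmem t ht z hz)
      · rw [List.pairwise_cons]
        refine ⟨fun t ht u hu v hv => ?_, h5⟩
        rw [List.mem_singleton.1 hu]
        exact hM.trans_lt (ha v (hmem t ht v hv))
      · have hr := reg_nonneg (r := r) htri a b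
        have hb := ha b (by simp)
        rw [max_eq_right hb.le] at h6
        rw [min_eq_left (hM.trans hred.le)] at n3
        simp only [segCost, List.map_cons, List.sum_cons, pathCost_cons_cons,
          pathCost_singleton] at h6 ⊢
        linarith

/-- Every path splits into segments of total cost at most `3/2` times its regret such that all
nodes of a segment are closer to the root than all nodes of the following segments. -/
lemma exists_segments (hsymm : ∀ u v, c u v = c v u)
    (htri : ∀ u v w, c u v ≤ c u w + c w v) (l : List α) :
    ∃ ss : List (List α), ss.flatten = l ∧
      ss.Pairwise (fun t t' => ∀ u ∈ t, ∀ v ∈ t', c r u < c r v) ∧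
      segCost c ss ≤ 3 / 2 * pathCost (reg c r) l := by
  cases l with
  | nil => exact ⟨[], by simp, by simp, by simp [segCost]⟩
  | cons a l =>
    obtain ⟨s, ss, μ, h1, -, h3, -, h5, h6⟩ :=
      exists_segments_aux hsymm htri a l (c r a) le_rfl
    refine ⟨(a :: s) :: ss, by rw [h3]; simp, h5, ?_⟩
    have := h1 a (by simp)
    linarith

end Segments

/-! ### A cheap forest for the red segments -/

section SegCost

variable {α : Type*}

lemma segCost_add_mul (t : ℝ) (g h : α → α → ℝ) (ss : List (List α)) :
    segCost (fun a b => g a b + t * h a b) ss = segCost g ss + t * segCost h ss := by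
  induction ss with
  | nil => simp [segCost]
  | cons s ss ih =>
    simp only [segCost, List.map_cons, List.sum_cons] at ih ⊢
    rw [ih, pathCost_add, pathCost_const_mul]; ring

lemma segCost_sum {κ : Type*} (S : Finset κ) (g : κ → α → α → ℝ) (ss : List (List α)) :
    segCost (fun a b => ∑ k ∈ S, g k a b) ss = ∑ k ∈ S, segCost (g k) ss := by
  induction ss with
  | nil => simp [segCost]
  | cons s ss ih =>
    simp only [segCost, List.map_cons, List.sum_cons] at ih ⊢
    rw [ih, pathCost_sum, Finset.sum_add_distrib]

lemma segCost_mono {g h : α → α → ℝ} (ss : List (List α))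
    (H : ∀ s ∈ ss, ∀ a ∈ s, ∀ b ∈ s, g a b ≤ h a b) : segCost g ss ≤ segCost h ss :=
  List.sum_le_sum fun s hs => pathCost_mono s (H s hs)

lemma segCost_nonneg {g : α → α → ℝ} (hg : ∀ a b, 0 ≤ g a b) (ss : List (List α)) :
    0 ≤ segCost g ss :=
  List.sum_nonneg (by simpa using fun s _ => pathCost_nonneg hg s)

end SegCost

section Forest

open Classical in
/-- The indicator that exactly one of `u`, `v` lies in `A`. -/
noncomputable def cross {α : Type*} (A : Finset α) (u v : α) : ℝ :=
  if (u ∈ A ∧ v ∉ A) ∨ (u ∉ A ∧ v ∈ A) then 1 else 0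

variable {α : Type*} {c : α → α → ℝ} {r : α}

lemma cross_nonneg (A : Finset α) (u v : α) : 0 ≤ cross A u v := by
  unfold cross; split_ifs <;> norm_num

lemma one_le_pathCost_cross_aux (A : Finset α) (a : α) (l : List α) (u : α) (hu : u ∈ l)
    (h : (a ∈ A ∧ u ∉ A) ∨ (a ∉ A ∧ u ∈ A)) : 1 ≤ pathCost (cross A) (a :: l) := by
  induction l generalizing a with
  | nil => simp at hu
  | cons b l ih =>
    have h0 := pathCost_nonneg (cross_nonneg A) (b :: l)
    rw [pathCost_cons_cons]
    by_cases hab : (a ∈ A ∧ b ∉ A) ∨ (a ∉ A ∧ b ∈ A)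
    · have : cross A a b = 1 := by simp only [cross, hab, if_true]
      linarith
    · have h1 := cross_nonneg A a b
      rcases List.mem_cons.1 hu with rfl | hu
      · exact absurd h hab
      · have := ih b hu (by tauto)
        linarith

lemma one_le_pathCost_cross (A : Finset α) (l : List α) {u v : α} (hu : u ∈ l) (hv : v ∈ l)
    (huA : u ∈ A) (hvA : v ∉ A) : 1 ≤ pathCost (cross A) l := by
  cases l with
  | nil => simp at hu
  | cons a l =>
    have hne : u ≠ v := fun h => hvA (h ▸ huA)
    by_cases haA : a ∈ A
    · rcases List.mem_cons.1 hv with rfl | hv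
      · exact absurd haA hvA
      · exact one_le_pathCost_cross_aux A a l v hv (Or.inl ⟨haA, hvA⟩)
    · rcases List.mem_cons.1 hu with rfl | hu
      · exact absurd huA haA
      · exact one_le_pathCost_cross_aux A a l u hu (Or.inr ⟨haA, huA⟩)

/-- From every node of `Z` there is a closed walk of cost at most `k` through all of `Z`. This is
what a spanning tree of `Z` of cost `k / 2` provides. -/
def HasTour (c : α → α → ℝ) (Z : Finset α) (k : ℝ) : Prop :=
  ∀ w ∈ Z, ∃ l : List α, (∀ z ∈ Z, z = w ∨ z ∈ l) ∧ pathCost c (w :: (l ++ [w])) ≤ k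

lemma pathCost_detour (g : α → α → ℝ) (u v : α) (s s' l : List α) :
    pathCost g (s ++ u :: v :: (l ++ v :: u :: s')) =
      pathCost g (s ++ u :: s') + (g u v + pathCost g (v :: (l ++ [v])) + g v u) := by
  rw [pathCost_append_cons g u (v :: (l ++ v :: u :: s')), pathCost_append_cons g u s' s]
  have := pathCost_append_cons g v (u :: s') (v :: l)
  simp only [List.cons_append, pathCost_cons_cons] at this ⊢
  rw [this]; ring

lemma HasTour.exists_walk {A B : Finset α} {k₁ k₂ : ℝ} (hA : HasTour c A k₁)
    (hB : HasTour c B k₂) (hsymm : ∀ u v, c u v = c v u) {u v : α} (hu : u ∈ A) (hv : v ∈ B)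
    {w : α} (hw : w ∈ A) :
    ∃ l : List α, (∀ z, z ∈ A ∨ z ∈ B → z = w ∨ z ∈ l) ∧
      pathCost c (w :: (l ++ [w])) ≤ k₁ + k₂ + 2 * c u v := by
  obtain ⟨l, h1, h2⟩ := hA w hw
  obtain ⟨l', h1', h2'⟩ := hB v hv
  rcases h1 u hu with rfl | hul
  · refine ⟨v :: (l' ++ v :: u :: l), ?_, ?_⟩
    · rintro z (hz | hz)
      · rcases h1 z hz with h | h <;> simp [h]
      · rcases h1' z hz with h | h <;> simp [h]
    · have := pathCost_detour c u v [] (l ++ [u]) l'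
      simp only [List.nil_append, List.cons_append, List.append_assoc] at this ⊢
      rw [this, hsymm v u]; linarith
  · obtain ⟨s, s', rfl⟩ := List.append_of_mem hul
    refine ⟨s ++ u :: v :: (l' ++ v :: u :: s'), ?_, ?_⟩
    · rintro z (hz | hz)
      · have := h1 z hz
        simp only [List.mem_append, List.mem_cons] at this ⊢
        tauto
      · rcases h1' z hz with h | h <;> simp [h]
    · have := pathCost_detour c u v (w :: s) (s' ++ [w]) l'
      simp only [List.cons_append, List.append_assoc] at this h2 ⊢
      rw [this, hsymm v u]; linarith

/-- Doubling a connecting edge joins two tours. -/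
lemma HasTour.union [DecidableEq α] {A B : Finset α} {k₁ k₂ : ℝ} (hA : HasTour c A k₁)
    (hB : HasTour c B k₂) (hsymm : ∀ u v, c u v = c v u) {u v : α} (hu : u ∈ A) (hv : v ∈ B) :
    HasTour c (A ∪ B) (k₁ + k₂ + 2 * c u v) := by
  intro w hw
  rcases Finset.mem_union.1 hw with h | h
  · obtain ⟨l, h1, h2⟩ := hA.exists_walk hB hsymm hu hv h
    exact ⟨l, fun z hz => h1 z (Finset.mem_union.1 hz), h2⟩
  · obtain ⟨l, h1, h2⟩ := hB.exists_walk hA hsymm hv hu h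
    refine ⟨l, fun z hz => h1 z (Finset.mem_union.1 hz).symm, ?_⟩
    rw [hsymm v u] at h2; linarith

/-- `π` is a partition of the non-root nodes, and each part `Z` has tours of cost `K Z`. -/
structure IsTourPartition (c : α → α → ℝ) (r : α) (π : Finset (Finset α)) (K : Finset α → ℝ) :
    Prop where
  eq_of_mem : ∀ A ∈ π, ∀ B ∈ π, ∀ v ∈ A, v ∈ B → A = B
  nonempty : ∀ A ∈ π, A.Nonempty
  cover : ∀ v, v ≠ r → ∃ A ∈ π, v ∈ A
  root : ∀ A ∈ π, r ∉ A
  tour : ∀ A ∈ π, HasTour c A (K A)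

/-- Merging two parts. -/
lemma IsTourPartition.merge [DecidableEq α] {π : Finset (Finset α)} {K : Finset α → ℝ}
    (h : IsTourPartition c r π K) (hsymm : ∀ u v, c u v = c v u) {A B : Finset α}
    (hA : A ∈ π) (hB : B ∈ π) (hAB : A ≠ B) {u v : α} (hu : u ∈ A) (hv : v ∈ B) :
    ∃ K' : Finset α → ℝ,
      IsTourPartition c r (insert (A ∪ B) ((π.erase A).erase B)) K' ∧
      ∑ Z ∈ insert (A ∪ B) ((π.erase A).erase B), K' Z = ∑ Z ∈ π, K Z + 2 * c u v := by
  have hnot : A ∪ B ∉ (π.erase A).erase B := by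
    intro hm
    have hm' := Finset.mem_of_mem_erase (Finset.mem_of_mem_erase hm)
    have e := h.eq_of_mem _ hm' A hA u (by simp [hu]) hu
    exact (Finset.ne_of_mem_erase (Finset.mem_of_mem_erase hm)) e
  have hne : ∀ Z ∈ (π.erase A).erase B, Z ≠ A ∪ B := fun Z hZ e => hnot (e ▸ hZ)
  refine ⟨Function.update K (A ∪ B) (K A + K B + 2 * c u v), ⟨?_, ?_, ?_, ?_, ?_⟩, ?_⟩
  · have aux : ∀ X ∈ (π.erase A).erase B, ∀ w ∈ X, w ∉ A ∪ B := by
      intro X hX w hw hwAB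
      simp only [Finset.mem_erase] at hX
      rcases Finset.mem_union.1 hwAB with hw' | hw'
      · exact hX.2.1 (h.eq_of_mem X hX.2.2 A hA w hw hw')
      · exact hX.1 (h.eq_of_mem X hX.2.2 B hB w hw hw')
    intro X hX Y hY w hwX hwY
    rcases Finset.mem_insert.1 hX with rfl | hX <;> rcases Finset.mem_insert.1 hY with rfl | hY
    · rfl
    · exact absurd hwX (aux Y hY w hwY)
    · exact absurd hwY (aux X hX w hwX)
    · exact h.eq_of_mem X (Finset.mem_of_mem_erase (Finset.mem_of_mem_erase hX)) Y
        (Finset.mem_of_mem_erase (Finset.mem_of_mem_erase hY)) w hwX hwY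
  · intro X hX
    rcases Finset.mem_insert.1 hX with rfl | hX
    · exact ⟨u, by simp [hu]⟩
    · exact h.nonempty X (Finset.mem_of_mem_erase (Finset.mem_of_mem_erase hX))
  · intro w hw
    obtain ⟨X, hX, hwX⟩ := h.cover w hw
    by_cases h1 : X = A
    · exact ⟨A ∪ B, by simp, by simp [← h1, hwX]⟩
    by_cases h2 : X = B
    · exact ⟨A ∪ B, by simp, by simp [← h2, hwX]⟩
    exact ⟨X, by simp [h1, h2, hX], hwX⟩
  · intro X hX
    rcases Finset.mem_insert.1 hX with rfl | hX
    · simp [h.root A hA, h.root B hB]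
    · exact h.root X (Finset.mem_of_mem_erase (Finset.mem_of_mem_erase hX))
  · intro X hX
    rcases Finset.mem_insert.1 hX with rfl | hX
    · simpa using (h.tour A hA).union (h.tour B hB) hsymm hu hv
    · rw [Function.update_of_ne (hne X hX)]
      exact h.tour X (Finset.mem_of_mem_erase (Finset.mem_of_mem_erase hX))
  · rw [Finset.sum_insert hnot, Function.update_self]
    rw [Finset.sum_congr rfl fun Z hZ => Function.update_of_ne (hne Z hZ) _ _]
    have e1 := Finset.add_sum_erase π K hA
    have e2 := Finset.add_sum_erase (π.erase A) K (a := B) (by simp [hAB.symm, hB])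
    linarith

variable {ι : Type*} [Fintype ι]

open Classical in
/-- The total weight of the paths on which the segment containing `v` leaves `S`. -/
noncomputable def leave (x : ι → ℝ) (segs : ι → List (List α)) (S : Finset α) (v : α) : ℝ :=
  ∑ i with ∃ s ∈ segs i, v ∈ s ∧ ¬ ∀ u ∈ s, u ∈ S, x i

/-- A set is active if from each of its nodes a weight of at least `θ` of the segments leaves
it. -/
def Active (x : ι → ℝ) (segs : ι → List (List α)) (θ : ℝ) (S : Finset α) : Prop :=
  ∀ v ∈ S, θ ≤ leave x segs S v

lemma Active.mono {x : ι → ℝ} (hx : ∀ i, 0 ≤ x i) {segs : ι → List (List α)} {θ : ℝ}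
    {S T : Finset α} (hT : Active x segs θ T) (h : S ⊆ T) : Active x segs θ S := by
  intro v hv
  refine (hT v (h hv)).trans (Finset.sum_le_sum_of_subset_of_nonneg ?_ fun i _ _ => hx i)
  intro i hi
  simp only [Finset.mem_filter, Finset.mem_univ, true_and] at hi ⊢
  obtain ⟨s, hs, hvs, hn⟩ := hi
  exact ⟨s, hs, hvs, fun H => hn fun u hu => h (H u hu)⟩

/-- Every active set is crossed by segment edges of total weight at least `θ`. -/
lemma Active.le_cross {x : ι → ℝ} (hx : ∀ i, 0 ≤ x i) {segs : ι → List (List α)} {θ : ℝ}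
    {S : Finset α} (hS : Active x segs θ S) (hne : S.Nonempty) :
    θ ≤ ∑ i, x i * segCost (cross S) (segs i) := by
  obtain ⟨v, hv⟩ := hne
  refine (hS v hv).trans ?_
  unfold leave
  rw [Finset.sum_filter]
  refine Finset.sum_le_sum fun i _ => ?_
  have h0 := segCost_nonneg (cross_nonneg S) (segs i)
  split_ifs with h
  · obtain ⟨s, hs, hvs, hn⟩ := h
    push Not at hn
    obtain ⟨u, hu, huS⟩ := hn
    have h1 := one_le_pathCost_cross S s hvs hu hv huS
    have h2 : pathCost (cross S) s ≤ segCost (cross S) (segs i) :=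
      List.single_le_sum (by simpa using fun s _ => pathCost_nonneg (cross_nonneg S) s) _
        (List.mem_map_of_mem hs)
    have := mul_le_mul_of_nonneg_left (h1.trans h2) (hx i)
    linarith
  · exact mul_nonneg (hx i) h0

/-- The pair `u`, `v` is separated by an active part of `π`. -/
def ActiveCross (r : α) (x : ι → ℝ) (segs : ι → List (List α)) (θ : ℝ) (π : Finset (Finset α))
    (u v : α) : Prop :=
  u ≠ r ∧ v ≠ r ∧ ∃ A ∈ π, Active x segs θ A ∧ ((u ∈ A ∧ v ∉ A) ∨ (u ∉ A ∧ v ∈ A))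

open Classical in
/-- The edge costs that remain above the level `t`, on pairs separated by an active part. -/
noncomputable def excess (c : α → α → ℝ) (r : α) (x : ι → ℝ) (segs : ι → List (List α)) (θ : ℝ)
    (π : Finset (Finset α)) (t : ℝ) (u v : α) : ℝ :=
  if ActiveCross r x segs θ π u v then c u v - t else 0

open Classical in
/-- An edge is in the boundary of at most two parts. -/
lemma sum_cross_le {x : ι → ℝ} {segs : ι → List (List α)} {θ : ℝ} {π : Finset (Finset α)}
    {K : Finset α → ℝ} (h : IsTourPartition c r π K) {u v : α} (hu : u ≠ r) (hv : v ≠ r) :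
    ∑ A ∈ π with Active x segs θ A, cross A u v ≤
      2 * if ActiveCross r x segs θ π u v then 1 else 0 := by
  split_ifs with hac
  · have key : ∀ w : α, ∑ A ∈ π with Active x segs θ A, (if w ∈ A then (1 : ℝ) else 0) ≤ 1 := by
      intro w
      rw [← Finset.sum_filter, Finset.sum_const, nsmul_eq_mul, mul_one]
      have : (Finset.filter (fun A => w ∈ A) (π.filter (Active x segs θ))).card ≤ 1 := by
        rw [Finset.card_le_one]
        intro A hA B hB
        simp only [Finset.mem_filter] at hA hB
        exact h.eq_of_mem A hA.1.1 B hB.1.1 w hA.2 hB.2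
      exact_mod_cast this
    have : ∑ A ∈ π with Active x segs θ A, cross A u v ≤
        ∑ A ∈ π with Active x segs θ A,
          ((if u ∈ A then (1 : ℝ) else 0) + if v ∈ A then (1 : ℝ) else 0) := by
      refine Finset.sum_le_sum fun A _ => ?_
      unfold cross
      by_cases h1 : u ∈ A <;> by_cases h2 : v ∈ A <;> simp [h1, h2]
    rw [Finset.sum_add_distrib] at this
    have := key u
    have := key v
    linarith
  · rw [mul_zero]
    refine (Finset.sum_eq_zero fun A hA => ?_).le
    rw [Finset.mem_filter] at hA
    unfold cross
    rw [if_neg fun hc => hac ⟨hu, hv, A, hA.1, hA.2, hc⟩]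

open Classical in
/-- The step of the dual bound: the separated pairs carry, per active part, a total segment weight
of at least `θ / 2`. -/
lemma card_active_le {x : ι → ℝ} (hx : ∀ i, 0 ≤ x i) {segs : ι → List (List α)}
    (hr : ∀ i, ∀ s ∈ segs i, r ∉ s) {θ : ℝ} {π : Finset (Finset α)} {K : Finset α → ℝ}
    (h : IsTourPartition c r π K) :
    θ * (π.filter (Active x segs θ)).card ≤
      2 * ∑ i, x i * segCost (fun u v => if ActiveCross r x segs θ π u v then 1 else 0)
        (segs i) := by
  have h1 : θ * (π.filter (Active x segs θ)).card ≤
      ∑ A ∈ π with Active x segs θ A, ∑ i, x i * segCost (cross A) (segs i) := by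
    rw [mul_comm, ← nsmul_eq_mul]
    refine Finset.card_nsmul_le_sum _ _ _ fun A hA => ?_
    rw [Finset.mem_filter] at hA
    exact hA.2.le_cross hx (h.nonempty A hA.1)
  refine h1.trans ?_
  rw [Finset.sum_comm, Finset.mul_sum]
  refine Finset.sum_le_sum fun i _ => ?_
  rw [← Finset.mul_sum, ← segCost_sum]
  have h2 : segCost (fun a b => ∑ A ∈ π with Active x segs θ A, cross A a b) (segs i) ≤
      segCost (fun a b => 0 + 2 * if ActiveCross r x segs θ π a b then 1 else 0) (segs i) := by
    refine segCost_mono _ fun s hs a ha b hb => ?_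
    rw [zero_add]
    exact sum_cross_le h (fun e => hr i s hs (e ▸ ha)) (fun e => hr i s hs (e ▸ hb))
  rw [segCost_add_mul] at h2
  have h3 : segCost (fun _ _ => (0 : ℝ)) (segs i) = 0 := by
    simpa using segCost_sum (∅ : Finset ℕ) (fun _ (_ _ : α) => (0 : ℝ)) (segs i)
  rw [h3, zero_add] at h2
  have := mul_le_mul_of_nonneg_left h2 (hx i)
  linarith

open Classical in
/-- The lightest-edge greedy algorithm. It always joins the closest pair separated by an active
part; `t` is the length of the last edge used. Each step destroys at least one active part, and
the dual solution giving weight `1/2` at every level to every part active at that level bounds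
the total length of the edges used, up to the factor `2 / θ`, by the fractional segment cost. -/
lemma exists_forest_aux [Fintype α] (hsymm : ∀ u v, c u v = c v u)
    {x : ι → ℝ} (hx : ∀ i, 0 ≤ x i) {segs : ι → List (List α)}
    (hr : ∀ i, ∀ s ∈ segs i, r ∉ s) {θ : ℝ} (hθ : 0 < θ) (n : ℕ) :
    ∀ (π : Finset (Finset α)) (K : Finset α → ℝ) (t : ℝ), 0 ≤ t →
      (π.filter (Active x segs θ)).card ≤ n → IsTourPartition c r π K →
      (∀ u v, ActiveCross r x segs θ π u v → t ≤ c u v) →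
      ∃ (π' : Finset (Finset α)) (K' : Finset α → ℝ), IsTourPartition c r π' K' ∧
        (∀ A ∈ π', ¬ Active x segs θ A) ∧
        ∑ A ∈ π', K' A ≤ ∑ A ∈ π, K A + 2 * (t * (π.filter (Active x segs θ)).card +
          2 / θ * ∑ i, x i * segCost (excess c r x segs θ π t) (segs i)) := by
  induction n with
  | zero =>
    intro π K t ht hcard hπ htc
    refine ⟨π, K, hπ, ?_, ?_⟩
    · intro A hA hact
      have := Finset.card_eq_zero.1 (Nat.le_zero.1 hcard)
      exact (Finset.eq_empty_iff_forall_notMem.1 this) A (Finset.mem_filter.2 ⟨hA, hact⟩)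
    · have h1 : 0 ≤ ∑ i, x i * segCost (excess c r x segs θ π t) (segs i) := by
        refine Finset.sum_nonneg fun i _ => mul_nonneg (hx i) (segCost_nonneg (fun a b => ?_) _)
        unfold excess
        split_ifs with h
        · linarith [htc a b h]
        · exact le_rfl
      have h2 : 0 ≤ 2 / θ * ∑ i, x i * segCost (excess c r x segs θ π t) (segs i) := by
        positivity
      have h3 : 0 ≤ t * (π.filter (Active x segs θ)).card := by positivity
      linarith
  | succ n ih =>
    intro π K t ht hcard hπ htc
    by_cases hex : ∃ A ∈ π, Active x segs θ A
    swap
    · push Not at hex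
      exact ih π K t ht (by
        rw [Finset.filter_false_of_mem hex]; simp) hπ htc
    -- there is a separated pair; take a closest one
    have hpairs : (Finset.univ.filter fun p : α × α =>
        ActiveCross r x segs θ π p.1 p.2).Nonempty := by
      obtain ⟨A, hA, hact⟩ := hex
      obtain ⟨v, hv⟩ := hπ.nonempty A hA
      have h1 := hθ.trans_le (hact v hv)
      obtain ⟨i, hi, -⟩ := Finset.exists_ne_zero_of_sum_ne_zero h1.ne'
      simp only [Finset.mem_filter, Finset.mem_univ, true_and] at hi
      obtain ⟨s, hs, hvs, hn⟩ := hi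
      push Not at hn
      obtain ⟨u, hu, huA⟩ := hn
      refine ⟨(v, u), Finset.mem_filter.2 ⟨Finset.mem_univ _, ?_⟩⟩
      exact ⟨fun e => hr i s hs (e ▸ hvs), fun e => hr i s hs (e ▸ hu), A, hA, hact,
        Or.inl ⟨hv, huA⟩⟩
    obtain ⟨p, hp, hmin⟩ := Finset.exists_min_image _ (fun p : α × α => c p.1 p.2) hpairs
    have hmin' : ∀ u v, ActiveCross r x segs θ π u v → c p.1 p.2 ≤ c u v := fun u v h =>
      hmin (u, v) (by simpa using h)
    simp only [Finset.mem_filter, Finset.mem_univ, true_and] at hp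
    -- orient the pair so that the first node is in an active part
    obtain ⟨u, v, A, hv, hA, hact, huA, hvA, hcuv⟩ : ∃ u v A, v ≠ r ∧ A ∈ π ∧
        Active x segs θ A ∧ u ∈ A ∧ v ∉ A ∧ c u v = c p.1 p.2 := by
      obtain ⟨h1, h2, A, hA, hact, h | h⟩ := hp
      · exact ⟨p.1, p.2, A, h2, hA, hact, h.1, h.2, rfl⟩
      · exact ⟨p.2, p.1, A, h1, hA, hact, h.2, h.1, hsymm _ _⟩
    have htt : t ≤ c u v := hcuv ▸ htc _ _ hp
    rw [← hcuv] at hmin'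
    set t' := c u v with ht'
    obtain ⟨B, hB, hvB⟩ := hπ.cover v hv
    have hAB : A ≠ B := fun e => hvA (e ▸ hvB)
    obtain ⟨K₁, hπ₁, hsum⟩ := hπ.merge hsymm hA hB hAB huA hvB
    set π₁ := insert (A ∪ B) ((π.erase A).erase B) with hπ₁def
    -- an active part is lost
    have hcard₁ : (π₁.filter (Active x segs θ)).card + 1 ≤ (π.filter (Active x segs θ)).card := by
      have hAm : A ∈ π.filter (Active x segs θ) := Finset.mem_filter.2 ⟨hA, hact⟩
      have e1 := Finset.card_erase_add_one hAm
      by_cases hu : Active x segs θ (A ∪ B)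
      · have hBm : B ∈ (π.filter (Active x segs θ)).erase A :=
          Finset.mem_erase.2 ⟨hAB.symm,
            Finset.mem_filter.2 ⟨hB, hu.mono hx Finset.subset_union_right⟩⟩
        have e2 := Finset.card_erase_add_one hBm
        have hsub : π₁.filter (Active x segs θ) ⊆
            insert (A ∪ B) (((π.filter (Active x segs θ)).erase A).erase B) := by
          intro Z hZ
          simp only [hπ₁def, Finset.mem_filter, Finset.mem_insert, Finset.mem_erase] at hZ ⊢
          tauto
        have := (Finset.card_le_card hsub).trans (Finset.card_insert_le _ _)
        omega
      · have hsub : π₁.filter (Active x segs θ) ⊆ (π.filter (Active x segs θ)).erase A := by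
          intro Z hZ
          simp only [hπ₁def, Finset.mem_filter, Finset.mem_insert, Finset.mem_erase] at hZ ⊢
          rcases hZ with ⟨rfl | hZ, hZ'⟩
          · exact absurd hZ' hu
          · exact ⟨hZ.2.1, hZ.2.2, hZ'⟩
        have := Finset.card_le_card hsub
        omega
    -- pairs separated later are separated now
    have hac : ∀ a b, ActiveCross r x segs θ π₁ a b → ActiveCross r x segs θ π a b := by
      rintro a b ⟨ha, hb, Z, hZ, hZact, hcr⟩
      refine ⟨ha, hb, ?_⟩
      rcases Finset.mem_insert.1 hZ with rfl | hZ
      · have hBact := hZact.mono hx (Finset.subset_union_right (s₁ := A) (s₂ := B))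
        simp only [Finset.mem_union] at hcr
        by_cases hAc : (a ∈ A ∧ b ∉ A) ∨ (a ∉ A ∧ b ∈ A)
        · exact ⟨A, hA, hact, hAc⟩
        · exact ⟨B, hB, hBact, by tauto⟩
      · exact ⟨Z, Finset.mem_of_mem_erase (Finset.mem_of_mem_erase hZ), hZact, hcr⟩
    obtain ⟨π', K', h1, h2, h3⟩ := ih π₁ K₁ t' (ht.trans htt) (by omega) hπ₁
      fun a b hab => hmin' a b (hac a b hab)
    refine ⟨π', K', h1, h2, ?_⟩
    have hexc : ∑ i, x i * segCost (excess c r x segs θ π₁ t') (segs i) + (t' - t) *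
        ∑ i, x i * segCost (fun u v => if ActiveCross r x segs θ π u v then 1 else 0) (segs i)
        ≤ ∑ i, x i * segCost (excess c r x segs θ π t) (segs i) := by
      rw [Finset.mul_sum, ← Finset.sum_add_distrib]
      refine Finset.sum_le_sum fun i _ => ?_
      have : segCost (fun a b => excess c r x segs θ π₁ t' a b +
          (t' - t) * if ActiveCross r x segs θ π a b then 1 else 0) (segs i) ≤
          segCost (excess c r x segs θ π t) (segs i) := by
        refine segCost_mono _ fun s _ a _ b _ => ?_
        unfold excess
        by_cases h : ActiveCross r x segs θ π a b
        · have := hmin' a b h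
          simp only [h, if_true]
          split_ifs <;> linarith
        · simp [h, mt (hac a b) h]
      rw [segCost_add_mul] at this
      have := mul_le_mul_of_nonneg_left this (hx i)
      linarith
    have hca := card_active_le (θ := θ) hx hr hπ
    set X₀ := ∑ i, x i * segCost (excess c r x segs θ π t) (segs i)
    set X₁ := ∑ i, x i * segCost (excess c r x segs θ π₁ t') (segs i)
    set Y := ∑ i, x i * segCost (fun u v => if ActiveCross r x segs θ π u v then 1 else 0)
      (segs i)
    set N₀ := (π.filter (Active x segs θ)).card
    set N₁ := (π₁.filter (Active x segs θ)).card
    have hN : (N₁ : ℝ) + 1 ≤ N₀ := by exact_mod_cast hcard₁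
    have f1 : t' * N₁ + t' ≤ t' * N₀ := by nlinarith [ht.trans htt]
    have f2 : (t' - t) * N₀ ≤ 2 / θ * ((t' - t) * Y) := by
      have : (N₀ : ℝ) ≤ 2 / θ * Y := by
        rw [div_mul_eq_mul_div, le_div_iff₀ hθ]; linarith
      have := mul_le_mul_of_nonneg_left this (sub_nonneg.2 htt)
      linarith
    have f3 : 2 / θ * (X₁ + (t' - t) * Y) ≤ 2 / θ * X₀ :=
      mul_le_mul_of_nonneg_left hexc (by positivity)
    rw [mul_add] at f3
    rw [hsum] at h3
    nlinarith [f1, f2, f3, h3]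

open Classical in
/-- The forest: a partition of the non-root nodes into inactive sets whose tours cost at most
`4 / θ` times the fractional segment cost. -/
lemma exists_forest [Fintype α] (hsymm : ∀ u v, c u v = c v u) (hnn : ∀ u v, 0 ≤ c u v)
    (hrefl : ∀ u, c u u = 0) {x : ι → ℝ} (hx : ∀ i, 0 ≤ x i) {segs : ι → List (List α)}
    (hr : ∀ i, ∀ s ∈ segs i, r ∉ s) {θ : ℝ} (hθ : 0 < θ) :
    ∃ (π : Finset (Finset α)) (K : Finset α → ℝ), IsTourPartition c r π K ∧
      (∀ A ∈ π, ¬ Active x segs θ A) ∧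
      ∑ A ∈ π, K A ≤ 4 / θ * ∑ i, x i * segCost c (segs i) := by
  have h0 : IsTourPartition c r ((Finset.univ.erase r).image fun v => {v}) (fun _ => 0) := by
    refine ⟨?_, ?_, ?_, ?_, ?_⟩
    · intro A hA B hB v hvA hvB
      obtain ⟨a, -, rfl⟩ := Finset.mem_image.1 hA
      obtain ⟨b, -, rfl⟩ := Finset.mem_image.1 hB
      rw [← Finset.mem_singleton.1 hvA, ← Finset.mem_singleton.1 hvB]
    · intro A hA
      obtain ⟨a, -, rfl⟩ := Finset.mem_image.1 hA
      simp
    · intro v hv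
      exact ⟨{v}, Finset.mem_image.2 ⟨v, by simp [hv], rfl⟩, by simp⟩
    · intro A hA
      obtain ⟨a, ha, rfl⟩ := Finset.mem_image.1 hA
      simpa using (Finset.ne_of_mem_erase ha).symm
    · intro A hA w hw
      obtain ⟨a, ha, rfl⟩ := Finset.mem_image.1 hA
      refine ⟨[], fun z hz => Or.inl ?_, by simp [hrefl]⟩
      rw [Finset.mem_singleton.1 hz, Finset.mem_singleton.1 hw]
  obtain ⟨π, K, h1, h2, h3⟩ := exists_forest_aux hsymm hx hr hθ _ _ _ 0 le_rfl le_rfl h0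
    fun u v _ => hnn u v
  refine ⟨π, K, h1, h2, h3.trans ?_⟩
  have : ∑ i, x i * segCost (excess c r x segs θ
      ((Finset.univ.erase r).image fun v => {v}) 0) (segs i) ≤
      ∑ i, x i * segCost c (segs i) := by
    refine Finset.sum_le_sum fun i _ => mul_le_mul_of_nonneg_left ?_ (hx i)
    refine segCost_mono _ fun s _ a _ b _ => ?_
    unfold excess
    split_ifs
    · linarith
    · exact hnn a b
  have := mul_le_mul_of_nonneg_left this (show (0 : ℝ) ≤ 2 / θ by positivity)
  simp only [Finset.sum_const_zero, zero_mul, zero_add]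
  calc _ ≤ 2 * (2 / θ * ∑ i, x i * segCost c (segs i)) := by linarith
    _ = _ := by ring

end Forest

/-! ### Integral chains through the witnesses -/

/-- The places of a system of `k` chains through `W`: the witnesses and `k` ends. As predecessors
the ends are copies of the root, as successors they mark that a chain stops. -/
abbrev Place {α : Type*} (W : Finset α) (k : ℕ) := W ⊕ Fin k

/-- The node at a place. -/
def node {α : Type*} (r : α) {W : Finset α} {k : ℕ} : Place W k → α :=
  Sum.elim (fun v => v.1) (fun _ => r)

@[simp] lemma node_inl {α : Type*} {r : α} {W : Finset α} {k : ℕ} (v : W) :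
    node r (Sum.inl v : Place W k) = v := rfl

@[simp] lemma node_inr {α : Type*} {r : α} {W : Finset α} {k : ℕ} (i : Fin k) :
    node r (Sum.inr i : Place W k) = r := rfl

section Chains

variable {α : Type*} [DecidableEq α] {c : α → α → ℝ} {r : α}

/-- A fractional cover of `W` by chains, that is, lists of nodes of `W` with increasing distance
from the root, of total weight `K` and total regret at most `B`. -/
structure IsFracCover (c : α → α → ℝ) (r : α) (W : Finset α) (K B : ℝ) {ι : Type} [Fintype ι]
    (L : ι → List α) (y : ι → ℝ) : Prop where
  nonneg : ∀ i, 0 ≤ y i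
  sum : ∑ i, y i = K
  cost : ∑ i, y i * pathCost (reg c r) (r :: L i) ≤ B
  mono : ∀ i, (L i).Pairwise fun u v => c r u < c r v
  mem : ∀ i, ∀ v ∈ L i, v ∈ W
  cov : ∀ w ∈ W, 1 ≤ ∑ i, if w ∈ L i then y i else 0

/-- A fractional cover can be thinned out so as to cover every node exactly once: if `w` is
covered `κ` times, drop it from a fraction `1 - 1/κ` of every chain. -/
lemma IsFracCover.exists_exact (htri : ∀ u v w, c u v ≤ c u w + c w v) {W : Finset α} {K B : ℝ}
    {ι : Type} [Fintype ι] {L : ι → List α} {y : ι → ℝ} (h : IsFracCover c r W K B L y)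
    (T : Finset α) :
    ∃ (ι' : Type) (_ : Fintype ι') (L' : ι' → List α) (y' : ι' → ℝ),
      IsFracCover c r W K B L' y' ∧
      ∀ w ∈ W, w ∈ T → ∑ i, (if w ∈ L' i then y' i else 0) = 1 := by
  induction T using Finset.induction_on with
  | empty => exact ⟨ι, inferInstance, L, y, h, by simp⟩
  | insert w T hwT ih =>
    obtain ⟨ι₁, hι₁, L₁, y₁, h₁, hT⟩ := ih
    by_cases hwW : w ∈ W
    swap
    · refine ⟨ι₁, hι₁, L₁, y₁, h₁, fun v hv hvT => ?_⟩
      rcases Finset.mem_insert.1 hvT with rfl | hvT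
      · exact absurd hv hwW
      · exact hT v hv hvT
    set κ := ∑ i, if w ∈ L₁ i then y₁ i else 0 with hκ
    have hκ1 : 1 ≤ κ := h₁.cov w hwW
    have hκ0 : 0 < κ := by linarith
    have hinv : 1 / κ ≤ 1 := by rw [div_le_one hκ0]; exact hκ1
    have hinv0 : 0 ≤ 1 / κ := by positivity
    set L' : ι₁ × Bool → List α := fun p => if p.2 then L₁ p.1 else (L₁ p.1).filter (· ≠ w)
      with hL'
    set y' : ι₁ × Bool → ℝ := fun p => if p.2 then y₁ p.1 * (1 / κ) else y₁ p.1 * (1 - 1 / κ)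
      with hy'
    have hsub : ∀ p, (L' p).Sublist (L₁ p.1) := by
      rintro ⟨i, b⟩
      cases b
      · exact List.filter_sublist
      · exact List.Sublist.refl _
    have hcovne : ∀ v, v ≠ w → ∑ p, (if v ∈ L' p then y' p else 0) =
        ∑ i, if v ∈ L₁ i then y₁ i else 0 := by
      intro v hv
      rw [Fintype.sum_prod_type]
      refine Finset.sum_congr rfl fun i _ => ?_
      simp only [hL', hy', Fintype.sum_bool, if_true, Bool.false_eq_true, if_false,
        List.mem_filter, decide_eq_true_eq, hv, ne_eq, not_false_eq_true, and_true]
      split_ifs <;> ring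
    have hcoveq : ∑ p, (if w ∈ L' p then y' p else 0) = 1 := by
      rw [Fintype.sum_prod_type]
      have : ∀ i, ∑ b, (if w ∈ L' (i, b) then y' (i, b) else 0) =
          (if w ∈ L₁ i then y₁ i else 0) * (1 / κ) := by
        intro i
        simp only [hL', hy', Fintype.sum_bool, if_true, Bool.false_eq_true, if_false,
          List.mem_filter, decide_eq_true_eq, ne_eq, not_true_eq_false, and_false]
        split_ifs <;> ring
      rw [Finset.sum_congr rfl fun i _ => this i, ← Finset.sum_mul, ← hκ]
      field_simp
    refine ⟨ι₁ × Bool, inferInstance, L', y', ⟨?_, ?_, ?_, ?_, ?_, ?_⟩, ?_⟩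
    · rintro ⟨i, b⟩
      have := h₁.nonneg i
      cases b
      · exact mul_nonneg this (by linarith)
      · exact mul_nonneg this hinv0
    · rw [Fintype.sum_prod_type, ← h₁.sum]
      refine Finset.sum_congr rfl fun i _ => ?_
      simp only [hy', Fintype.sum_bool, if_true, Bool.false_eq_true, if_false]
      ring
    · refine le_trans ?_ h₁.cost
      rw [Fintype.sum_prod_type]
      refine Finset.sum_le_sum fun i _ => ?_
      have h2 := (pathCost_sublist (reg_nonneg (r := r) htri) (reg_tri htri)
        (hsub (i, false))).2 r
      have h3 := mul_le_mul_of_nonneg_left h2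
        (mul_nonneg (h₁.nonneg i) (sub_nonneg.2 hinv))
      simp only [hL', hy', Fintype.sum_bool, if_true, Bool.false_eq_true, if_false] at h3 ⊢
      linarith
    · exact fun p => (h₁.mono p.1).sublist (hsub p)
    · exact fun p v hv => h₁.mem p.1 v ((hsub p).subset hv)
    · intro v hv
      by_cases hvw : v = w
      · rw [hvw, hcoveq]
      · rw [hcovne v hvw]; exact h₁.cov v hv
    · intro v hv hvT
      by_cases hvw : v = w
      · rw [hvw, hcoveq]
      · rw [hcovne v hvw]
        exact hT v hv ((Finset.mem_insert.1 hvT).resolve_left hvw)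

/-- The regret distance, except that returning to the root is free. -/
def openReg (c : α → α → ℝ) (r u v : α) : ℝ := if v = r then 0 else reg c r u v

lemma pathCost_openReg (a : α) (l : List α) (hr : r ∉ l) :
    pathCost (openReg c r) (a :: (l ++ [r])) = pathCost (reg c r) (a :: l) := by
  induction l generalizing a with
  | nil => simp [openReg]
  | cons b l ih =>
    simp only [List.mem_cons, not_or] at hr
    have := ih b hr.2
    simp only [List.cons_append, pathCost_cons_cons] at this ⊢
    rw [this, openReg, if_neg fun e => hr.1 e.symm]

/-- On a chain, a step between two nodes other than the root goes away from the root. -/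
lemma nxt_eq_zero_of_chain {l : List α} (hl : l.Pairwise fun u v => c r u < c r v) {u v : α}
    (hv : v ≠ r) (huv : ¬ c r u < c r v) : ∀ a, (a = r ∨ ∀ b ∈ l, c r a < c r b) → u ≠ r →
      nxt u v (a :: (l ++ [r])) = 0 := by
  induction l with
  | nil => intro a _ _; simp [nxt, hv.symm]
  | cons b l ih =>
    intro a ha hu
    rw [List.pairwise_cons] at hl
    have := ih hl.2 b (Or.inr hl.1) hu
    unfold nxt at this ⊢
    simp only [List.cons_append, pathCost_cons_cons] at this ⊢
    rw [this, add_zero, if_neg]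
    rintro ⟨rfl, rfl⟩
    rcases ha with ha | ha
    · exact hu ha
    · exact huv (ha b (by simp))

lemma sum_place {W : Finset α} {k : ℕ} (hk : 0 < k) (hrW : r ∉ W) [Fintype α] (φ : α → ℝ)
    (hφ : ∀ v, v ∉ W → v ≠ r → φ v = 0) :
    ∑ e : Place W k, (Sum.elim (fun _ => 1) (fun _ => 1 / (k : ℝ)) e : ℝ) * φ (node r e) =
      ∑ v, φ v := by
  have hk' : (k : ℝ) ≠ 0 := by exact_mod_cast hk.ne'
  rw [Fintype.sum_sum_type]
  simp only [Sum.elim_inl, Sum.elim_inr, node_inl, node_inr, one_mul, Finset.sum_const,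
    Finset.card_univ, Fintype.card_fin, nsmul_eq_mul]
  rw [← mul_assoc, mul_one_div_cancel hk', one_mul, Finset.sum_coe_sort W φ, add_comm,
    ← Finset.sum_insert hrW]
  refine Finset.sum_subset (Finset.subset_univ _) fun v _ hv => ?_
  rw [Finset.mem_insert, not_or] at hv
  exact hφ v hv.2 hv.1

/-- Integrality. The transitions of an exact fractional cover, together with unused capacity of
the `k` root copies, form a doubly stochastic matrix; by Birkhoff's theorem some permutation in
its support costs no more. -/
lemma IsFracCover.exists_perm [Fintype α] {W : Finset α} {K B : ℝ} {ι : Type} [Fintype ι]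
    {L : ι → List α} {y : ι → ℝ} (h : IsFracCover c r W K B L y) (hrW : r ∉ W)
    (hexact : ∀ w ∈ W, ∑ i, (if w ∈ L i then y i else 0) = 1) {k : ℕ} (hk : 0 < k)
    (hKk : K ≤ k) :
    ∃ σ : Equiv.Perm (Place W k),
      (∀ u v : W, σ (Sum.inl u) = Sum.inl v → c r u < c r v) ∧
      ∑ e, openReg c r (node r e) (node r (σ e)) ≤ B := by
  have hk' : (k : ℝ) ≠ 0 := by exact_mod_cast hk.ne'
  have hrL : ∀ i, r ∉ L i := fun i hr => hrW (h.mem i r hr)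
  have hnd : ∀ i, (L i).Nodup := fun i => (h.mono i).imp fun {a b} hab e => by
    rw [e] at hab; exact lt_irrefl _ hab
  -- the transitions, with the unused capacity as loops at the root
  set f : α → α → ℝ := fun u v => ∑ i, y i * nxt u v (r :: (L i ++ [r])) with hf
  set f' : α → α → ℝ := fun u v => f u v + if u = r ∧ v = r then (k : ℝ) - K else 0 with hf'
  have hf0 : ∀ u v, 0 ≤ f u v := fun u v =>
    Finset.sum_nonneg fun i _ => mul_nonneg (h.nonneg i) (nxt_nonneg _ _ _)
  have hf'0 : ∀ u v, 0 ≤ f' u v := fun u v => by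
    have := hf0 u v
    simp only [hf']
    split_ifs <;> linarith
  have hdeg : ∀ u, (∑ i, y i * ((if r = u then (1 : ℝ) else 0) + if u ∈ L i then 1 else 0)) =
      if u = r then K else if u ∈ W then 1 else 0 := by
    intro u
    by_cases hu : u = r
    · subst hu; simp [hrL, h.sum]
    · rw [if_neg hu, if_neg fun e => hu e.symm]
      simp only [zero_add, mul_ite, mul_one, mul_zero]
      by_cases huW : u ∈ W
      · rw [if_pos huW, hexact u huW]
      · rw [if_neg huW]
        exact Finset.sum_eq_zero fun i _ => if_neg fun hm => huW (h.mem i u hm)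
  have hrow : ∀ u, ∑ v, f u v = if u = r then K else if u ∈ W then 1 else 0 := by
    intro u
    simp only [hf]
    rw [Finset.sum_comm, ← hdeg u]
    refine Finset.sum_congr rfl fun i _ => ?_
    rw [← Finset.mul_sum, sum_nxt_right, pathCost_fst (fun a => if a = u then (1 : ℝ) else 0),
      sum_map_indicator u _ (hnd i)]
  have hcol : ∀ v, ∑ u, f u v = if v = r then K else if v ∈ W then 1 else 0 := by
    intro v
    simp only [hf]
    rw [Finset.sum_comm, ← hdeg v]
    refine Finset.sum_congr rfl fun i _ => ?_
    rw [← Finset.mul_sum, sum_nxt_left, pathCost_snd (fun a => if a = v then (1 : ℝ) else 0),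
      sum_map_indicator v _ (hnd i), add_comm]
  have hrow' : ∀ u, ∑ v, f' u v = if u = r then (k : ℝ) else if u ∈ W then 1 else 0 := by
    intro u
    simp only [hf', Finset.sum_add_distrib, hrow]
    by_cases hu : u = r <;> simp [hu]
  have hcol' : ∀ v, ∑ u, f' u v = if v = r then (k : ℝ) else if v ∈ W then 1 else 0 := by
    intro v
    simp only [hf', Finset.sum_add_distrib, hcol]
    by_cases hv : v = r <;> simp [hv]
  have hfin : ∀ u v, v ∉ W → v ≠ r → f' u v = 0 := by
    intro u v hv hvr
    have := hcol' v
    rw [if_neg hvr, if_neg hv, Finset.sum_eq_zero_iff_of_nonneg fun u _ => hf'0 u v] at this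
    exact this u (Finset.mem_univ _)
  have hfout : ∀ u v, u ∉ W → u ≠ r → f' u v = 0 := by
    intro u v hu hur
    have := hrow' u
    rw [if_neg hur, if_neg hu, Finset.sum_eq_zero_iff_of_nonneg fun v _ => hf'0 u v] at this
    exact this v (Finset.mem_univ _)
  -- the doubly stochastic matrix
  set wt : Place W k → ℝ := Sum.elim (fun _ => 1) (fun _ => 1 / (k : ℝ)) with hwt
  have hwt0 : ∀ e, 0 ≤ wt e := by
    rintro (e | e)
    · simp [hwt]
    · simp [hwt]
  have hwt1 : ∀ e, wt e * (if node r e = r then (k : ℝ) else if node r e ∈ W then 1 else 0) = 1 := by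
    rintro (e | e)
    · have : (e : α) ≠ r := fun h => hrW (h ▸ e.2)
      simp [hwt, this]
    · simp [hwt, hk']
  set M : Matrix (Place W k) (Place W k) ℝ :=
    Matrix.of fun e e' => wt e * (wt e' * f' (node r e) (node r e')) with hM
  have hMd : M ∈ doublyStochastic ℝ (Place W k) := by
    rw [mem_doublyStochastic_iff_sum]
    refine ⟨fun e e' => mul_nonneg (hwt0 e) (mul_nonneg (hwt0 e') (hf'0 _ _)), fun e => ?_,
      fun e' => ?_⟩
    · simp only [hM, Matrix.of_apply]
      rw [← Finset.mul_sum, sum_place hk hrW (fun v => f' (node r e) v) (hfin _), hrow', hwt1]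
    · simp only [hM, Matrix.of_apply]
      rw [Finset.sum_congr rfl fun e _ => mul_left_comm (wt e) (wt e') _, ← Finset.mul_sum,
        sum_place hk hrW (fun u => f' u (node r e')) (fun u => hfout u _), hcol', hwt1]
  have hMcost : ∑ e, ∑ e', M e e' * openReg c r (node r e) (node r e') ≤ B := by
    have e1 : ∀ e, ∑ e', M e e' * openReg c r (node r e) (node r e') =
        wt e * ∑ v, f' (node r e) v * openReg c r (node r e) v := by
      intro e
      rw [← sum_place hk hrW (fun v => f' (node r e) v * openReg c r (node r e) v)
        (fun v h1 h2 => by rw [hfin _ v h1 h2, zero_mul]), Finset.mul_sum]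
      refine Finset.sum_congr rfl fun e' _ => ?_
      simp only [hM, hwt, Matrix.of_apply]; ring
    rw [Finset.sum_congr rfl fun e _ => e1 e,
      sum_place hk hrW (fun u => ∑ v, f' u v * openReg c r u v) fun u h1 h2 =>
        Finset.sum_eq_zero fun v _ => by rw [hfout u v h1 h2, zero_mul]]
    refine le_trans (le_of_eq ?_) h.cost
    have e2 : ∀ u v, f' u v * openReg c r u v =
        ∑ i, y i * (openReg c r u v * nxt u v (r :: (L i ++ [r]))) := by
      intro u v
      have : f' u v * openReg c r u v = f u v * openReg c r u v := by
        simp only [hf']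
        by_cases hv : v = r <;> simp [openReg, hv]
      rw [this]
      simp only [hf, Finset.sum_mul]
      exact Finset.sum_congr rfl fun i _ => by ring
    simp only [e2]
    rw [Finset.sum_congr rfl fun u _ => Finset.sum_comm, Finset.sum_comm]
    refine Finset.sum_congr rfl fun i _ => ?_
    rw [← pathCost_openReg r (L i) (hrL i), pathCost_eq_sum_nxt, Finset.mul_sum]
    exact Finset.sum_congr rfl fun u _ => by rw [Finset.mul_sum]
  obtain ⟨p, hp0, hp1, hpM⟩ := exists_eq_sum_perm_of_mem_doublyStochastic hMd
  have hMe : ∀ e e', M e e' = ∑ τ : Equiv.Perm (Place W k), p τ * if τ e = e' then 1 else 0 := by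
    intro e e'
    rw [← hpM, Matrix.sum_apply]
    refine Finset.sum_congr rfl fun τ _ => ?_
    simp [Equiv.Perm.permMatrix, PEquiv.toMatrix_apply, eq_comm]
  have hcostp : ∑ τ : Equiv.Perm (Place W k),
      p τ * ∑ e, openReg c r (node r e) (node r (τ e)) ≤ B := by
    refine le_trans (le_of_eq ?_) hMcost
    simp only [hMe, Finset.sum_mul, Finset.mul_sum]
    rw [Finset.sum_comm]
    refine Finset.sum_congr rfl fun e _ => ?_
    rw [Finset.sum_comm]
    refine Finset.sum_congr rfl fun τ _ => ?_
    simp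
  obtain ⟨σ, hσp, hσ⟩ : ∃ σ : Equiv.Perm (Place W k), 0 < p σ ∧
      ∑ e, openReg c r (node r e) (node r (σ e)) ≤ B := by
    by_contra! hcon
    have hle : ∀ τ : Equiv.Perm (Place W k),
        p τ * B ≤ p τ * ∑ e, openReg c r (node r e) (node r (τ e)) := by
      intro τ
      rcases (hp0 τ).eq_or_lt with h0 | h0
      · simp [← h0]
      · exact mul_le_mul_of_nonneg_left (hcon τ h0).le h0.le
    obtain ⟨τ, -, hτ⟩ : ∃ τ ∈ (Finset.univ : Finset (Equiv.Perm (Place W k))), 0 < p τ :=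
      Finset.exists_lt_of_sum_lt (by rw [hp1]; simp)
    have hlt := Finset.sum_lt_sum (fun τ _ => hle τ)
      ⟨τ, Finset.mem_univ _, mul_lt_mul_of_pos_left (hcon τ hτ) hτ⟩
    rw [← Finset.sum_mul, hp1, one_mul] at hlt
    linarith
  refine ⟨σ, fun u v huv => ?_, hσ⟩
  -- a transition in the support occurs on some chain
  have hpos : 0 < M (Sum.inl u) (Sum.inl v) := by
    rw [hMe]
    refine Finset.sum_pos' (fun τ _ => mul_nonneg (hp0 τ) (by split_ifs <;> norm_num))
      ⟨σ, Finset.mem_univ _, by rw [if_pos huv, mul_one]; exact hσp⟩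
  by_contra hlt
  have hur : (u : α) ≠ r := fun e => hrW (e ▸ u.2)
  have hvr : (v : α) ≠ r := fun e => hrW (e ▸ v.2)
  have : f' u v = 0 := by
    simp only [hf', hur, false_and, if_false, add_zero, hf]
    refine Finset.sum_eq_zero fun i _ => ?_
    rw [nxt_eq_zero_of_chain (h.mono i) hvr hlt r (Or.inl rfl) hur, mul_zero]
  simp [hM, this] at hpos

/-- A recursion along a partial successor function which decreases a rank. -/
lemma exists_unfold {E : Type*} (nx : E → Option E) (t : E → List α) (rk : E → ℕ)
    (hrk : ∀ e e', nx e = some e' → rk e' < rk e) :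
    ∃ Q : E → List α, (∀ e e', nx e = some e' → Q e = t e' ++ Q e') ∧
      ∀ e, nx e = none → Q e = [] := by
  have key : ∀ n, ∃ Q : E → List α,
      ∀ e, rk e < n → Q e = (nx e).elim [] fun e' => t e' ++ Q e' := by
    intro n
    induction n with
    | zero => exact ⟨fun _ => [], fun e he => absurd he (Nat.not_lt_zero _)⟩
    | succ n ih =>
      obtain ⟨Q, hQ⟩ := ih
      refine ⟨fun e => (nx e).elim [] fun e' => t e' ++ Q e', fun e he => ?_⟩
      cases hn : nx e with
      | none => simp only [hn, Option.elim_none]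
      | some e' =>
        simp only [hn, Option.elim_some]
        rw [← hQ e' (by have := hrk e e' hn; omega)]
  -- only the ranks below that of a given element matter, so the recursions for all ranks agree
  choose Q hQ using key
  have agree : ∀ N e n m, rk e < N → rk e < n → rk e < m → Q n e = Q m e := by
    intro N
    induction N with
    | zero => intro e n m h; omega
    | succ N ih =>
      intro e n m h hn hm
      rw [hQ n e hn, hQ m e hm]
      cases hnx : nx e with
      | none => rfl
      | some e' =>
        have := hrk e e' hnx
        simp only [Option.elim]
        rw [ih e' n m (by omega) (by omega) (by omega)]
  refine ⟨fun e => Q (rk e + 1) e, fun e e' hn => ?_, fun e hn => ?_⟩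
  · have := hrk e e' hn
    simp only
    rw [hQ _ e (Nat.lt_succ_self _), hn]
    simp only [Option.elim]
    rw [agree (rk e' + 1) e' (rk e + 1) (rk e' + 1) (by omega) (by omega) (by omega)]
  · simp only
    rw [hQ _ e (Nat.lt_succ_self _), hn]; rfl

/-- Assembly: follow the permutation from each of the `k` root copies, and traverse the tour of
every witness on the way. -/
lemma exists_walks [Fintype α] {W : Finset α} (hrW : r ∉ W) {k : ℕ}
    (σ : Equiv.Perm (Place W k))
    (hσ : ∀ u v : W, σ (Sum.inl u) = Sum.inl v → c r u < c r v) {B : ℝ}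
    (hB : ∑ e, openReg c r (node r e) (node r (σ e)) ≤ B) (t : W → List α) (κ : W → ℝ)
    (ht : ∀ w : W, pathCost c (w :: (t w ++ [w.1])) ≤ κ w) :
    ∃ Q : Fin k → List α, (∀ w : W, ∃ i, ∀ z, z = w.1 ∨ z ∈ t w → z ∈ Q i) ∧
      ∑ i, pathCost (reg c r) (r :: Q i) ≤ B + ∑ w, κ w := by
  set tt : Place W k → List α := Sum.elim (fun w => w.1 :: (t w ++ [w.1])) (fun _ => []) with htt
  set nx : Place W k → Option (Place W k) :=
    fun e => Sum.elim (fun v => some (Sum.inl v)) (fun _ => none) (σ e) with hnx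
  set rk : Place W k → ℕ := Sum.elim (fun w => (Finset.univ.filter fun v => c r w < c r v).card)
    (fun _ => Fintype.card α + 1) with hrk
  have hnx_some : ∀ e e', nx e = some e' → ∃ v, e' = Sum.inl v ∧ σ e = Sum.inl v := by
    intro e e' h
    simp only [hnx] at h
    cases hs : σ e with
    | inl v => rw [hs] at h; simp at h; exact ⟨v, h.symm, rfl⟩
    | inr j => rw [hs] at h; simp at h
  have hinl : ∀ e v, σ e = Sum.inl v → nx e = some (Sum.inl v) := by
    intro e v h; simp [hnx, h]
  have hinr : ∀ e j, σ e = Sum.inr j → nx e = none := by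
    intro e j h; simp [hnx, h]
  obtain ⟨Q, hQ1, hQ2⟩ := exists_unfold nx tt rk (by
    intro e e' h
    obtain ⟨v, rfl, hv⟩ := hnx_some e e' h
    cases e with
    | inl u =>
      have huv := hσ u v hv
      simp only [hrk, Sum.elim_inl]
      refine Finset.card_lt_card ⟨?_, ?_⟩
      · intro z hz
        simp only [Finset.mem_filter, Finset.mem_univ, true_and] at hz ⊢
        exact huv.trans hz
      · intro hs
        have := hs (show (v : α) ∈ _ by simpa using huv)
        simp at this
    | inr j =>
      simp only [hrk, Sum.elim_inl, Sum.elim_inr]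
      exact Nat.lt_succ_of_le (Finset.card_le_univ _))
  refine ⟨fun i => Q (Sum.inr i), ?_, ?_⟩
  · -- induction on the distance to the root
    have hcov : ∀ (n : ℕ) (w : W), (Finset.univ.filter fun v : W => c r v < c r w).card < n →
        ∃ i, (tt (Sum.inl w) ++ Q (Sum.inl w)) <:+ Q (Sum.inr i) := by
      intro n
      induction n with
      | zero => intro w h; omega
      | succ n ih =>
        intro w hw
        obtain ⟨e, he⟩ := σ.surjective (Sum.inl w)
        have hQe := hQ1 e _ (hinl e w he)
        cases e with
        | inr i => exact ⟨i, by rw [hQe]⟩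
        | inl u =>
          have huw := hσ u w he
          obtain ⟨i, hi⟩ := ih u (by
            refine lt_of_lt_of_le (Finset.card_lt_card ⟨?_, ?_⟩) (Nat.lt_succ_iff.1 hw)
            · intro z hz
              simp only [Finset.mem_filter, Finset.mem_univ, true_and] at hz ⊢
              exact hz.trans huw
            · intro hs
              have := hs (show u ∈ _ by simpa using huw)
              simp at this)
          refine ⟨i, List.IsSuffix.trans ?_ hi⟩
          rw [hQe]
          exact List.suffix_append _ _
    intro w
    obtain ⟨i, hi⟩ := hcov _ w (Nat.lt_succ_self _)
    refine ⟨i, fun z hz => hi.subset ?_⟩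
    rcases hz with hz | hz <;> simp [htt, hz]
  · -- `T e` is the cost of the part of a walk that follows the place `e`
    set T : Place W k → ℝ := fun e => pathCost (reg c r) (node r e :: Q e) with hT
    have hrec : ∀ e, T e ≤ openReg c r (node r e) (node r (σ e)) +
        Sum.elim (fun v => κ v + T (Sum.inl v)) (fun _ => 0) (σ e) := by
      intro e
      cases hs : σ e with
      | inr j => simp [hT, hQ2 e (hinr e j hs), openReg]
      | inl v =>
        have hvr : (v : α) ≠ r := fun h => hrW (h ▸ v.2)
        have h1 := pathCost_append_cons (reg c r) v.1 (Q (Sum.inl v)) (v.1 :: t v)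
        have h2 := ht v
        rw [← pathCost_reg_closed (r := r)] at h2
        have h3 : openReg c r (node r e) v.1 = reg c r (node r e) v.1 := if_neg hvr
        simp only [hT, hQ1 e _ (hinl e v hs), htt, Sum.elim_inl, node_inl, h3,
          List.cons_append, List.append_assoc, pathCost_cons_cons, List.nil_append] at h1 h2 ⊢
        linarith
    have hsum := Finset.sum_le_sum fun e (_ : e ∈ Finset.univ) => hrec e
    rw [Finset.sum_add_distrib, Equiv.sum_comp σ
      (Sum.elim (fun v => κ v + T (Sum.inl v)) (fun _ => (0 : ℝ)))] at hsum
    rw [Fintype.sum_sum_type, Fintype.sum_sum_type (f := Sum.elim _ _)] at hsum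
    simp only [Sum.elim_inl, Sum.elim_inr, Finset.sum_const_zero, add_zero,
      Finset.sum_add_distrib] at hsum
    simp only [hT, node_inr, node_inl] at hsum
    linarith

end Chains

/-! ### The rounding -/

section Rounding

variable {α : Type*} {c : α → α → ℝ} {r : α}

open Classical in
/-- The nodes of `W` whose segment does not leave the part of `π` containing them, in order. -/
noncomputable def keep (π : Finset (Finset α)) (W : Finset α) (ss : List (List α)) : List α :=
  (ss.map fun s => s.filter fun w => w ∈ W ∧ ∃ A ∈ π, w ∈ A ∧ ∀ u ∈ s, u ∈ A).flatten

open Classical in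
lemma mem_keep {π : Finset (Finset α)} {W : Finset α} {ss : List (List α)} {w : α} :
    w ∈ keep π W ss ↔ ∃ s ∈ ss, w ∈ s ∧ w ∈ W ∧ ∃ A ∈ π, w ∈ A ∧ ∀ u ∈ s, u ∈ A := by
  simp only [keep, List.mem_flatten, List.mem_map]
  constructor
  · rintro ⟨_, ⟨s, hs, rfl⟩, hw⟩
    rw [List.mem_filter] at hw
    exact ⟨s, hs, hw.1, of_decide_eq_true hw.2⟩
  · rintro ⟨s, hs, hw⟩
    exact ⟨_, ⟨s, hs, rfl⟩, List.mem_filter.2 ⟨hw.1, decide_eq_true hw.2⟩⟩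

open Classical in
lemma keep_sublist (π : Finset (Finset α)) (W : Finset α) (ss : List (List α)) :
    (keep π W ss).Sublist ss.flatten := by
  induction ss with
  | nil => simp [keep]
  | cons s ss ih =>
    simp only [keep, List.map_cons, List.flatten_cons] at ih ⊢
    exact List.filter_sublist.append ih

open Classical in
/-- Kept nodes get farther and farther from the root: a segment contributes at most one, since
its kept nodes lie in a common part of `π` and `W` has a single node there. -/
lemma keep_pairwise {π : Finset (Finset α)} {W : Finset α} {ss : List (List α)}
    (hW : ∀ A ∈ π, ∀ u ∈ W, ∀ v ∈ W, u ∈ A → v ∈ A → u = v) (hnd : ss.flatten.Nodup)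
    (hss : ss.Pairwise fun t t' => ∀ u ∈ t, ∀ v ∈ t', c r u < c r v) :
    (keep π W ss).Pairwise fun u v => c r u < c r v := by
  rw [keep, List.pairwise_flatten]
  constructor
  · intro t ht
    obtain ⟨s, hs, rfl⟩ := List.mem_map.1 ht
    have hsnd : s.Nodup := (List.nodup_flatten.1 hnd).1 s hs
    refine ((hsnd.filter _).imp_of_mem ?_)
    intro u v hu hv huv
    rw [List.mem_filter] at hu hv
    obtain ⟨huW, A, hA, huA, hsA⟩ := of_decide_eq_true hu.2
    obtain ⟨hvW, -⟩ := of_decide_eq_true hv.2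
    exact absurd (hW A hA u huW v hvW huA (hsA v hv.1)) huv
  · rw [List.pairwise_map]
    exact hss.imp fun h u hu v hv => h u (List.mem_filter.1 hu).1 v (List.mem_filter.1 hv).1

/-- From witnesses and chains to rooted paths: if the nodes of `W`, one in each part of a tour
partition, have a fractional cover by `K` chains of total regret at most `R * K`, then at most
`2 * K + 1` paths, plus one for every `R` of tour cost, cover everything. -/
lemma exists_paths_of_cover [Fintype α] [DecidableEq α]
    (htri : ∀ u v w, c u v ≤ c u w + c w v) (hrefl : ∀ u, c u u = 0) {R : ℝ} (hR : 0 ≤ R)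
    {π : Finset (Finset α)} {κ : Finset α → ℝ} (hπ : IsTourPartition c r π κ)
    {f : Finset α → α} (hf : ∀ A ∈ π, f A ∈ A) {K S : ℝ} (hK : 0 < K)
    {ι : Type} [Fintype ι] {L : ι → List α} {y : ι → ℝ}
    (h : IsFracCover c r (π.image f) K (R * K) L y) (hκ : ∑ A ∈ π, κ A ≤ R * S) (hS : 0 ≤ S) :
    ∃ Qs : List (List α), (Qs.length : ℝ) ≤ 2 * K + 1 + S ∧
      (∀ q ∈ Qs, IsRootedPath r q ∧ pathRegret c r q ≤ R) ∧
      ∀ v, v ≠ r → ∃ q ∈ Qs, v ∈ q.tail := by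
  have hrW : r ∉ π.image f := by
    intro hr
    obtain ⟨A, hA, e⟩ := Finset.mem_image.1 hr
    exact hπ.root A hA (e ▸ hf A hA)
  have hinj : Set.InjOn f π := fun A hA B hB e =>
    hπ.eq_of_mem A hA B hB (f A) (hf A hA) (e ▸ hf B hB)
  obtain ⟨ι', _, L', y', h', hex⟩ := h.exists_exact htri (π.image f)
  obtain ⟨σ, hσ, hB⟩ := h'.exists_perm hrW (fun w hw => hex w hw hw) (Nat.ceil_pos.2 hK)
    (Nat.le_ceil K)
  -- the part of a witness, and the tour that starts there
  have hpart : ∀ w : π.image f, ∃ A ∈ π, f A = w := fun w => Finset.mem_image.1 w.2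
  choose p hpπ hpf using hpart
  have htour : ∀ w : π.image f, ∃ l : List α, (∀ z ∈ p w, z = w ∨ z ∈ l) ∧
      pathCost c (w.1 :: (l ++ [w.1])) ≤ κ (p w) := fun w =>
    hπ.tour _ (hpπ w) w (by rw [← hpf w]; exact hf _ (hpπ w))
  choose t ht1 ht2 using htour
  obtain ⟨Q, hQ1, hQ2⟩ := exists_walks hrW σ hσ hB t (fun w => κ (p w)) ht2
  have hsumκ : ∑ w, κ (p w) = ∑ A ∈ π, κ A := by
    refine Finset.sum_bij (fun w _ => p w) (fun w _ => hpπ w) ?_ ?_ fun _ _ => rfl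
    · intro w _ w' _ e
      apply Subtype.ext
      rw [← hpf w, ← hpf w', e]
    · intro A hA
      refine ⟨⟨f A, Finset.mem_image_of_mem f hA⟩, Finset.mem_univ _, ?_⟩
      exact hinj (hpπ _) hA (hpf _)
  rw [hsumκ] at hQ2
  have hnn : ∀ i, 0 ≤ pathCost (reg c r) (r :: Q i) := fun i =>
    pathCost_nonneg (reg_nonneg htri) _
  have htot : ∑ i, pathCost (reg c r) (r :: Q i) ≤ R * (K + S) := by linarith
  have hpaths := fun i => exists_rootedPaths htri hrefl hR (Q i) (by
    intro hR0
    have := Finset.single_le_sum (fun j _ => hnn j) (Finset.mem_univ i)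
    rw [hR0, zero_mul] at htot
    exact this.trans htot)
  choose Qs hlen hQs hcov using hpaths
  refine ⟨(List.ofFn Qs).flatten, ?_, ?_, ?_⟩
  · have hl : ((List.ofFn Qs).flatten.length : ℝ) = ∑ i, ((Qs i).length : ℝ) := by
      rw [List.length_flatten, List.map_ofFn, List.sum_ofFn]
      push_cast
      rfl
    rw [hl]
    refine (Finset.sum_le_sum fun i _ => hlen i).trans ?_
    rw [Finset.sum_add_distrib, ← Finset.sum_div]
    have h1 : (∑ i, pathCost (reg c r) (r :: Q i)) / R ≤ K + S := by
      refine div_le_of_le_mul₀ hR (by linarith) ?_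
      linarith
    have h2 := Nat.ceil_lt_add_one hK.le
    simp only [Finset.sum_const, Finset.card_univ, Fintype.card_fin, nsmul_eq_mul, mul_one]
    linarith
  · intro q hq
    obtain ⟨l, hl, hql⟩ := List.mem_flatten.1 hq
    obtain ⟨i, rfl⟩ := (List.mem_ofFn' _ _).1 hl
    exact hQs i q hql
  · intro v hv
    obtain ⟨A, hA, hvA⟩ := hπ.cover v hv
    let w : π.image f := ⟨f A, Finset.mem_image_of_mem f hA⟩
    have hpw : p w = A := hinj (hpπ _) hA (hpf _)
    obtain ⟨i, hi⟩ := hQ1 w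
    obtain ⟨q, hq, hvq⟩ := hcov i v (hi v (ht1 w v (hpw ▸ hvA))) hv
    exact ⟨q, List.mem_flatten.2 ⟨_, (List.mem_ofFn' _ _).2 ⟨i, rfl⟩, hq⟩, hvq⟩

/-- The rounding with a general threshold `θ`: the optimal choice of `θ` gives the constant
`8 + 4 * √3`. -/
lemma exists_paths [Fintype α] [DecidableEq α] (hsymm : ∀ u v, c u v = c v u)
    (hnn : ∀ u v, 0 ≤ c u v) (htri : ∀ u v w, c u v ≤ c u w + c w v) (hrefl : ∀ u, c u u = 0)
    {R : ℝ} (hR : 0 ≤ R) {m : ℕ} {P : Fin m → List α} {x : Fin m → ℝ}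
    (hpath : ∀ i, IsRootedPath r (P i) ∧ pathRegret c r (P i) ≤ R) (hx : ∀ i, 0 ≤ x i)
    (hcov : ∀ v, v ≠ r → 1 ≤ ∑ i ∈ Finset.univ.filter (fun i => v ∈ (P i).tail), x i)
    {θ : ℝ} (hθ : 0 < θ) (hθ1 : θ < 1) (hk : 0 < ∑ i, x i) :
    ∃ Qs : List (List α), (Qs.length : ℝ) ≤ (2 / (1 - θ) + 6 / θ) * (∑ i, x i) + 1 ∧
      (∀ q ∈ Qs, IsRootedPath r q ∧ pathRegret c r q ≤ R) ∧
      ∀ v, v ≠ r → ∃ q ∈ Qs, v ∈ q.tail := by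
  have hθ' : 0 < 1 - θ := by linarith
  have hcons : ∀ i, P i = r :: (P i).tail := fun i => by
    obtain ⟨⟨h1, -⟩, -⟩ := hpath i
    cases hP : P i with
    | nil => simp [hP] at h1
    | cons a l => rw [hP] at h1; simp at h1; simp [h1]
  have hnd : ∀ i, r ∉ (P i).tail ∧ (P i).tail.Nodup := fun i => by
    have := (hpath i).1.2
    rw [hcons i] at this
    exact List.nodup_cons.1 this
  have hreg : ∀ i, pathCost (reg c r) (r :: (P i).tail) ≤ R := fun i => by
    rw [← pathRegret_eq hrefl, ← hcons i]; exact (hpath i).2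
  choose segs hflat hmono hcost using fun i => exists_segments (r := r) hsymm htri (P i).tail
  have hmem : ∀ i v, v ∈ (P i).tail ↔ ∃ s ∈ segs i, v ∈ s := fun i v => by
    conv_lhs => rw [← hflat i]
    exact List.mem_flatten
  have hsegR : ∀ i, segCost c (segs i) ≤ 3 / 2 * R := fun i => by
    have := (pathCost_sublist (reg_nonneg (r := r) htri) (reg_tri htri)
      (List.sublist_cons_self r (P i).tail)).1
    linarith [hcost i, hreg i]
  obtain ⟨π, κ, hπ, hin, hκ⟩ := exists_forest (r := r) hsymm hnn hrefl hx (segs := segs)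
    (fun i s hs hrs => (hnd i).1 ((hmem i r).2 ⟨s, hs, hrs⟩)) hθ
  -- an inactive part has a witness
  have hwit : ∀ A : Finset α, ∃ v, A ∈ π → v ∈ A ∧ leave x segs A v < θ := fun A => by
    by_cases hA : A ∈ π
    · have := hin A hA
      unfold Active at this
      push Not at this
      obtain ⟨v, hv⟩ := this
      exact ⟨v, fun _ => hv⟩
    · exact ⟨r, fun h => absurd h hA⟩
  choose f hf using hwit
  have hcover : IsFracCover c r (π.image f) ((∑ i, x i) / (1 - θ)) (R * ((∑ i, x i) / (1 - θ)))
      (fun i => keep π (π.image f) (segs i)) (fun i => x i / (1 - θ)) := by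
    refine ⟨fun i => div_nonneg (hx i) hθ'.le, by rw [Finset.sum_div], ?_, ?_, ?_, ?_⟩
    · rw [Finset.sum_div, Finset.mul_sum]
      refine Finset.sum_le_sum fun i _ => ?_
      rw [mul_comm R]
      refine mul_le_mul_of_nonneg_left ?_ (div_nonneg (hx i) hθ'.le)
      have h1 := keep_sublist π (π.image f) (segs i)
      rw [hflat i] at h1
      exact ((pathCost_sublist (reg_nonneg htri) (reg_tri htri) h1).2 r).trans (hreg i)
    · intro i
      refine keep_pairwise ?_ (by rw [hflat i]; exact (hnd i).2) (hmono i)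
      intro A hA u hu v hv huA hvA
      obtain ⟨B, hB, rfl⟩ := Finset.mem_image.1 hu
      obtain ⟨C, hC, rfl⟩ := Finset.mem_image.1 hv
      rw [← hπ.eq_of_mem A hA B hB _ huA (hf B hB).1, ← hπ.eq_of_mem A hA C hC _ hvA (hf C hC).1]
    · intro i v hv
      obtain ⟨-, -, -, h, -⟩ := mem_keep.1 hv
      exact h
    · intro w hw
      obtain ⟨A, hA, rfl⟩ := Finset.mem_image.1 hw
      have hwr : f A ≠ r := fun e => hπ.root A hA (e ▸ (hf A hA).1)
      have h1 := hcov _ hwr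
      have h2 := (hf A hA).2
      -- on a path through `f A`, either `f A` is kept or its segment leaves `A`
      have h3 : ∑ i ∈ Finset.univ.filter (fun i => f A ∈ (P i).tail), x i ≤
          leave x segs A (f A) +
            ∑ i, if f A ∈ keep π (π.image f) (segs i) then x i else 0 := by
        unfold leave
        rw [Finset.sum_filter, Finset.sum_filter, ← Finset.sum_add_distrib]
        refine Finset.sum_le_sum fun i _ => ?_
        have hxi := hx i
        by_cases hv : f A ∈ (P i).tail
        · rw [if_pos hv]
          obtain ⟨s, hs, hvs⟩ := (hmem i _).1 hv
          by_cases hsA : ∀ u ∈ s, u ∈ A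
          · rw [if_pos (mem_keep.2 ⟨s, hs, hvs, hw, A, hA, (hf A hA).1, hsA⟩)]
            split_ifs <;> linarith
          · rw [if_pos ⟨s, hs, hvs, hsA⟩]
            split_ifs <;> linarith
        · rw [if_neg hv]
          split_ifs <;> linarith
      have h4 : ∑ i, (if f A ∈ keep π (π.image f) (segs i) then x i / (1 - θ) else 0) =
          (∑ i, if f A ∈ keep π (π.image f) (segs i) then x i else 0) / (1 - θ) := by
        rw [Finset.sum_div]
        refine Finset.sum_congr rfl fun i _ => ?_
        split_ifs <;> simp
      rw [h4, le_div_iff₀ hθ']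
      linarith
  have hκ' : ∑ A ∈ π, κ A ≤ R * (6 / θ * ∑ i, x i) := by
    refine hκ.trans ?_
    have h1 : ∑ i, x i * segCost c (segs i) ≤ ∑ i, x i * (3 / 2 * R) :=
      Finset.sum_le_sum fun i _ => mul_le_mul_of_nonneg_left (hsegR i) (hx i)
    rw [← Finset.sum_mul] at h1
    calc 4 / θ * ∑ i, x i * segCost c (segs i) ≤ 4 / θ * ((∑ i, x i) * (3 / 2 * R)) :=
          mul_le_mul_of_nonneg_left h1 (by positivity)
      _ = _ := by ring
  obtain ⟨Qs, h1, h2⟩ := exists_paths_of_cover htri hrefl hR hπ (fun A hA => (hf A hA).1)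
    (div_pos hk hθ') hcover hκ' (by positivity)
  refine ⟨Qs, h1.trans (le_of_eq ?_), h2⟩
  ring

end Rounding

end RVRP

/-- Let `x` (given as a finitely supported family `x : Fin m → ℝ` on paths
`P : Fin m → List α`, each a rooted path of regret at most `R`) be a feasible solution to the
configuration LP (P) for RVRP with regret bound `R ≥ 0`, of value `k* = Σ_i x_i`.  Then there
exist at most `(8 + 4√3)·k* + 1` rooted paths, each of regret at most `R`, whose union covers
all of `V` (the non-root nodes). -/
theorem rvrp_lp_rounding {α : Type*} [Fintype α] [DecidableEq α] (c : α → α → ℝ) (r : α)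
    (hsymm : ∀ u v, c u v = c v u) (hnn : ∀ u v, 0 ≤ c u v)
    (htri : ∀ u v w, c u v ≤ c u w + c w v) (hrefl : ∀ u, c u u = 0)
    (hpos : ∀ u v, u ≠ v → 0 < c u v)
    (R : ℝ) (hR : 0 ≤ R)
    (m : ℕ) (P : Fin m → List α) (x : Fin m → ℝ)
    (hpath : ∀ i, IsRootedPath r (P i) ∧ pathRegret c r (P i) ≤ R)
    (hx : ∀ i, 0 ≤ x i)
    (hcov : ∀ v, v ≠ r → 1 ≤ ∑ i ∈ Finset.univ.filter (fun i => v ∈ (P i).tail), x i) :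
    ∃ (n : ℕ) (Q : Fin n → List α),
      (n : ℝ) ≤ (8 + 4 * Real.sqrt 3) * (∑ i, x i) + 1 ∧
      (∀ j, IsRootedPath r (Q j) ∧ pathRegret c r (Q j) ≤ R) ∧
      (∀ v, v ≠ r → ∃ j, v ∈ (Q j).tail) := by
  by_cases hex : ∃ v : α, v ≠ r
  swap
  · push Not at hex
    have h0 : 0 ≤ ∑ i, x i := Finset.sum_nonneg fun i _ => hx i
    refine ⟨0, fun j => j.elim0, ?_, fun j => j.elim0, fun v hv => absurd (hex v) hv⟩
    rw [Nat.cast_zero]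
    positivity
  obtain ⟨v, hv⟩ := hex
  have hk : 0 < ∑ i, x i := by
    have := (hcov v hv).trans
      (Finset.sum_le_sum_of_subset_of_nonneg (Finset.filter_subset _ _) fun i _ _ => hx i)
    linarith
  have h3 : 0 < √3 := by positivity
  have hsq : √3 * √3 = 3 := Real.mul_self_sqrt (by norm_num)
  -- `√3 / (1 + √3)` minimizes `2 / (1 - θ) + 6 / θ`
  obtain ⟨Qs, h1, h2, h4⟩ := RVRP.exists_paths hsymm hnn htri hrefl hR hpath hx hcov
    (θ := √3 / (1 + √3)) (by positivity) (by rw [div_lt_one (by positivity)]; linarith) hk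
  have hconst : 2 / (1 - √3 / (1 + √3)) + 6 / (√3 / (1 + √3)) = 8 + 4 * √3 := by
    have e : 1 - √3 / (1 + √3) = 1 / (1 + √3) := by field_simp; ring
    rw [e]
    field_simp
    nlinarith
  rw [hconst] at h1
  refine ⟨Qs.length, Qs.get, h1, fun j => h2 _ (List.get_mem _ _), fun v hv => ?_⟩
  obtain ⟨q, hq, hvq⟩ := h4 v hv
  obtain ⟨j, rfl⟩ := List.get_of_mem hq
  exact ⟨j, hvq⟩
end

section
/- There is an absolute constant C > 0 with the following property. For every DVRP instance with distance bound D > 0 and every feasible fractional solution x to the configuration LP (DV-P) of value k* = Σ_P x_P (note k* ≥ 1), there exist at most C·(k*)² rooted paths, each of length at most D, whose union covers all of V. In particular, the integrality gap of (DV-P) is O(OPT_LP), where OPT_LP is the optimal value of (DV-P). -/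
/-! ### Costs of lists -/

section PathCost

variable {α : Type*}

theorem pathCost_append_cons (c : α → α → ℝ) (A : List α) (u : α) (B : List α) :
    pathCost c (A ++ u :: B) = pathCost c (A ++ [u]) + pathCost c (u :: B) := by
  induction A with
  | nil => simp [pathCost]
  | cons a A ih =>
    cases A with
    | nil => simp [pathCost]
    | cons b A =>
      simp only [List.cons_append, pathCost] at ih ⊢
      rw [ih]; ring

theorem pathCost_nonneg {c : α → α → ℝ} (h : ∀ u v, 0 ≤ c u v) (L : List α) :
    0 ≤ pathCost c L := by
  induction L with
  | nil => simp [pathCost]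
  | cons a L ih =>
    cases L with
    | nil => simp [pathCost]
    | cons b L => simp only [pathCost]; have := h a b; linarith

theorem pathCost_mono {c c' : α → α → ℝ} (L : List α)
    (h : ∀ u ∈ L, ∀ v ∈ L, c u v ≤ c' u v) : pathCost c L ≤ pathCost c' L := by
  induction L with
  | nil => simp [pathCost]
  | cons a L ih =>
    cases L with
    | nil => simp [pathCost]
    | cons b L =>
      simp only [pathCost]
      have h1 := h a (by simp) b (by simp)
      have h2 := ih fun u hu v hv => h u (List.mem_cons_of_mem _ hu) v (List.mem_cons_of_mem _ hv)
      linarith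

theorem pathCost_zero (L : List α) : pathCost (fun _ _ => (0 : ℝ)) L = 0 := by
  induction L with
  | nil => simp [pathCost]
  | cons a L ih =>
    cases L with
    | nil => simp [pathCost]
    | cons b L => simp only [pathCost]; rw [ih]; ring

theorem pathCost_add (c c' : α → α → ℝ) (L : List α) :
    pathCost (fun u v => c u v + c' u v) L = pathCost c L + pathCost c' L := by
  induction L with
  | nil => simp [pathCost]
  | cons a L ih =>
    cases L with
    | nil => simp [pathCost]
    | cons b L => simp only [pathCost]; rw [ih]; ring

theorem pathCost_smul (t : ℝ) (c : α → α → ℝ) (L : List α) :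
    pathCost (fun u v => t * c u v) L = t * pathCost c L := by
  induction L with
  | nil => simp [pathCost]
  | cons a L ih =>
    cases L with
    | nil => simp [pathCost]
    | cons b L => simp only [pathCost]; rw [ih]; ring

theorem pathCost_sum {ι : Type*} (s : Finset ι) (c : ι → α → α → ℝ) (L : List α) :
    pathCost (fun u v => ∑ i ∈ s, c i u v) L = ∑ i ∈ s, pathCost (c i) L := by
  classical
  induction s using Finset.induction_on with
  | empty => simp [pathCost_zero]
  | insert a s ha ih => simp only [Finset.sum_insert ha]; rw [pathCost_add, ih]

theorem pathCost_cons_le {d : α → α → ℝ} (h0 : ∀ u v, 0 ≤ d u v)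
    (ht : ∀ u v w, d u v ≤ d u w + d w v) (a b : α) (L : List α) :
    pathCost d (a :: L) ≤ d a b + pathCost d (b :: L) := by
  cases L with
  | nil => simp [pathCost, h0]
  | cons x L => simp only [pathCost]; have := ht a x b; linarith

theorem pathCost_cons_sublist {d : α → α → ℝ} (h0 : ∀ u v, 0 ≤ d u v)
    (ht : ∀ u v w, d u v ≤ d u w + d w v) (L : List α) :
    ∀ (a : α) (L' : List α), L'.Sublist L → pathCost d (a :: L') ≤ pathCost d (a :: L) := by
  induction L with
  | nil => intro a L' h; simp [List.sublist_nil.mp h]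
  | cons b L ih =>
    intro a L' h
    cases h with
    | cons _ h =>
      have h1 := pathCost_cons_le h0 ht a b L'
      have h2 := ih b L' h
      simp only [pathCost]; linarith
    | cons_cons _ h =>
      have h2 := ih b _ h
      simp only [pathCost]; linarith

theorem pathCost_le_cons {d : α → α → ℝ} (h0 : ∀ u v, 0 ≤ d u v) (a : α) (L : List α) :
    pathCost d L ≤ pathCost d (a :: L) := by
  cases L with
  | nil => simp [pathCost]
  | cons x L => simp only [pathCost]; have := h0 a x; linarith

/-- Shortcutting: under the triangle inequality, skipping nodes does not increase the cost. -/
theorem pathCost_sublist {d : α → α → ℝ} (h0 : ∀ u v, 0 ≤ d u v)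
    (ht : ∀ u v w, d u v ≤ d u w + d w v) {L' L : List α} (h : L'.Sublist L) :
    pathCost d L' ≤ pathCost d L := by
  induction L generalizing L' with
  | nil => simp [List.sublist_nil.mp h]
  | cons b L ih =>
    cases h with
    | cons _ h => exact (ih h).trans (pathCost_le_cons h0 b L)
    | cons_cons _ h => exact pathCost_cons_sublist h0 ht L b _ h

theorem pathCost_append_le {d : α → α → ℝ} (h0 : ∀ u v, 0 ≤ d u v) (A B : List α) :
    pathCost d A + pathCost d B ≤ pathCost d (A ++ B) := by
  cases B with
  | nil => simp [pathCost]
  | cons b B =>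
    rw [pathCost_append_cons]
    induction A with
    | nil => simp [pathCost]
    | cons a A ih =>
      cases A with
      | nil => simp [pathCost, h0]
      | cons x A => simp only [List.cons_append, pathCost] at ih ⊢; linarith

end PathCost

/-! ### Regret and blocks -/

section Blocks

variable {α : Type*}

/-- The arc costs `d u v = D u + c u v - D v` telescope along a path: with `D` the distance from the
root, the `d`-cost of a rooted path is its regret. -/
theorem pathCost_regret {c d : α → α → ℝ} {D : α → ℝ}
    (hd : ∀ u v, d u v = D u + c u v - D v) (L : List α) :
    ∀ u, pathCost d (u :: L) =
      D u + pathCost c (u :: L) - D ((u :: L).getLast (List.cons_ne_nil _ _)) := by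
  induction L with
  | nil => intro u; simp [pathCost]
  | cons b L ih =>
    intro u
    simp only [pathCost]
    rw [ih b, hd, List.getLast_cons (List.cons_ne_nil _ _)]
    ring

/-- Suppose the walk `u :: L` starts at a level `D u ≤ M` and has no cut after which it stays
strictly above `M` and above everything visited in `L` before the cut. Then every level passed on
the way out beyond `M` is also passed inwards, so the net progress beyond `M` is at most the regret
of the walk. -/
theorem progress_le_regret {c d : α → α → ℝ} {D : α → ℝ}
    (hd : ∀ u v, d u v = D u + c u v - D v) (hc : ∀ u v, 0 ≤ c u v)
    (h0 : ∀ u v, 0 ≤ d u v) (ht : ∀ u v w, d u v ≤ d u w + d w v) (n : ℕ) :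
    ∀ (L : List α) (u : α) (M : ℝ), L.length ≤ n → D u ≤ M →
      (∀ L1 L2, L = L1 ++ L2 → L2 ≠ [] → ∃ b ∈ L2, D b ≤ M ∨ ∃ a ∈ L1, D b ≤ D a) →
      D ((u :: L).getLast (List.cons_ne_nil _ _)) - M ≤ pathCost d (u :: L) := by
  induction n with
  | zero =>
    intro L u M hn hu _
    have : L = [] := List.length_eq_zero_iff.mp (by omega)
    subst this
    simp [pathCost, hu]
  | succ n ih =>
    intro L u M hn hu hL
    by_cases hne : L = []
    · subst hne
      simp [pathCost, hu]
    obtain ⟨b, hb, hbM⟩ := hL [] L rfl hne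
    replace hbM : D b ≤ M := by simpa using hbM
    obtain ⟨A, A', rfl⟩ := List.append_of_mem hb
    -- `M'` is the running maximum of `D` when the walk arrives at `b`.
    obtain ⟨M', hMM', hA, hcost⟩ : ∃ M', M ≤ M' ∧ (∀ a ∈ A, D a ≤ M') ∧
        M' - M ≤ pathCost d (u :: A ++ [b]) := by
      by_cases hA : ∀ a ∈ A, D a ≤ M
      · exact ⟨M, le_rfl, hA, by simpa using pathCost_nonneg h0 _⟩
      · push Not at hA
        obtain ⟨a0, ha0, hMa0⟩ := hA
        classical
        obtain ⟨a, ha, hmax⟩ := Finset.exists_max_image A.toFinset D ⟨a0, by simpa using ha0⟩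
        have ha' : a ∈ A := by simpa using ha
        have h1 := hmax a0 (by simpa using ha0)
        refine ⟨D a, by linarith, fun x hx => hmax x (by simpa using hx), ?_⟩
        have hs : [a, b].Sublist (u :: A ++ [b]) := by
          have : [a].Sublist A := List.singleton_sublist.mpr ha'
          exact (this.append (List.Sublist.refl [b])).cons u
        have h2 := pathCost_sublist h0 ht hs
        simp only [pathCost, hd a b] at h2
        have := hc a b
        linarith
    have hlen : A'.length ≤ n := by simp at hn; omega
    have key := ih A' b M' hlen (by linarith) (by
      intro L1 L2 h hne2
      obtain ⟨x, hx, hx'⟩ := hL (A ++ b :: L1) L2 (by simp [h]) hne2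
      refine ⟨x, hx, ?_⟩
      rcases hx' with hx' | ⟨a, ha, hxa⟩
      · exact Or.inl (by linarith)
      · simp only [List.mem_append, List.mem_cons] at ha
        rcases ha with ha | rfl | ha
        · exact Or.inl (hxa.trans (hA a ha))
        · exact Or.inl (by linarith)
        · exact Or.inr ⟨a, ha, hxa⟩)
    have hsplit : pathCost d (u :: (A ++ b :: A')) =
        pathCost d (u :: A ++ [b]) + pathCost d (b :: A') := by
      rw [← List.cons_append, pathCost_append_cons]
    have hlast : (u :: (A ++ b :: A')).getLast (List.cons_ne_nil _ _) =
        (b :: A').getLast (List.cons_ne_nil _ _) := by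
      rw [List.getLast_cons (by simp), List.getLast_append_of_ne_nil]
    rw [hsplit, hlast]
    linarith

/-- A path splits into consecutive blocks with strictly increasing ranges of `D`, whose total
length is at most twice the regret of the path. -/
theorem exists_blocks {c d : α → α → ℝ} {D : α → ℝ}
    (hd : ∀ u v, d u v = D u + c u v - D v) (hc : ∀ u v, 0 ≤ c u v)
    (h0 : ∀ u v, 0 ≤ d u v) (ht : ∀ u v w, d u v ≤ d u w + d w v) (n : ℕ) :
    ∀ L : List α, L.length ≤ n → ∃ bs : List (List α), bs.flatten = L ∧
      bs.Pairwise (fun B B' => ∀ a ∈ B, ∀ b ∈ B', D a < D b) ∧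
      (bs.map (pathCost c)).sum ≤ 2 * pathCost d L := by
  induction n with
  | zero =>
    intro L hn
    have : L = [] := List.length_eq_zero_iff.mp (by omega)
    subst this
    exact ⟨[], by simp [pathCost]⟩
  | succ n ih =>
    intro L hn
    by_cases hs : ∃ L1 L2, L = L1 ++ L2 ∧ L1 ≠ [] ∧ L2 ≠ [] ∧ ∀ a ∈ L1, ∀ b ∈ L2, D a < D b
    · obtain ⟨L1, L2, rfl, h1, h2, hlt⟩ := hs
      have hl1 := List.length_pos_iff.mpr h1
      have hl2 := List.length_pos_iff.mpr h2
      simp only [List.length_append] at hn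
      obtain ⟨b1, hf1, hp1, hc1⟩ := ih L1 (by omega)
      obtain ⟨b2, hf2, hp2, hc2⟩ := ih L2 (by omega)
      refine ⟨b1 ++ b2, by simp [hf1, hf2], ?_, ?_⟩
      · rw [List.pairwise_append]
        refine ⟨hp1, hp2, fun B hB B' hB' a ha b hb => hlt a ?_ b ?_⟩
        · rw [← hf1]; exact List.mem_flatten.mpr ⟨B, hB, ha⟩
        · rw [← hf2]; exact List.mem_flatten.mpr ⟨B', hB', hb⟩
      · have := pathCost_append_le h0 L1 L2
        simp only [List.map_append, List.sum_append]
        linarith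
    · cases L with
      | nil => exact ⟨[], by simp [pathCost]⟩
      | cons u L =>
        refine ⟨[u :: L], by simp, by simp, ?_⟩
        have h1 := progress_le_regret hd hc h0 ht L.length L u (D u) le_rfl le_rfl (by
          intro L1 L2 h hne
          by_contra hcon
          push Not at hcon
          refine hs ⟨u :: L1, L2, by simp [h], by simp, hne, fun a ha b hb => ?_⟩
          have h3 := hcon b hb
          rcases List.mem_cons.mp ha with rfl | ha
          · exact h3.1
          · exact h3.2 a ha)
        have h2 := pathCost_regret hd L u
        simp only [List.map_cons, List.map_nil, List.sum_cons, List.sum_nil]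
        linarith

end Blocks

/-! ### Clustering by moat growing -/

section Clusters

open scoped Classical

/-- Cost of a list of nodes traversed as a closed walk, returning to its first node. -/
def closedCost {α : Type*} (d : α → α → ℝ) : List α → ℝ
  | [] => 0
  | a :: M => pathCost d (a :: M ++ [a])

theorem closedCost_rotate {α : Type*} (d : α → α → ℝ) {T : List α} {u : α} (h : u ∈ T) :
    ∃ M, (∀ x, x ∈ u :: M ↔ x ∈ T) ∧ closedCost d T = pathCost d (u :: M ++ [u]) := by
  obtain ⟨A, B, rfl⟩ := List.append_of_mem h
  cases A with
  | nil => exact ⟨B, by simp, rfl⟩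
  | cons a A =>
    refine ⟨B ++ a :: A, fun x => by simp only [List.mem_cons, List.mem_append]; tauto, ?_⟩
    have h1 := pathCost_append_cons d (a :: A) u (B ++ [a])
    have h2 := pathCost_append_cons d (u :: B) a (A ++ [u])
    simp only [closedCost, List.cons_append, List.append_assoc] at h1 h2 ⊢
    rw [h1, h2]; ring

/-- A walk that meets both `p` and its complement has an edge on which `p` changes. -/
theorem one_le_crossings {α : Type*} (p : α → Prop) {L : List α} {u v : α} (hu : u ∈ L)
    (hv : v ∈ L) (hpu : ¬ p u) (hpv : p v) :
    1 ≤ pathCost (fun a b => if (p a ↔ p b) then (0 : ℝ) else 1) L := by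
  have key : ∀ (l : List α) (a : α),
      pathCost (fun a b => if (p a ↔ p b) then (0 : ℝ) else 1) (a :: l) < 1 →
      ∀ z ∈ a :: l, (p z ↔ p a) := by
    intro l
    induction l with
    | nil => intro a _ z hz; simp at hz; simp [hz]
    | cons b l ih =>
      intro a hlt z hz
      simp only [pathCost] at hlt
      have hn : 0 ≤ pathCost (fun a b => if (p a ↔ p b) then (0 : ℝ) else 1) (b :: l) :=
        pathCost_nonneg (fun a b => by split_ifs <;> norm_num) _
      by_cases hab : p a ↔ p b
      · rw [if_pos hab] at hlt
        rcases List.mem_cons.mp hz with rfl | hz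
        · rfl
        · rw [ih b (by linarith) z hz, hab]
      · rw [if_neg hab] at hlt; linarith
  by_contra hlt
  push Not at hlt
  cases L with
  | nil => simp at hu
  | cons a l => exact hpu (((key l a hlt u hu).trans (key l a hlt v hv).symm).mpr hpv)

variable {α β : Type} [Fintype α] [Fintype β]

/-- The weight of those blocks through `v` that stay inside the cluster labelled `a`. -/
noncomputable def innerWeight (B : β → List α) (x : β → ℝ) (cl : α → α) (a v : α) : ℝ :=
  ∑ b, if v ∈ B b ∧ ∀ u ∈ B b, cl u = a then x b else 0

/-- The clusters of a labelling `cl` of `U` are its fibres. A nonempty cluster is active as long as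
no node in it serves as a witness, i.e. is covered to extent `1/2` by blocks inside the cluster. -/
def Active (U : Finset α) (B : β → List α) (x : β → ℝ) (cl : α → α) (a : α) : Prop :=
  (∃ v ∈ U, cl v = a) ∧ ∀ v ∈ U, cl v = a → innerWeight B x cl a v < 1 / 2

/-- Indicator of the edges that leave some active cluster. -/
noncomputable def crossing (U : Finset α) (B : β → List α) (x : β → ℝ) (cl : α → α)
    (u v : α) : ℝ :=
  if cl u ≠ cl v ∧ (Active U B x cl (cl u) ∨ Active U B x cl (cl v)) then 1 else 0

variable {U : Finset α} {B : β → List α} {x : β → ℝ}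

/-- Each active cluster is left by blocks of total weight at least `1/2`, and an edge leaves at most
two clusters. -/
theorem card_active_le (hx : ∀ b, 0 ≤ x b)
    (hcov : ∀ v ∈ U, 1 ≤ ∑ b, if v ∈ B b then x b else 0) (cl : α → α) :
    ((Finset.univ.filter (Active U B x cl)).card : ℝ) ≤
      4 * ∑ b, x b * pathCost (crossing U B x cl) (B b) := by
  set act := Finset.univ.filter (Active U B x cl) with hact
  let h1 : α → α → α → ℝ := fun a u v => if (cl u = a ↔ cl v = a) then 0 else 1
  have h1nn : ∀ a u v, 0 ≤ h1 a u v := fun a u v => by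
    simp only [h1]; split_ifs <;> norm_num
  have hhalf : ∀ a ∈ act, 1 / 2 ≤ ∑ b, x b * pathCost (h1 a) (B b) := by
    intro a ha
    obtain ⟨⟨v, hv, hva⟩, hbad⟩ := (Finset.mem_filter.mp ha).2
    have h2 := hcov v hv
    have h3 := hbad v hv hva
    have h4 : (∑ b, if v ∈ B b then x b else 0) ≤
        innerWeight B x cl a v + ∑ b, x b * pathCost (h1 a) (B b) := by
      rw [innerWeight, ← Finset.sum_add_distrib]
      refine Finset.sum_le_sum fun b _ => ?_
      have hnn : 0 ≤ x b * pathCost (h1 a) (B b) :=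
        mul_nonneg (hx b) (pathCost_nonneg (h1nn a) _)
      by_cases hvb : v ∈ B b
      · by_cases hin : ∀ u ∈ B b, cl u = a
        · rw [if_pos hvb, if_pos ⟨hvb, hin⟩]; linarith
        · rw [if_pos hvb, if_neg (by tauto), zero_add]
          push Not at hin
          obtain ⟨u, hu, hua⟩ := hin
          have := one_le_crossings (fun z => cl z = a) hu hvb hua hva
          exact le_mul_of_one_le_right (hx b) this
      · rw [if_neg hvb, if_neg (by tauto)]; linarith
    linarith
  have hpt : ∀ u v, ∑ a ∈ act, h1 a u v ≤ 2 * crossing U B x cl u v := by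
    intro u v
    by_cases huv : cl u = cl v
    · have : ∀ a, h1 a u v = 0 := fun a => by simp [h1, huv]
      have h5 : 0 ≤ crossing U B x cl u v := by unfold crossing; split_ifs <;> norm_num
      simp only [this, Finset.sum_const_zero]; linarith
    · by_cases hA : Active U B x cl (cl u) ∨ Active U B x cl (cl v)
      · have h6 : crossing U B x cl u v = 1 := if_pos ⟨huv, hA⟩
        rw [h6]
        calc ∑ a ∈ act, h1 a u v
            ≤ ∑ a, ((if cl u = a then (1 : ℝ) else 0) + if cl v = a then (1 : ℝ) else 0) := by
              refine (Finset.sum_le_univ_sum_of_nonneg (fun a => h1nn a u v)).trans ?_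
              refine Finset.sum_le_sum fun a _ => ?_
              by_cases e1 : cl u = a <;> by_cases e2 : cl v = a <;> simp [h1, e1, e2]
          _ = 2 * 1 := by
              rw [Finset.sum_add_distrib, Finset.sum_ite_eq, Finset.sum_ite_eq]
              simp; norm_num
      · push Not at hA
        have h6 : crossing U B x cl u v = 0 := if_neg (by tauto)
        rw [h6, mul_zero]
        refine le_of_eq (Finset.sum_eq_zero fun a ha => ?_)
        have haA := (Finset.mem_filter.mp ha).2
        have e1 : cl u ≠ a := fun h => hA.1 (h ▸ haA)
        have e2 : cl v ≠ a := fun h => hA.2 (h ▸ haA)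
        simp [h1, e1, e2]
  calc (act.card : ℝ) = 2 * ∑ a ∈ act, (1 / 2 : ℝ) := by
        rw [Finset.sum_const, nsmul_eq_mul]; ring
    _ ≤ 2 * ∑ a ∈ act, ∑ b, x b * pathCost (h1 a) (B b) := by
        have := Finset.sum_le_sum hhalf; linarith
    _ = 2 * ∑ b, x b * pathCost (fun u v => ∑ a ∈ act, h1 a u v) (B b) := by
        rw [Finset.sum_comm]
        simp only [pathCost_sum, Finset.mul_sum]
    _ ≤ 2 * ∑ b, x b * pathCost (fun u v => 2 * crossing U B x cl u v) (B b) := by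
        refine mul_le_mul_of_nonneg_left (Finset.sum_le_sum fun b _ => ?_) (by norm_num)
        exact mul_le_mul_of_nonneg_left (pathCost_mono _ fun u _ v _ => hpt u v) (hx b)
    _ = 4 * ∑ b, x b * pathCost (crossing U B x cl) (B b) := by
        simp only [pathCost_smul, Finset.mul_sum]
        refine Finset.sum_congr rfl fun b _ => by ring

/-- Moat growing at time `t`: all active clusters are at distance at least `t` from the rest. The
cost of the remaining merges is bounded by the moats still to grow; growing them up to the time of
the next merge does not increase that bound because of `card_active_le`. -/
theorem exists_clusters_aux {c d : α → α → ℝ} (hsymm : ∀ u v, c u v = c v u)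
    (hc : ∀ u v, 0 ≤ c u v)
    (hdc : ∀ u v, d u v + d v u ≤ 2 * c u v) (hx : ∀ b, 0 ≤ x b)
    (hBU : ∀ b, ∀ v ∈ B b, v ∈ U)
    (hcov : ∀ v ∈ U, 1 ≤ ∑ b, if v ∈ B b then x b else 0) (n : ℕ) :
    ∀ (cl : α → α) (T : α → List α) (t : ℝ),
      (Finset.univ.filter (Active U B x cl)).card ≤ n →
      (∀ u ∈ U, ∀ v ∈ U, cl u ≠ cl v → Active U B x cl (cl u) → t ≤ c u v) →
      (∀ v ∈ U, v ∈ T (cl v)) → (∀ a, ∀ v ∈ T a, v ∈ U) →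
      ∃ (cl' : α → α) (T' : α → List α), (∀ a, ¬ Active U B x cl' a) ∧
        (∀ v ∈ U, v ∈ T' (cl' v)) ∧ (∀ a, ∀ v ∈ T' a, v ∈ U) ∧
        ∑ a, closedCost d (T' a) ≤ ∑ a, closedCost d (T a) +
          2 * (t * (Finset.univ.filter (Active U B x cl)).card + 4 * ∑ b, x b *
            pathCost (fun u v => crossing U B x cl u v * (c u v - t)) (B b)) := by
  induction n with
  | zero =>
    intro cl T t hcard ht hT hTU
    have hemp : Finset.univ.filter (Active U B x cl) = ∅ :=
      Finset.card_eq_zero.mp (Nat.le_zero.mp hcard)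
    have hno : ∀ a, ¬ Active U B x cl a := fun a ha => by
      have : a ∈ Finset.univ.filter (Active U B x cl) := by simp [ha]
      rw [hemp] at this; simp at this
    refine ⟨cl, T, hno, hT, hTU, ?_⟩
    have h0 : ∀ u v, crossing U B x cl u v = 0 := fun u v => if_neg (by simp [hno])
    simp [hemp, h0, pathCost_zero]
  | succ n ih =>
    intro cl T t hcard ht hT hTU
    by_cases hno : ∀ a, ¬ Active U B x cl a
    · refine ⟨cl, T, hno, hT, hTU, ?_⟩
      have h0 : ∀ u v, crossing U B x cl u v = 0 := fun u v => if_neg (by simp [hno])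
      simp [h0, pathCost_zero, hno]
    push Not at hno
    obtain ⟨a, ha⟩ := hno
    -- A closest pair consisting of a node of an active cluster and a node outside that cluster.
    obtain ⟨u, v, hu, hv, huv, hAu, hmin⟩ : ∃ u v, u ∈ U ∧ v ∈ U ∧ cl u ≠ cl v ∧
        Active U B x cl (cl u) ∧
        ∀ w ∈ U, ∀ z ∈ U, cl w ≠ cl z → Active U B x cl (cl w) → c u v ≤ c w z := by
      let S : Finset (α × α) := Finset.univ.filter fun p =>
        p.1 ∈ U ∧ p.2 ∈ U ∧ cl p.1 ≠ cl p.2 ∧ Active U B x cl (cl p.1)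
      have hS : S.Nonempty := by
        obtain ⟨⟨w, hw, hwa⟩, hbad⟩ := ha
        by_contra hemp
        have hall : ∀ z ∈ U, cl z = a := by
          intro z hz
          by_contra hza
          refine hemp ⟨(w, z), ?_⟩
          simp only [S, Finset.mem_filter, Finset.mem_univ, true_and]
          refine ⟨hw, hz, by rw [hwa]; exact fun h => hza h.symm, ?_⟩
          rw [hwa]; exact ⟨⟨w, hw, hwa⟩, hbad⟩
        have h1 := hbad w hw hwa
        have h2 := hcov w hw
        have h3 : innerWeight B x cl a w = ∑ b, if w ∈ B b then x b else 0 := by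
          refine Finset.sum_congr rfl fun b _ => ?_
          have : ∀ z ∈ B b, cl z = a := fun z hz => hall z (hBU b z hz)
          by_cases hwb : w ∈ B b
          · rw [if_pos hwb, if_pos ⟨hwb, this⟩]
          · rw [if_neg hwb, if_neg (fun h => hwb h.1)]
        linarith
      obtain ⟨⟨u, v⟩, hmem, hmin⟩ := Finset.exists_min_image S (fun p => c p.1 p.2) hS
      simp only [S, Finset.mem_filter, Finset.mem_univ, true_and] at hmem
      refine ⟨u, v, hmem.1, hmem.2.1, hmem.2.2.1, hmem.2.2.2, fun w hw z hz h1 h2 => ?_⟩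
      exact hmin (w, z) (by
        simp only [S, Finset.mem_filter, Finset.mem_univ, true_and]; exact ⟨hw, hz, h1, h2⟩)
    have htt : t ≤ c u v := ht u hu v hv huv hAu
    set p := cl u with hp
    set q := cl v with hq
    set s := c u v with hs
    let cl' : α → α := fun w => if cl w = p then q else cl w
    obtain ⟨M, hM, hMc⟩ := closedCost_rotate d (hT u hu)
    obtain ⟨N, hN, hNc⟩ := closedCost_rotate d (hT v hv)
    rw [← hp] at hM hMc
    rw [← hq] at hN hNc
    let T' : α → List α := fun a => if a = p then [] else
      if a = q then (u :: M ++ [u]) ++ (v :: N ++ [v]) else T a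
    have hcl'q : ∀ w, cl w = q → cl' w = q := fun w h => by
      simp only [cl', h]; split_ifs <;> rfl
    have hactq : Active U B x cl' q → Active U B x cl q := by
      rintro ⟨_, hbad⟩
      refine ⟨⟨v, hv, rfl⟩, fun w hw hwq => lt_of_le_of_lt ?_ (hbad w hw (hcl'q w hwq))⟩
      refine Finset.sum_le_sum fun b _ => ?_
      by_cases hb : w ∈ B b ∧ ∀ z ∈ B b, cl z = q
      · rw [if_pos hb, if_pos ⟨hb.1, fun z hz => hcl'q z (hb.2 z hz)⟩]
      · rw [if_neg hb]; split_ifs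
        · exact hx b
        · exact le_rfl
    have hact : ∀ e, Active U B x cl' e → e ≠ p ∧ Active U B x cl e := by
      intro e he
      have hep : e ≠ p := by
        rintro rfl
        obtain ⟨⟨w, _, hwp⟩, _⟩ := he
        simp only [cl'] at hwp
        split_ifs at hwp with h
        · exact huv hwp.symm
        · exact h hwp
      refine ⟨hep, ?_⟩
      by_cases heq : e = q
      · rw [heq] at he ⊢; exact hactq he
      have hiff : ∀ w, cl' w = e ↔ cl w = e := by
        intro w
        simp only [cl']
        split_ifs with h
        · exact ⟨fun h' => absurd h'.symm heq, fun h' => absurd (h'.symm.trans h) hep⟩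
        · rfl
      simpa only [Active, innerWeight, hiff] using he
    have hact' : ∀ w, Active U B x cl' (cl' w) → Active U B x cl (cl w) := by
      intro w hw
      by_cases h : cl w = p
      · rw [h]; exact hAu
      · have : cl' w = cl w := if_neg h
        rw [this] at hw
        exact (hact _ hw).2
    have hne' : ∀ w z, cl' w ≠ cl' z → cl w ≠ cl z := fun w z h h' => h (by simp [cl', h'])
    have hcard' : (Finset.univ.filter (Active U B x cl')).card + 1 ≤
        (Finset.univ.filter (Active U B x cl)).card := by
      have hpm : p ∈ Finset.univ.filter (Active U B x cl) := by simp [hAu]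
      have hsub : Finset.univ.filter (Active U B x cl') ⊆
          (Finset.univ.filter (Active U B x cl)).erase p := by
        intro e he
        have := hact e (Finset.mem_filter.mp he).2
        simp [this.1, this.2]
      have h1 := Finset.card_le_card hsub
      have h2 := Finset.card_erase_add_one hpm
      omega
    obtain ⟨cl2, T2, hA2, hT2, hTU2, hcost⟩ := ih cl' T' s (by omega)
      (fun w hw z hz h1 h2 => hmin w hw z hz (hne' w z h1) (hact' w h2))
      (by
        intro w hw
        simp only [T', cl']
        by_cases h : cl w = p
        · rw [if_pos h, if_neg (fun h' => huv h'.symm), if_pos rfl]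
          have : w ∈ u :: M := (hM w).mpr (h ▸ hT w hw)
          simp only [List.mem_append, List.cons_append, List.mem_cons] at this ⊢
          tauto
        · rw [if_neg h, if_neg h]
          by_cases h' : cl w = q
          · rw [if_pos h']
            have : w ∈ v :: N := (hN w).mpr (h' ▸ hT w hw)
            simp only [List.mem_append, List.cons_append, List.mem_cons] at this ⊢
            tauto
          · rw [if_neg h']; exact hT w hw)
      (by
        intro e w hw
        simp only [T'] at hw
        split_ifs at hw with h1 h2
        · simp at hw
        · have h3 := fun h => hTU p w ((hM w).mp h)
          have h4 := fun h => hTU q w ((hN w).mp h)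
          simp only [List.mem_append, List.cons_append, List.mem_cons, List.not_mem_nil,
            or_false] at hw h3 h4
          tauto
        · exact hTU e w hw)
    refine ⟨cl2, T2, hA2, hT2, hTU2, hcost.trans ?_⟩
    have hTsum : ∑ e, closedCost d (T' e) ≤ ∑ e, closedCost d (T e) + 2 * s := by
      have h1 : closedCost d ((u :: M ++ [u]) ++ (v :: N ++ [v])) ≤
          closedCost d (T p) + closedCost d (T q) + 2 * s := by
        rw [hMc, hNc]
        have e1 : closedCost d ((u :: M ++ [u]) ++ (v :: N ++ [v])) =
            pathCost d ((u :: M) ++ u :: v :: (N ++ v :: [u])) := by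
          simp [closedCost]
        have e2 := pathCost_append_cons d (v :: N) v [u]
        rw [e1, pathCost_append_cons]
        simp only [List.cons_append, pathCost] at e2 ⊢
        rw [e2]
        have := hdc u v
        linarith
      have h2 : ∀ e, closedCost d (T' e) ≤ closedCost d (T e) +
          (if q = e then closedCost d (T p) + 2 * s else 0) -
          (if p = e then closedCost d (T p) else 0) := by
        intro e
        by_cases hep : e = p
        · have : T' e = [] := if_pos hep
          rw [this, if_neg (by rw [hep]; exact fun h => huv h.symm), if_pos hep.symm, hep]
          simp [closedCost]
        · by_cases heq : e = q
          · have : T' e = (u :: M ++ [u]) ++ (v :: N ++ [v]) := by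
              simp only [T', if_neg hep, if_pos heq]
            rw [this, if_pos heq.symm, if_neg (fun h => hep h.symm), heq]
            linarith
          · have : T' e = T e := by simp only [T', if_neg hep, if_neg heq]
            rw [this, if_neg (fun h => heq h.symm), if_neg (fun h => hep h.symm)]
            linarith
      have h3 := Finset.sum_le_sum fun e (_ : e ∈ Finset.univ) => h2 e
      rw [Finset.sum_sub_distrib, Finset.sum_add_distrib, Finset.sum_ite_eq,
        Finset.sum_ite_eq] at h3
      simp only [Finset.mem_univ, if_true] at h3
      linarith
    have hg : ∑ b, x b * pathCost (fun w z => crossing U B x cl' w z * (c w z - s)) (B b) ≤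
        ∑ b, x b * pathCost (fun w z => crossing U B x cl w z * (c w z - s)) (B b) := by
      refine Finset.sum_le_sum fun b _ => mul_le_mul_of_nonneg_left ?_ (hx b)
      refine pathCost_mono _ fun w hw z hz => ?_
      have hnn : 0 ≤ crossing U B x cl w z * (c w z - s) := by
        unfold crossing
        split_ifs with h
        · rcases h with ⟨h1, h2 | h2⟩
          · have := hmin w (hBU b w hw) z (hBU b z hz) h1 h2; linarith
          · have := hmin z (hBU b z hz) w (hBU b w hw) (Ne.symm h1) h2
            rw [hsymm z w] at this; linarith
        · simp
      by_cases h : cl' w ≠ cl' z ∧ (Active U B x cl' (cl' w) ∨ Active U B x cl' (cl' z))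
      · have e1 : crossing U B x cl' w z = 1 := if_pos h
        have e2 : crossing U B x cl w z = 1 :=
          if_pos ⟨hne' w z h.1, h.2.imp (hact' w) (hact' z)⟩
        rw [e1, e2]
      · have e1 : crossing U B x cl' w z = 0 := if_neg h
        rw [e1, zero_mul]; exact hnn
    have hgrow : ∑ b, x b * pathCost (fun w z => crossing U B x cl w z * (c w z - t)) (B b) =
        ∑ b, x b * pathCost (fun w z => crossing U B x cl w z * (c w z - s)) (B b) +
        (s - t) * ∑ b, x b * pathCost (crossing U B x cl) (B b) := by
      rw [Finset.mul_sum, ← Finset.sum_add_distrib]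
      refine Finset.sum_congr rfl fun b _ => ?_
      have : (fun w z => crossing U B x cl w z * (c w z - t)) =
          fun w z => crossing U B x cl w z * (c w z - s) + (s - t) * crossing U B x cl w z := by
        funext w z; ring
      rw [this, pathCost_add, pathCost_smul]; ring
    have hA := mul_le_mul_of_nonneg_left (card_active_le hx hcov cl) (sub_nonneg.mpr htt)
    rw [hgrow]
    have hc2 : ((Finset.univ.filter (Active U B x cl')).card : ℝ) + 1 ≤
        (Finset.univ.filter (Active U B x cl)).card := by exact_mod_cast hcard'
    have := mul_le_mul_of_nonneg_left hc2 (hc u v)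
    linarith

/-- Clustering with witnesses: the nodes are covered by clusters carrying closed tours of total cost
at most `8` times the fractional length of the blocks, such that each cluster contains a node
covered to extent `1/2` by blocks inside the cluster. -/
theorem exists_clusters {c d : α → α → ℝ} (hsymm : ∀ u v, c u v = c v u)
    (hc : ∀ u v, 0 ≤ c u v)
    (hdc : ∀ u v, d u v + d v u ≤ 2 * c u v) (hx : ∀ b, 0 ≤ x b)
    (hd0 : ∀ u, d u u = 0)
    (hBU : ∀ b, ∀ v ∈ B b, v ∈ U)
    (hcov : ∀ v ∈ U, 1 ≤ ∑ b, if v ∈ B b then x b else 0) :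
    ∃ (cl : α → α) (T : α → List α),
        (∀ v ∈ U, ∃ w ∈ U, cl w = cl v ∧ 1 / 2 ≤ innerWeight B x cl (cl v) w) ∧
        (∀ v ∈ U, v ∈ T (cl v)) ∧ (∀ a, ∀ v ∈ T a, v ∈ U) ∧
        ∑ a, closedCost d (T a) ≤ 8 * ∑ b, x b * pathCost c (B b) := by
  obtain ⟨cl, T, h1, h2, h3, h4⟩ := exists_clusters_aux hsymm hc hdc hx hBU hcov _ id
    (fun v => if v ∈ U then [v] else []) 0 le_rfl (fun u _ v _ _ _ => hc u v)
    (by intro v hv; simp [hv]) (by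
      intro a v hv
      by_cases ha : a ∈ U
      · simp only [ha, if_true, List.mem_singleton] at hv; rw [hv]; exact ha
      · simp [ha] at hv)
  refine ⟨cl, T, ?_, h2, h3, ?_⟩
  · intro v hv
    by_contra hcon
    push Not at hcon
    exact h1 (cl v) ⟨⟨v, hv, rfl⟩, hcon⟩
  · have e1 : ∑ a, closedCost d (if a ∈ U then [a] else []) = 0 := by
      refine Finset.sum_eq_zero fun a _ => ?_
      split_ifs <;> simp [closedCost, pathCost, hd0]
    have e2 : ∑ b, x b * pathCost (fun u v => crossing U B x id u v * (c u v - 0)) (B b) ≤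
        ∑ b, x b * pathCost c (B b) := by
      refine Finset.sum_le_sum fun b _ => mul_le_mul_of_nonneg_left ?_ (hx b)
      refine pathCost_mono _ fun u _ v _ => ?_
      have := hc u v
      unfold crossing
      split_ifs <;> simp [this]
    rw [e1] at h4
    linarith

end Clusters

/-! ### Linking nodes into paths, trimming fractional covers -/

section Linking

open scoped Classical

variable {α : Type}

/-- An injective, `D`-increasing choice of predecessors, where each predecessor is a node or one of
`K` starting slots, links the nodes into `K` paths. -/
theorem exists_paths_of_pred {K : ℕ} {D : α → ℝ} {d : α → α → ℝ} (p : α → α ⊕ Fin K)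
    (W : Finset α) :
    (∀ w ∈ W, ∀ u, p w = Sum.inl u → u ∈ W ∧ D u < D w) →
    (∀ w ∈ W, ∀ w' ∈ W, p w = p w' → w = w') →
    ∃ Q : Fin K → List α, (∀ w ∈ W, ∃ j, w ∈ Q j) ∧ (∀ j, ∀ w ∈ Q j, w ∈ W) ∧
      ∑ j, pathCost d (Q j) = ∑ w ∈ W, Sum.elim (fun u => d u w) (fun _ => 0) (p w) ∧
      (∀ f : α → ℝ, ∑ j, ((Q j).map f).sum = ∑ w ∈ W, f w) ∧
      (∀ u ∈ W, (∀ w ∈ W, p w ≠ Sum.inl u) → ∃ j A, Q j = A ++ [u]) ∧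
      (∀ j, (∀ w ∈ W, p w ≠ Sum.inr j) → Q j = []) := by
  induction W using Finset.induction_on_max_value D with
  | empty => intro _ _; exact ⟨fun _ => [], by simp [pathCost]⟩
  | insert a s ha hmax ih =>
    intro hp hinj
    obtain ⟨Q, hQ1, hQ2, hQ3, hQ4, hQ5, hQ6⟩ := ih
      (fun w hw u hu => by
        obtain ⟨h1, h2⟩ := hp w (Finset.mem_insert_of_mem hw) u hu
        refine ⟨(Finset.mem_insert.mp h1).resolve_left ?_, h2⟩
        rintro rfl
        exact absurd (hmax w hw) (not_le.mpr h2))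
      (fun w hw w' hw' h => hinj w (Finset.mem_insert_of_mem hw) w'
        (Finset.mem_insert_of_mem hw') h)
    have hfresh : ∀ w ∈ s, p w ≠ p a := fun w hw h => ha
      (hinj w (Finset.mem_insert_of_mem hw) a (Finset.mem_insert_self _ _) h ▸ hw)
    -- The path to be extended by `a`.
    obtain ⟨j, hj1, hj2, hj3⟩ : ∃ j, pathCost d (Q j ++ [a]) = pathCost d (Q j) +
        Sum.elim (fun u => d u a) (fun _ => 0) (p a) ∧
        (∀ A' u', Q j = A' ++ [u'] → p a = Sum.inl u') ∧
        (∃ w ∈ insert a s, p w = Sum.inr j) := by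
      cases hpa : p a with
      | inl u =>
        obtain ⟨h1, h2⟩ := hp a (Finset.mem_insert_self _ _) u hpa
        have hus : u ∈ s := (Finset.mem_insert.mp h1).resolve_left (by
          rintro rfl; exact lt_irrefl _ h2)
        obtain ⟨j, A, hA⟩ := hQ5 u hus (fun w hw => hpa ▸ hfresh w hw)
        refine ⟨j, ?_, ?_, ?_⟩
        · rw [hA, List.append_assoc, List.singleton_append, pathCost_append_cons]
          simp [pathCost]
        · intro A' u' h
          rw [hA] at h
          have := List.append_inj_right' h rfl
          simp at this
          rw [this]
        · by_contra hcon
          push Not at hcon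
          have := hQ6 j fun w hw => hcon w (Finset.mem_insert_of_mem hw)
          rw [hA] at this; simp at this
      | inr j =>
        have h := hQ6 j (fun w hw => hpa ▸ hfresh w hw)
        refine ⟨j, ?_, ?_, a, Finset.mem_insert_self _ _, hpa⟩
        · simp [h, pathCost]
        · intro A' u' h'; rw [h] at h'; simp at h'
    let Q' : Fin K → List α := fun i => if j = i then Q i ++ [a] else Q i
    have hQ'j : Q' j = Q j ++ [a] := if_pos rfl
    have hQ'n : ∀ i, j ≠ i → Q' i = Q i := fun i h => if_neg h
    have hsub : ∀ i, ∀ w ∈ Q i, w ∈ Q' i := by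
      intro i w hw
      simp only [Q']; split_ifs <;> simp [hw]
    refine ⟨Q', ?_, ?_, ?_, ?_, ?_, ?_⟩
    · intro w hw
      rcases Finset.mem_insert.mp hw with rfl | hw
      · exact ⟨j, by simp [hQ'j]⟩
      · obtain ⟨i, hi⟩ := hQ1 w hw
        exact ⟨i, hsub i w hi⟩
    · intro i w hw
      by_cases h : j = i
      · subst h
        rw [hQ'j] at hw
        rcases List.mem_append.mp hw with hw | hw
        · exact Finset.mem_insert_of_mem (hQ2 _ w hw)
        · simp at hw; rw [hw]; exact Finset.mem_insert_self _ _
      · rw [hQ'n i h] at hw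
        exact Finset.mem_insert_of_mem (hQ2 _ w hw)
    · have : ∀ i, pathCost d (Q' i) = pathCost d (Q i) +
          if j = i then Sum.elim (fun u => d u a) (fun _ => 0) (p a) else 0 := by
        intro i
        by_cases h : j = i
        · subst h; rw [hQ'j, hj1, if_pos rfl]
        · rw [hQ'n i h, if_neg h, add_zero]
      simp only [this, Finset.sum_add_distrib, Finset.sum_ite_eq, Finset.mem_univ, if_true, hQ3,
        Finset.sum_insert ha]
      ring
    · intro f
      have : ∀ i, ((Q' i).map f).sum = ((Q i).map f).sum + if j = i then f a else 0 := by
        intro i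
        by_cases h : j = i
        · subst h; rw [hQ'j, if_pos rfl]; simp
        · rw [hQ'n i h, if_neg h, add_zero]
      simp only [this, Finset.sum_add_distrib, Finset.sum_ite_eq, Finset.mem_univ, if_true, hQ4,
        Finset.sum_insert ha]
      ring
    · intro u hu hun
      rcases Finset.mem_insert.mp hu with rfl | hu
      · exact ⟨j, Q j, hQ'j⟩
      · obtain ⟨i, A, hi⟩ := hQ5 u hu fun w hw => hun w (Finset.mem_insert_of_mem hw)
        have hne : j ≠ i := by
          rintro rfl
          exact hun a (Finset.mem_insert_self _ _) (hj2 A u hi)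
        exact ⟨i, A, by rw [hQ'n i hne, hi]⟩
    · intro i hi
      have hne : j ≠ i := by
        rintro rfl
        obtain ⟨w, hw, h⟩ := hj3
        exact hi w hw h
      rw [hQ'n i hne]
      exact hQ6 i fun w hw => hi w (Finset.mem_insert_of_mem hw)

/-- A fractional cover by paths can be trimmed so that every node is covered exactly once: remove
each over-covered node from the appropriate fraction of the paths through it. -/
theorem exists_exact_cover {D : α → ℝ} {d : α → α → ℝ} (h0 : ∀ u v, 0 ≤ d u v)
    (ht : ∀ u v w, d u v ≤ d u w + d w v) (W : Finset α) {ι : Type} [Fintype ι]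
    (P : ι → List α) (x : ι → ℝ) (hx : ∀ i, 0 ≤ x i)
    (hP : ∀ i, (P i).Pairwise (fun u v => D u < D v)) (hPW : ∀ i, ∀ v ∈ P i, v ∈ W)
    (hcov : ∀ w ∈ W, 1 ≤ ∑ i, if w ∈ P i then x i else 0) (S : Finset α) :
    S ⊆ W → ∃ (κ : Type) (_ : Fintype κ) (P' : κ → List α) (x' : κ → ℝ), (∀ i, 0 ≤ x' i) ∧
      (∀ i, (P' i).Pairwise (fun u v => D u < D v)) ∧ (∀ i, ∀ v ∈ P' i, v ∈ W) ∧
      (∑ i, x' i = ∑ i, x i) ∧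
      (∑ i, x' i * pathCost d (P' i) ≤ ∑ i, x i * pathCost d (P i)) ∧
      (∀ w ∈ S, (∑ i, if w ∈ P' i then x' i else 0) = 1) ∧
      (∀ w ∈ W, 1 ≤ ∑ i, if w ∈ P' i then x' i else 0) := by
  induction S using Finset.induction_on with
  | empty => intro _; exact ⟨ι, inferInstance, P, x, hx, hP, hPW, rfl, le_rfl, by simp, hcov⟩
  | insert a s ha ih =>
    intro hS
    obtain ⟨κ, _, P', x', h1, h2, h3, h4, h5, h6, h7⟩ :=
      ih fun w hw => hS (Finset.mem_insert_of_mem hw)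
    set cv := ∑ i, if a ∈ P' i then x' i else 0 with hcv
    have hcv1 : 1 ≤ cv := h7 a (hS (Finset.mem_insert_self _ _))
    have hl0 : 0 ≤ 1 / cv := by positivity
    have hl1 : 1 / cv ≤ 1 := by rw [div_le_one (by linarith)]; exact hcv1
    let P2 : κ ⊕ κ → List α := Sum.elim P' fun i => (P' i).filter (· ≠ a)
    let x2 : κ ⊕ κ → ℝ := Sum.elim (fun i => 1 / cv * x' i) fun i => (1 - 1 / cv) * x' i
    have hcovne : ∀ w, w ≠ a → (∑ i, if w ∈ P2 i then x2 i else 0) =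
        ∑ i, if w ∈ P' i then x' i else 0 := by
      intro w hw
      rw [Fintype.sum_sum_type, ← Finset.sum_add_distrib]
      refine Finset.sum_congr rfl fun i _ => ?_
      by_cases h : w ∈ P' i
      · have hf : w ∈ (P' i).filter (· ≠ a) := by simp [h, hw]
        rw [if_pos h, if_pos (show w ∈ P2 (Sum.inl i) from h),
          if_pos (show w ∈ P2 (Sum.inr i) from hf)]
        simp only [x2, Sum.elim_inl, Sum.elim_inr]; ring
      · have hf : w ∉ (P' i).filter (· ≠ a) := by simp [h]
        rw [if_neg h, if_neg (show w ∉ P2 (Sum.inl i) from h),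
          if_neg (show w ∉ P2 (Sum.inr i) from hf), add_zero]
    have hcova : (∑ i, if a ∈ P2 i then x2 i else 0) = 1 := by
      have e1 : (∑ i, if a ∈ P2 i then x2 i else 0) =
          1 / cv * ∑ i, if a ∈ P' i then x' i else 0 := by
        rw [Fintype.sum_sum_type, Finset.mul_sum, ← Finset.sum_add_distrib]
        refine Finset.sum_congr rfl fun i _ => ?_
        have hf : a ∉ (P' i).filter (· ≠ a) := by simp
        by_cases h : a ∈ P' i
        · rw [if_pos h, if_pos (show a ∈ P2 (Sum.inl i) from h),
            if_neg (show a ∉ P2 (Sum.inr i) from hf), add_zero]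
          simp only [x2, Sum.elim_inl]
        · rw [if_neg h, if_neg (show a ∉ P2 (Sum.inl i) from h),
            if_neg (show a ∉ P2 (Sum.inr i) from hf), add_zero, mul_zero]
      rw [e1, ← hcv, one_div, inv_mul_cancel₀ (by linarith)]
    refine ⟨κ ⊕ κ, inferInstance, P2, x2, ?_, ?_, ?_, ?_, ?_, ?_, ?_⟩
    · rintro (i | i)
      · exact mul_nonneg hl0 (h1 i)
      · exact mul_nonneg (by linarith) (h1 i)
    · rintro (i | i)
      · exact h2 i
      · exact (h2 i).filter _
    · rintro (i | i) v hv
      · exact h3 i v hv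
      · exact h3 i v (List.mem_of_mem_filter hv)
    · rw [Fintype.sum_sum_type, ← h4, ← Finset.sum_add_distrib]
      refine Finset.sum_congr rfl fun i _ => ?_
      simp only [x2, Sum.elim_inl, Sum.elim_inr]; ring
    · refine le_trans ?_ h5
      rw [Fintype.sum_sum_type, ← Finset.sum_add_distrib]
      refine Finset.sum_le_sum fun i _ => ?_
      have hle := pathCost_sublist h0 ht (List.filter_sublist (l := P' i) (p := (· ≠ a)))
      have := mul_le_mul_of_nonneg_left hle (mul_nonneg (sub_nonneg.mpr hl1) (h1 i))
      simp only [P2, x2, Sum.elim_inl, Sum.elim_inr]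
      linarith
    · intro w hw
      by_cases h : w = a
      · rw [h]; exact hcova
      · rw [hcovne w h]; exact h6 w ((Finset.mem_insert.mp hw).resolve_left h)
    · intro w hw
      by_cases h : w = a
      · rw [h]; exact hcova.ge
      · rw [hcovne w h]; exact h7 w hw

end Linking

/-! ### Integrality of acyclic path covers -/

section Birkhoff

open scoped Classical

variable {α : Type}

/-- The number of times the list traverses the arc from `u` to `w`. -/
noncomputable def arcCount (u w : α) (L : List α) : ℝ :=
  pathCost (fun a b => if a = u ∧ b = w then (1 : ℝ) else 0) L

theorem arcCount_nonneg (u w : α) (L : List α) : 0 ≤ arcCount u w L :=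
  pathCost_nonneg (fun _ _ => by split_ifs <;> norm_num) L

theorem pathCost_congr {c c' : α → α → ℝ} (L : List α)
    (h : ∀ u ∈ L, ∀ v ∈ L, c u v = c' u v) : pathCost c L = pathCost c' L :=
  le_antisymm (pathCost_mono L fun u hu v hv => (h u hu v hv).le)
    (pathCost_mono L fun u hu v hv => (h u hu v hv).ge)

theorem pathCost_snd (f : α → ℝ) (a : α) (L : List α) :
    pathCost (fun _ b => f b) (a :: L) = (L.map f).sum := by
  induction L generalizing a with
  | nil => simp [pathCost]
  | cons b L ih => simp [pathCost, ih b]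

theorem pathCost_fst_le {f : α → ℝ} (hf : ∀ a, 0 ≤ f a) (L : List α) :
    pathCost (fun a _ => f a) L ≤ (L.map f).sum := by
  induction L with
  | nil => simp [pathCost]
  | cons a L ih =>
    cases L with
    | nil => simp [pathCost, hf]
    | cons b L => simp only [pathCost, List.map_cons, List.sum_cons] at ih ⊢; linarith

theorem sum_map_indicator {L : List α} (hL : L.Nodup) (w : α) :
    (L.map fun b => if b = w then (1 : ℝ) else 0).sum = if w ∈ L then 1 else 0 := by
  induction L with
  | nil => simp
  | cons a L ih =>
    obtain ⟨h1, h2⟩ := List.nodup_cons.mp hL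
    rw [List.map_cons, List.sum_cons, ih h2]
    by_cases h : a = w
    · subst h; simp [h1]
    · simp [h, Ne.symm h]

theorem head_add_sum_arcCount {L : List α} (hL : L.Nodup) {W : Finset α} (hW : ∀ v ∈ L, v ∈ W)
    (w : α) : (if L.head? = some w then (1 : ℝ) else 0) + ∑ u ∈ W, arcCount u w L =
      if w ∈ L then 1 else 0 := by
  have h1 : ∑ u ∈ W, arcCount u w L = pathCost (fun _ b => if b = w then (1 : ℝ) else 0) L := by
    simp only [arcCount]
    rw [← pathCost_sum]
    refine pathCost_congr L fun a ha b _ => ?_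
    by_cases h : b = w
    · simp [h, hW a ha]
    · simp [h]
  rw [h1]
  cases L with
  | nil => simp [pathCost]
  | cons a L =>
    rw [pathCost_snd, ← sum_map_indicator hL w]
    simp

theorem sum_arcCount_le {L : List α} (hL : L.Nodup) {W : Finset α} (hW : ∀ v ∈ L, v ∈ W)
    (u : α) : ∑ w ∈ W, arcCount u w L ≤ if u ∈ L then 1 else 0 := by
  have h1 : ∑ w ∈ W, arcCount u w L = pathCost (fun a _ => if a = u then (1 : ℝ) else 0) L := by
    simp only [arcCount]
    rw [← pathCost_sum]
    refine pathCost_congr L fun a _ b hb => ?_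
    by_cases h : a = u
    · simp [h, hW b hb]
    · simp [h]
  rw [h1, ← sum_map_indicator hL u]
  exact pathCost_fst_le (fun a => by split_ifs <;> norm_num) L

theorem sum_arcCount_mul (c : α → α → ℝ) {L : List α} {W : Finset α} (hW : ∀ v ∈ L, v ∈ W) :
    ∑ w ∈ W, ∑ u ∈ W, arcCount u w L * c u w = pathCost c L := by
  have h1 : ∀ u w, arcCount u w L * c u w =
      pathCost (fun a b => c u w * if a = u ∧ b = w then (1 : ℝ) else 0) L := by
    intro u w
    rw [arcCount, pathCost_smul, mul_comm]
  simp only [h1]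
  have h2 : ∀ w ∈ W, ∑ u ∈ W, pathCost (fun a b => c u w * if a = u ∧ b = w then (1 : ℝ) else 0) L =
      pathCost (fun a b => ∑ u ∈ W, c u w * if a = u ∧ b = w then (1 : ℝ) else 0) L :=
    fun w _ => (pathCost_sum W _ L).symm
  rw [Finset.sum_congr rfl h2, ← pathCost_sum]
  refine pathCost_congr L fun a ha b hb => ?_
  rw [Finset.sum_eq_single b, Finset.sum_eq_single a]
  · simp
  · intro u _ hu; simp [Ne.symm hu]
  · intro h; exact absurd (hW a ha) h
  · intro w _ hw
    refine Finset.sum_eq_zero fun u _ => ?_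
    simp [Ne.symm hw]
  · intro h; exact absurd (hW b hb) h

theorem lt_of_arcCount_ne_zero {D : α → ℝ} {L : List α}
    (hL : L.Pairwise (fun u v => D u < D v)) {u w : α} (h : arcCount u w L ≠ 0) : D u < D w := by
  induction L with
  | nil => simp [arcCount, pathCost] at h
  | cons a L ih =>
    cases L with
    | nil => simp [arcCount, pathCost] at h
    | cons b L =>
      by_cases hab : a = u ∧ b = w
      · obtain ⟨rfl, rfl⟩ := hab
        exact (List.pairwise_cons.mp hL).1 b (by simp)
      · refine ih (List.pairwise_cons.mp hL).2 ?_
        simpa [arcCount, pathCost, hab] using h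

/-- Integrality of path covers in an acyclic digraph: an exact fractional cover of `W` by
`D`-increasing paths can be replaced by `K` integral paths of no larger cost, provided the total
weight is at most `K`. The cover is read as a doubly stochastic matrix of predecessor choices and
decomposed by Birkhoff's theorem. -/
theorem exists_integral_paths {D : α → ℝ} {d : α → α → ℝ} (W : Finset α) {ι : Type} [Fintype ι]
    (P : ι → List α) (x : ι → ℝ) (hx : ∀ i, 0 ≤ x i)
    (hP : ∀ i, (P i).Pairwise (fun u v => D u < D v)) (hPW : ∀ i, ∀ v ∈ P i, v ∈ W)
    (hcov : ∀ w ∈ W, (∑ i, if w ∈ P i then x i else 0) = 1)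
    (K : ℕ) (hK0 : 0 < K) (hK : ∑ i, x i ≤ K) :
    ∃ Q : Fin K → List α, (∀ w ∈ W, ∃ j, w ∈ Q j) ∧ (∀ j, ∀ w ∈ Q j, w ∈ W) ∧
      ∑ j, pathCost d (Q j) ≤ ∑ i, x i * pathCost d (P i) ∧
      (∀ f : α → ℝ, ∑ j, ((Q j).map f).sum = ∑ w ∈ W, f w) := by
  have hKp : (0 : ℝ) < K := by exact_mod_cast hK0
  have hnd : ∀ i, (P i).Nodup := fun i => (hP i).imp fun h => by rintro rfl; exact lt_irrefl _ h
  let y : α → α → ℝ := fun u w => ∑ i, x i * arcCount u w (P i)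
  let s : α → ℝ := fun w => ∑ i, x i * if (P i).head? = some w then 1 else 0
  have hy0 : ∀ u w, 0 ≤ y u w := fun u w =>
    Finset.sum_nonneg fun i _ => mul_nonneg (hx i) (arcCount_nonneg _ _ _)
  have hs0 : ∀ w, 0 ≤ s w := fun w =>
    Finset.sum_nonneg fun i _ => mul_nonneg (hx i) (by split_ifs <;> norm_num)
  have hin : ∀ w ∈ W, s w + ∑ u ∈ W, y u w = 1 := by
    intro w hw
    rw [← hcov w hw, Finset.sum_comm, ← Finset.sum_add_distrib]
    refine Finset.sum_congr rfl fun i _ => ?_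
    rw [← Finset.mul_sum, ← mul_add, head_add_sum_arcCount (hnd i) (hPW i)]
    simp
  have hout : ∀ u ∈ W, ∑ w ∈ W, y u w ≤ 1 := by
    intro u hu
    rw [← hcov u hu, Finset.sum_comm]
    refine Finset.sum_le_sum fun i _ => ?_
    rw [← Finset.mul_sum]
    refine (mul_le_mul_of_nonneg_left (sum_arcCount_le (hnd i) (hPW i) u) (hx i)).trans ?_
    simp
  have hS : ∑ w ∈ W, s w ≤ K := by
    refine le_trans ?_ hK
    rw [Finset.sum_comm]
    refine Finset.sum_le_sum fun i _ => ?_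
    rw [← Finset.mul_sum]
    refine mul_le_of_le_one_right (hx i) ?_
    cases h : (P i).head? with
    | none => simp
    | some a =>
      simp only [Option.some.injEq, Finset.sum_ite_eq]
      split_ifs <;> norm_num
  have hcost : ∑ w ∈ W, ∑ u ∈ W, y u w * d u w = ∑ i, x i * pathCost d (P i) := by
    simp only [y, Finset.sum_mul]
    have : ∀ i, x i * pathCost d (P i) = ∑ w ∈ W, ∑ u ∈ W, x i * arcCount u w (P i) * d u w := by
      intro i
      rw [← sum_arcCount_mul d (hPW i), Finset.mul_sum]
      refine Finset.sum_congr rfl fun w _ => ?_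
      rw [Finset.mul_sum]
      exact Finset.sum_congr rfl fun u _ => by ring
    simp only [this]
    rw [Finset.sum_comm (s := Finset.univ)]
    refine Finset.sum_congr rfl fun w _ => ?_
    rw [Finset.sum_comm]
  have hlt : ∀ u w, y u w ≠ 0 → D u < D w := by
    intro u w h
    obtain ⟨i, _, hi⟩ := Finset.exists_ne_zero_of_sum_ne_zero h
    exact lt_of_arcCount_ne_zero (hP i) (right_ne_zero_of_mul hi)
  let M : Matrix (W ⊕ Fin K) (W ⊕ Fin K) ℝ := fun a b => Sum.elim
    (fun u : W => Sum.elim (fun w : W => y u w) (fun _ => (1 - ∑ w ∈ W, y u w) / K) b)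
    (fun _ => Sum.elim (fun w : W => s w / K) (fun _ => (1 - (∑ w ∈ W, s w) / K) / K) b) a
  have hM : M ∈ doublyStochastic ℝ (W ⊕ Fin K) := by
    rw [mem_doublyStochastic_iff_sum]
    refine ⟨?_, ?_, ?_⟩
    · rintro (u | j) (w | j')
      · exact hy0 _ _
      · exact div_nonneg (sub_nonneg.mpr (hout u u.2)) hKp.le
      · exact div_nonneg (hs0 _) hKp.le
      · exact div_nonneg (sub_nonneg.mpr ((div_le_one hKp).mpr hS)) hKp.le
    · rintro (u | j)
      · rw [Fintype.sum_sum_type]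
        simp only [M, Sum.elim_inl, Sum.elim_inr, Finset.sum_const, Finset.card_univ,
          Fintype.card_fin, nsmul_eq_mul]
        rw [mul_div_cancel₀ _ hKp.ne', Finset.sum_coe_sort W (fun w => y u w)]
        ring
      · rw [Fintype.sum_sum_type]
        simp only [M, Sum.elim_inl, Sum.elim_inr, Finset.sum_const, Finset.card_univ,
          Fintype.card_fin, nsmul_eq_mul]
        rw [mul_div_cancel₀ _ hKp.ne', ← Finset.sum_div, Finset.sum_coe_sort W s]
        ring
    · rintro (w | j)
      · rw [Fintype.sum_sum_type]
        simp only [M, Sum.elim_inl, Sum.elim_inr, Finset.sum_const, Finset.card_univ,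
          Fintype.card_fin, nsmul_eq_mul]
        rw [mul_div_cancel₀ _ hKp.ne', Finset.sum_coe_sort W (fun u => y u w)]
        linarith [hin w w.2]
      · rw [Fintype.sum_sum_type]
        simp only [M, Sum.elim_inl, Sum.elim_inr, Finset.sum_const, Finset.card_univ,
          Fintype.card_fin, nsmul_eq_mul]
        rw [mul_div_cancel₀ _ hKp.ne', ← Finset.sum_div,
          Finset.sum_coe_sort W (fun u => 1 - ∑ w ∈ W, y u w)]
        have e1 : ∑ u ∈ W, (1 - ∑ w ∈ W, y u w) = ∑ w ∈ W, s w := by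
          rw [Finset.sum_sub_distrib, Finset.sum_comm, ← Finset.sum_sub_distrib]
          exact Finset.sum_congr rfl fun w hw => by linarith [hin w hw]
        rw [e1]; ring
  obtain ⟨wt, hwt0, hwt1, hwtM⟩ := exists_eq_sum_perm_of_mem_doublyStochastic hM
  have hent : ∀ a b, M a b = ∑ σ : Equiv.Perm (W ⊕ Fin K), wt σ * if σ a = b then 1 else 0 := by
    intro a b
    rw [← hwtM]
    simp [Matrix.sum_apply, PEquiv.toMatrix_apply, Equiv.toPEquiv_apply]
  -- Cost of the predecessor choice encoded by a permutation.
  let g : (W ⊕ Fin K) → W → ℝ := fun a w => Sum.elim (fun u : W => d u w) (fun _ => 0) a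
  let cost : Equiv.Perm (W ⊕ Fin K) → ℝ := fun σ => ∑ w : W, g (σ.symm (Sum.inl w)) w
  have havg : ∑ σ, wt σ * cost σ = ∑ i, x i * pathCost d (P i) := by
    have e1 : ∀ σ, cost σ = ∑ w : W, ∑ a, (if σ a = Sum.inl w then 1 else 0) * g a w := by
      intro σ
      refine Finset.sum_congr rfl fun w _ => ?_
      rw [Finset.sum_eq_single (σ.symm (Sum.inl w))]
      · simp
      · intro a _ ha
        rw [if_neg, zero_mul]
        rintro h
        exact ha (by rw [← h]; simp)
      · simp
    have e2 : ∑ σ, wt σ * cost σ = ∑ w : W, ∑ a, M a (Sum.inl w) * g a w := by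
      simp only [e1, Finset.mul_sum]
      rw [Finset.sum_comm]
      refine Finset.sum_congr rfl fun w _ => ?_
      rw [Finset.sum_comm]
      refine Finset.sum_congr rfl fun a _ => ?_
      rw [hent, Finset.sum_mul]
      exact Finset.sum_congr rfl fun σ _ => by ring
    rw [e2, ← hcost, ← Finset.sum_coe_sort W (fun w => ∑ u ∈ W, y u w * d u w)]
    refine Finset.sum_congr rfl fun w _ => ?_
    rw [Fintype.sum_sum_type, ← Finset.sum_coe_sort W (fun u => y u w * d u w)]
    simp [M, g]
  obtain ⟨σ, hσ0, hσ⟩ : ∃ σ, wt σ ≠ 0 ∧ cost σ ≤ ∑ i, x i * pathCost d (P i) := by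
    by_contra hcon
    push Not at hcon
    have h1 : ∑ σ, wt σ * (∑ i, x i * pathCost d (P i)) < ∑ σ, wt σ * cost σ := by
      obtain ⟨σ, _, hσ⟩ := Finset.exists_ne_zero_of_sum_ne_zero (hwt1.trans_ne one_ne_zero)
      refine Finset.sum_lt_sum (fun τ _ => ?_) ⟨σ, Finset.mem_univ _, ?_⟩
      · by_cases h : wt τ = 0
        · simp [h]
        · exact mul_le_mul_of_nonneg_left (hcon τ h).le (hwt0 τ)
      · exact mul_lt_mul_of_pos_left (hcon σ hσ) (lt_of_le_of_ne (hwt0 σ) (Ne.symm hσ))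
    rw [← Finset.sum_mul, hwt1, one_mul, havg] at h1
    exact lt_irrefl _ h1
  have hsupp : ∀ a, M a (σ a) ≠ 0 := by
    intro a h
    rw [hent] at h
    have := (Finset.sum_eq_zero_iff_of_nonneg (fun τ _ => mul_nonneg (hwt0 τ)
      (by split_ifs <;> norm_num))).mp h σ (Finset.mem_univ _)
    simp at this
    exact hσ0 this
  rcases W.eq_empty_or_nonempty with hWe | ⟨w0, hw0⟩
  · subst hWe
    refine ⟨fun _ => [], by simp, by simp, ?_, by simp⟩
    rw [← hcost]; simp [pathCost]
  let pr : W ⊕ Fin K → α ⊕ Fin K := Sum.map (fun u : W => (u : α)) id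
  have hpr : Function.Injective pr :=
    Function.Injective.sumMap Subtype.val_injective Function.injective_id
  let p : α → α ⊕ Fin K := fun w =>
    if h : w ∈ W then pr (σ.symm (Sum.inl ⟨w, h⟩)) else Sum.inr ⟨0, hK0⟩
  have hpW : ∀ w (h : w ∈ W), p w = pr (σ.symm (Sum.inl ⟨w, h⟩)) := fun w h => dif_pos h
  obtain ⟨Q, hQ1, hQ2, hQ3, hQ4, -⟩ := exists_paths_of_pred (D := D) (d := d) p W
    (by
      intro w hw u hu
      rw [hpW w hw] at hu
      cases ha : σ.symm (Sum.inl ⟨w, hw⟩) with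
      | inl u' =>
        rw [ha] at hu
        have hu' : (u' : α) = u := by simpa [pr] using hu
        subst hu'
        have h := hsupp (Sum.inl u')
        rw [← ha, Equiv.apply_symm_apply, ha] at h
        exact ⟨u'.2, hlt _ _ h⟩
      | inr j => rw [ha] at hu; simp [pr] at hu)
    (by
      intro w hw w' hw' h
      rw [hpW w hw, hpW w' hw'] at h
      simpa using σ.symm.injective (hpr h))
  refine ⟨Q, hQ1, hQ2, ?_, hQ4⟩
  rw [hQ3]
  refine le_trans (le_of_eq ?_) hσ
  rw [← Finset.sum_coe_sort W]
  refine Finset.sum_congr rfl fun w _ => ?_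
  rw [hpW w w.2]
  simp only [g]
  cases σ.symm (Sum.inl w) <;> simp [pr]

end Birkhoff

/-! ### Rounding for bounded regret -/

section Core

open scoped Classical

variable {α : Type}

/-- A maximal prefix of cost at most `R`; the arc leaving it is dropped, so the remainder is cheaper
by at least `R`. -/
theorem exists_prefix {d : α → α → ℝ} (L : List α) :
    ∀ (a : α) (R : ℝ), 0 ≤ R → ∃ A B, L = A ++ B ∧ pathCost d (a :: A) ≤ R ∧
      (B = [] ∨ pathCost d B ≤ pathCost d (a :: L) - R) := by
  induction L with
  | nil => intro a R hR; exact ⟨[], [], rfl, by simpa [pathCost] using hR, Or.inl rfl⟩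
  | cons b L ih =>
    intro a R hR
    by_cases h : d a b ≤ R
    · obtain ⟨A, B, h1, h2, h3⟩ := ih b (R - d a b) (by linarith)
      refine ⟨b :: A, B, by rw [h1]; rfl, ?_, ?_⟩
      · simp only [pathCost]; linarith
      · rcases h3 with h3 | h3
        · exact Or.inl h3
        · right; simp only [pathCost]; linarith
    · refine ⟨[], b :: L, rfl, by simpa [pathCost] using hR, Or.inr ?_⟩
      simp only [pathCost]; linarith

/-- A list of cost at most `(n + 1) R` can be cut into `n + 1` pieces of cost at most `R`. -/
theorem exists_split {d : α → α → ℝ} {R : ℝ} (hR : 0 ≤ R) (n : ℕ) :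
    ∀ L : List α, pathCost d L ≤ (n + 1) * R → ∃ S : List (List α), S.length = n + 1 ∧
      (∀ A ∈ S, pathCost d A ≤ R ∧ ∀ v ∈ A, v ∈ L) ∧ ∀ v ∈ L, ∃ A ∈ S, v ∈ A := by
  induction n with
  | zero =>
    intro L hL
    exact ⟨[L], rfl, by simpa using hL, by simp⟩
  | succ n ih =>
    intro L hL
    obtain ⟨A, B, rfl, hA, hB⟩ : ∃ A B, L = A ++ B ∧ pathCost d A ≤ R ∧
        pathCost d B ≤ (n + 1) * R := by
      have hn : 0 ≤ ((n : ℝ) + 1) * R := by positivity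
      cases L with
      | nil => exact ⟨[], [], rfl, by simpa [pathCost] using hR, by simpa [pathCost] using hn⟩
      | cons a L =>
        obtain ⟨A, B, h1, h2, h3⟩ := exists_prefix L a R hR
        refine ⟨a :: A, B, by rw [h1]; rfl, h2, ?_⟩
        rcases h3 with rfl | h3
        · simpa [pathCost] using hn
        · push_cast at hL; linarith
    obtain ⟨S, h1, h2, h3⟩ := ih B hB
    refine ⟨A :: S, by simp [h1], ?_, ?_⟩
    · intro A' hA'
      rcases List.mem_cons.mp hA' with rfl | hA'
      · exact ⟨hA, fun v hv => List.mem_append_left _ hv⟩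
      · exact ⟨(h2 A' hA').1, fun v hv => List.mem_append_right _ ((h2 A' hA').2 v hv)⟩
    · intro v hv
      rcases List.mem_append.mp hv with hv | hv
      · exact ⟨A, by simp, hv⟩
      · obtain ⟨A', h, h'⟩ := h3 v hv
        exact ⟨A', by simp [h], h'⟩

theorem pathCost_concat_le {d : α → α → ℝ} (h0 : ∀ u v, 0 ≤ d u v)
    (ht : ∀ u v w, d u v ≤ d u w + d w v) (w v : α) (A : List α) :
    pathCost d (A ++ [v]) ≤ pathCost d (A ++ [w]) + d w v := by
  induction A with
  | nil => simpa [pathCost] using h0 w v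
  | cons a A ih =>
    cases A with
    | nil => simpa [pathCost] using ht a v w
    | cons b A => simp only [List.cons_append, pathCost] at ih ⊢; linarith

/-- Replacing each node of a walk by a closed walk based at it. -/
theorem pathCost_flatMap_le {d : α → α → ℝ} (h0 : ∀ u v, 0 ≤ d u v)
    (ht : ∀ u v w, d u v ≤ d u w + d w v) (M : α → List α) (Q : List α) :
    pathCost d (Q.flatMap fun w => w :: M w) ≤
      pathCost d Q + (Q.map fun w => pathCost d (w :: M w ++ [w])).sum := by
  induction Q with
  | nil => simp [pathCost]
  | cons w Q ih =>
    cases Q with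
    | nil =>
      have := pathCost_append_le h0 (w :: M w) [w]
      simp [pathCost] at this ⊢
      exact this
    | cons q Q =>
      have e1 : ((w :: q :: Q).flatMap fun w => w :: M w) =
          (w :: M w) ++ q :: (M q ++ Q.flatMap fun w => w :: M w) := by simp
      have e2 : ((q :: Q).flatMap fun w => w :: M w) =
          q :: (M q ++ Q.flatMap fun w => w :: M w) := by simp
      rw [e2] at ih
      rw [e1, pathCost_append_cons, List.map_cons, List.sum_cons]
      have h := pathCost_concat_le h0 ht w q (w :: M w)
      simp only [pathCost] at ih h ⊢
      linarith

theorem filterMap_sublist_flatten {pick : List α → Option α}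
    (h : ∀ B v, pick B = some v → v ∈ B) (l : List (List α)) :
    (l.filterMap pick).Sublist l.flatten := by
  induction l with
  | nil => simp
  | cons B l ih =>
    rw [List.flatten_cons]
    cases hB : pick B with
    | none =>
      rw [List.filterMap_cons_none hB]
      exact ih.trans (List.sublist_append_right _ _)
    | some v =>
      rw [List.filterMap_cons_some hB]
      exact (List.singleton_sublist.mpr (h B v hB)).append ih

theorem sum_map_ite_le {β : Type} {p : β → Prop} [DecidablePred p] {t : ℝ}
    {l : List β}
    (hl : l.Pairwise fun B B' => ¬ (p B ∧ p B')) :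
    (l.map fun B => if p B then t else 0).sum ≤ if ∃ B ∈ l, p B then t else 0 := by
  induction l with
  | nil => simp
  | cons B l ih =>
    obtain ⟨h1, h2⟩ := List.pairwise_cons.mp hl
    have := ih h2
    rw [List.map_cons, List.sum_cons]
    by_cases hB : p B
    · have hn : ¬ ∃ B' ∈ l, p B' := by rintro ⟨B', h, h'⟩; exact h1 B' h ⟨hB, h'⟩
      rw [if_neg hn] at this
      rw [if_pos hB, if_pos ⟨B, by simp, hB⟩]
      linarith
    · rw [if_neg hB, zero_add]
      simpa [hB] using this

theorem le_sum_map_ite {β : Type} {p : β → Prop} [DecidablePred p] {t : ℝ} (ht : 0 ≤ t)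
    {l : List β} :
    (if ∃ B ∈ l, p B then t else 0) ≤ (l.map fun B => if p B then t else 0).sum := by
  induction l with
  | nil => simp
  | cons B l ih =>
    rw [List.map_cons, List.sum_cons]
    have h0 : (0 : ℝ) ≤ if ∃ B ∈ l, p B then t else 0 := by split_ifs <;> simp [ht]
    by_cases hB : p B
    · rw [if_pos hB, if_pos ⟨B, by simp, hB⟩]
      linarith
    · rw [if_neg hB, zero_add]
      simpa [hB] using ih

theorem closedCost_nonneg {d : α → α → ℝ} (h : ∀ u v, 0 ≤ d u v) (L : List α) :
    0 ≤ closedCost d L := by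
  cases L with
  | nil => exact le_rfl
  | cons a L => exact pathCost_nonneg h _

/-- Rounding for bounded average regret: nodes fractionally covered by paths whose average regret
is at most `2 R` can be covered by a number of lists of regret at most `R` that is linear in the
total weight. -/
theorem exists_cover_of_regret [Fintype α] {c d : α → α → ℝ} {D : α → ℝ}
    (hsymm : ∀ u v, c u v = c v u) (hc : ∀ u v, 0 ≤ c u v) (hc0 : ∀ u, c u u = 0)
    (hd : ∀ u v, d u v = D u + c u v - D v) (h0 : ∀ u v, 0 ≤ d u v)
    (ht : ∀ u v w, d u v ≤ d u w + d w v) {R : ℝ} (hR : 0 ≤ R) (U : Finset α)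
    {ι : Type} [Fintype ι] (P : ι → List α) (x : ι → ℝ) (hx : ∀ i, 0 ≤ x i)
    (hPU : ∀ i, ∀ v ∈ P i, v ∈ U)
    (hcov : ∀ v ∈ U, 1 ≤ ∑ i, if v ∈ P i then x i else 0)
    (hcost : ∑ i, x i * pathCost d (P i) ≤ 2 * R * ∑ i, x i) :
    ∃ S : List (List α), (S.length : ℝ) ≤ 38 * (∑ i, x i) + 2 ∧
      (∀ A ∈ S, pathCost d A ≤ R ∧ ∀ v ∈ A, v ∈ U) ∧ ∀ v ∈ U, ∃ A ∈ S, v ∈ A := by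
  set k := ∑ i, x i with hk
  have hk0 : 0 ≤ k := Finset.sum_nonneg fun i _ => hx i
  -- All blocks of all paths, indexed by the path and the position in it.
  choose bs hbs1 hbs2 hbs3 using fun i => exists_blocks hd hc h0 ht _ (P i) le_rfl
  let B : (Σ i, Fin (bs i).length) → List α := fun b => (bs b.1)[b.2]
  let xB : (Σ i, Fin (bs i).length) → ℝ := fun b => x b.1
  have hsum : ∀ f : ι → List α → ℝ,
      ∑ b : Σ i, Fin (bs i).length, f b.1 (B b) = ∑ i, ((bs i).map (f i)).sum := by
    intro f
    rw [Fintype.sum_sigma]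
    exact Finset.sum_congr rfl fun i _ => Fin.sum_univ_fun_getElem (bs i) (f i)
  have hBmem : ∀ b, B b ∈ bs b.1 := fun b => List.getElem_mem _
  have hmem : ∀ i v, v ∈ P i ↔ ∃ A ∈ bs i, v ∈ A := by
    intro i v; rw [← hbs1 i, List.mem_flatten]
  obtain ⟨cl, T, hcl1, hcl2, hcl3, hcl4⟩ := exists_clusters (c := c) (d := d) (U := U) (B := B)
    (x := xB) hsymm hc (by intro u v; rw [hd, hd, hsymm v u]; linarith) (fun b => hx _)
    (by intro u; rw [hd, hc0]; ring)
    (by intro b v hv; exact hPU b.1 v ((hmem _ _).mpr ⟨_, hBmem b, hv⟩))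
    (by
      intro v hv
      refine (hcov v hv).trans ?_
      rw [hsum fun i A => if v ∈ A then x i else 0]
      refine Finset.sum_le_sum fun i _ => ?_
      simp only [hmem]
      exact le_sum_map_ite (hx i))
  have htour : ∑ a, closedCost d (T a) ≤ 32 * R * k := by
    have h1 : ∑ b, xB b * pathCost c (B b) ≤ 2 * ∑ i, x i * pathCost d (P i) := by
      rw [hsum fun i A => x i * pathCost c A, Finset.mul_sum]
      refine Finset.sum_le_sum fun i _ => ?_
      rw [List.sum_map_mul_left]
      nlinarith [hbs3 i, hx i]
    linarith
  -- A witness node of each cluster, and the set `W` of all witnesses.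
  have hwit : ∀ a, ∃ w, (∃ v ∈ U, cl v = a) → w ∈ U ∧ cl w = a ∧ 1 / 2 ≤ innerWeight B xB cl a w := by
    intro a
    by_cases h : ∃ v ∈ U, cl v = a
    · obtain ⟨v, hv, rfl⟩ := h
      obtain ⟨w, hw⟩ := hcl1 v hv
      exact ⟨w, fun _ => hw⟩
    · exact ⟨a, fun h' => absurd h' h⟩
  choose wit hwit using hwit
  let W : Finset α := U.filter fun v => wit (cl v) = v
  have hWU : ∀ v ∈ W, v ∈ U := fun v hv => (Finset.mem_filter.mp hv).1
  have hWw : ∀ v ∈ W, wit (cl v) = v := fun v hv => (Finset.mem_filter.mp hv).2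
  have hwW : ∀ v ∈ U, wit (cl v) ∈ W ∧ cl (wit (cl v)) = cl v := by
    intro v hv
    obtain ⟨h1, h2, -⟩ := hwit _ ⟨v, hv, rfl⟩
    exact ⟨Finset.mem_filter.mpr ⟨h1, by rw [h2]⟩, h2⟩
  have hWinj : ∀ v ∈ W, ∀ v' ∈ W, cl v = cl v' → v = v' := by
    intro v hv v' hv' h
    rw [← hWw v hv, ← hWw v' hv', h]
  -- Within a cluster the witness is unique, so a block inside a cluster picks at most one witness.
  let good : List α → α → Prop := fun A v => v ∈ W ∧ v ∈ A ∧ ∀ u ∈ A, cl u = cl v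
  let pick : List α → Option α := fun A => if h : ∃ v, good A v then some h.choose else none
  have hpick : ∀ A v, pick A = some v → good A v := by
    intro A v h
    by_cases hA : ∃ v, good A v
    · simp only [pick, dif_pos hA, Option.some.injEq] at h
      rw [← h]; exact hA.choose_spec
    · simp [pick, dif_neg hA] at h
  have hpick' : ∀ A v, good A v → pick A = some v := by
    intro A v h
    have hA : ∃ v, good A v := ⟨v, h⟩
    simp only [pick, dif_pos hA, Option.some.injEq]
    exact hWinj _ hA.choose_spec.1 v h.1 (h.2.2 _ hA.choose_spec.2.1)
  -- Keep of each path only the witnesses picked by its blocks.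
  let P' : ι → List α := fun i => (bs i).filterMap pick
  have hP'sub : ∀ i, (P' i).Sublist (P i) := by
    intro i
    rw [← hbs1 i]
    exact filterMap_sublist_flatten (fun A v h => (hpick A v h).2.1) _
  have hP'D : ∀ i, (P' i).Pairwise fun u v => D u < D v := by
    intro i
    refine List.Pairwise.filterMap pick (fun A A' h u hu v hv => ?_) (hbs2 i)
    exact h u (hpick A u hu).2.1 v (hpick A' v hv).2.1
  have hP'W : ∀ i, ∀ v ∈ P' i, v ∈ W := by
    intro i v hv
    obtain ⟨A, _, hA⟩ := List.mem_filterMap.mp hv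
    exact (hpick A v hA).1
  have hP'cov : ∀ w ∈ W, 1 ≤ ∑ i, if w ∈ P' i then 2 * x i else 0 := by
    intro w hw
    have h1 := (hwit _ ⟨w, hWU w hw, rfl⟩).2.2
    rw [hWw w hw] at h1
    have h2 : innerWeight B xB cl (cl w) w ≤ ∑ i, if w ∈ P' i then x i else 0 := by
      unfold innerWeight
      rw [hsum fun i A => if w ∈ A ∧ ∀ u ∈ A, cl u = cl w then x i else 0]
      refine Finset.sum_le_sum fun i _ => ?_
      have hpw : (bs i).Pairwise fun A A' => ¬ ((w ∈ A ∧ ∀ u ∈ A, cl u = cl w) ∧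
          (w ∈ A' ∧ ∀ u ∈ A', cl u = cl w)) := by
        refine (hbs2 i).imp ?_
        intro A A' h hh
        exact lt_irrefl _ (h w hh.1.1 w hh.2.1)
      refine (sum_map_ite_le hpw).trans (le_of_eq ?_)
      refine if_congr ?_ rfl rfl
      rw [List.mem_filterMap]
      constructor
      · rintro ⟨A, hA, h⟩; exact ⟨A, hA, hpick' A w ⟨hw, h⟩⟩
      · rintro ⟨A, hA, h⟩; exact ⟨A, hA, (hpick A w h).2⟩
    have h3 : (∑ i, if w ∈ P' i then 2 * x i else 0) =
        2 * ∑ i, if w ∈ P' i then x i else 0 := by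
      rw [Finset.mul_sum]
      exact Finset.sum_congr rfl fun i _ => by split_ifs <;> simp
    linarith
  obtain ⟨κ, _, P2, x2, hx2, hP2D, hP2W, hx2s, hP2c, hP2cov, -⟩ :=
    exists_exact_cover h0 ht W P' (fun i => 2 * x i) (fun i => by linarith [hx i]) hP'D hP'W
      hP'cov W (Finset.Subset.refl _)
  have hx2k : ∑ i, x2 i = 2 * k := by rw [hx2s, ← Finset.mul_sum]
  let K : ℕ := ⌈2 * k⌉₊ + 1
  have hKle : ∑ i, x2 i ≤ K := by
    rw [hx2k]; push_cast [K]; linarith [Nat.le_ceil (2 * k)]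
  have hKge : (K : ℝ) ≤ 2 * k + 2 := by
    push_cast [K]; linarith [Nat.ceil_lt_add_one (show 0 ≤ 2 * k by linarith)]
  obtain ⟨Q, hQ1, hQ2, hQ3, hQ4⟩ :=
    exists_integral_paths (d := d) W P2 x2 hx2 hP2D hP2W hP2cov K (Nat.succ_pos _) hKle
  have hQcost : ∑ j, pathCost d (Q j) ≤ 4 * R * k := by
    refine hQ3.trans (hP2c.trans ?_)
    have : ∑ i, 2 * x i * pathCost d (P' i) ≤ 2 * ∑ i, x i * pathCost d (P i) := by
      rw [Finset.mul_sum]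
      refine Finset.sum_le_sum fun i _ => ?_
      have := mul_le_mul_of_nonneg_left (pathCost_sublist h0 ht (hP'sub i)) (hx i)
      linarith
    linarith
  -- Insert at each witness the tour of its cluster, started at the witness.
  have hM : ∀ w, ∃ M : List α, w ∈ U → (∀ u, u ∈ w :: M ↔ u ∈ T (cl w)) ∧
      closedCost d (T (cl w)) = pathCost d (w :: M ++ [w]) := by
    intro w
    by_cases h : w ∈ U
    · obtain ⟨M, hM⟩ := closedCost_rotate d (hcl2 w h)
      exact ⟨M, fun _ => hM⟩
    · exact ⟨[], fun h' => absurd h' h⟩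
  choose M hM using hM
  let E : Fin K → List α := fun j => (Q j).flatMap fun w => w :: M w
  have hEcost : ∑ j, pathCost d (E j) ≤ 36 * R * k := by
    have h1 : ∑ j, pathCost d (E j) ≤ ∑ j, pathCost d (Q j) +
        ∑ j, ((Q j).map fun w => pathCost d (w :: M w ++ [w])).sum := by
      rw [← Finset.sum_add_distrib]
      exact Finset.sum_le_sum fun j _ => pathCost_flatMap_le h0 ht M (Q j)
    rw [hQ4] at h1
    have h2 : ∑ w ∈ W, pathCost d (w :: M w ++ [w]) ≤ ∑ a, closedCost d (T a) := by
      rw [Finset.sum_congr rfl fun w hw => (hM w (hWU w hw)).2.symm,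
        ← Finset.sum_image (f := fun a => closedCost d (T a)) (g := cl)
          (fun v hv v' hv' h => hWinj v hv v' hv' h)]
      exact Finset.sum_le_sum_of_subset_of_nonneg (Finset.subset_univ _)
        fun a _ _ => closedCost_nonneg h0 _
    linarith
  have hEU : ∀ j, ∀ v ∈ E j, v ∈ U := by
    intro j v hv
    obtain ⟨w, hw, hv⟩ := List.mem_flatMap.mp hv
    exact hcl3 _ v (((hM w (hWU w (hQ2 j w hw))).1 v).mp hv)
  have hEcov : ∀ v ∈ U, ∃ j, v ∈ E j := by
    intro v hv
    obtain ⟨h1, h2⟩ := hwW v hv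
    obtain ⟨j, hj⟩ := hQ1 _ h1
    refine ⟨j, List.mem_flatMap.mpr ⟨_, hj, ?_⟩⟩
    rw [(hM _ (hWU _ h1)).1, h2]
    exact hcl2 v hv
  have hE0 : ∀ j, 0 ≤ pathCost d (E j) := fun j => pathCost_nonneg h0 _
  let n : Fin K → ℕ := fun j => ⌊pathCost d (E j) / R⌋₊
  have hn : ∀ j, pathCost d (E j) ≤ (n j + 1) * R := by
    intro j
    rcases hR.eq_or_lt with h | h
    · -- With `R = 0` all the costs vanish, and one piece suffices.
      have : pathCost d (E j) ≤ 0 := by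
        refine (Finset.single_le_sum (fun i _ => hE0 i) (Finset.mem_univ j)).trans
          (hEcost.trans (by rw [← h]; simp))
      rw [← h]; simpa using this
    · have := (Nat.lt_floor_add_one (pathCost d (E j) / R)).le
      rwa [div_le_iff₀ h] at this
  choose S hS1 hS2 hS3 using fun j => exists_split hR (n j) (E j) (hn j)
  refine ⟨(List.ofFn S).flatten, ?_, ?_, ?_⟩
  · have h1 : ((List.ofFn S).flatten.length : ℝ) = ∑ j, ((n j : ℝ) + 1) := by
      rw [List.length_flatten, List.map_ofFn, List.sum_ofFn]
      push_cast
      exact Finset.sum_congr rfl fun j _ => by simp [hS1]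
    have h2 : ∑ j, (n j : ℝ) ≤ 36 * k := by
      have h3 : ∑ j, (n j : ℝ) ≤ ∑ j, pathCost d (E j) / R :=
        Finset.sum_le_sum fun j _ => Nat.floor_le (div_nonneg (hE0 j) hR)
      refine h3.trans ?_
      rw [← Finset.sum_div]
      rcases hR.eq_or_lt with h | h
      · rw [← h, div_zero]; linarith
      · rw [div_le_iff₀ h]; linarith
    rw [h1, Finset.sum_add_distrib]
    simp only [Finset.sum_const, Finset.card_univ, Fintype.card_fin, nsmul_eq_mul, mul_one]
    linarith
  · intro A hA
    obtain ⟨l, hl, hAl⟩ := List.mem_flatten.mp hA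
    obtain ⟨j, rfl⟩ := (List.mem_ofFn' S l).mp hl
    obtain ⟨h1, h2⟩ := hS2 j A hAl
    exact ⟨h1, fun v hv => hEU j v (h2 v hv)⟩
  · intro v hv
    obtain ⟨j, hj⟩ := hEcov v hv
    obtain ⟨A, hA, hvA⟩ := hS3 j v hj
    exact ⟨A, List.mem_flatten.mpr ⟨S j, (List.mem_ofFn' S _).mpr ⟨j, rfl⟩, hA⟩, hvA⟩

end Core

/-! ### Phases -/

section Phases

open scoped Classical

variable {α : Type}

theorem le_pathCost_getLast {c : α → α → ℝ} (hc0 : ∀ u, c u u = 0)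
    (hct : ∀ u v w, c u v ≤ c u w + c w v) (L : List α) :
    ∀ a, c a ((a :: L).getLast (List.cons_ne_nil _ _)) ≤ pathCost c (a :: L) := by
  induction L with
  | nil => intro a; simp [pathCost, hc0]
  | cons b L ih =>
    intro a
    have h := ih b
    rw [List.getLast_cons (List.cons_ne_nil _ _)]
    simp only [pathCost]
    have := hct a ((b :: L).getLast (List.cons_ne_nil _ _)) b
    linarith

/-- A rooted path of length at most `Db` through `v` has regret at most `2 (Db - c r v)`: after `v`
it can go back towards the root by at most the remaining budget `Db - c r v`. -/
theorem regret_le_of_mem {c d : α → α → ℝ} {r : α} (hsymm : ∀ u v, c u v = c v u)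
    (hc : ∀ u v, 0 ≤ c u v) (hc0 : ∀ u, c u u = 0) (hct : ∀ u v w, c u v ≤ c u w + c w v)
    (hd : ∀ u v, d u v = c r u + c u v - c r v) (h0 : ∀ u v, 0 ≤ d u v) {Db : ℝ} {L : List α}
    (hL : pathCost c (r :: L) ≤ Db) {v : α} (hv : v ∈ L) :
    pathCost d L ≤ 2 * (Db - c r v) := by
  have h1 := pathCost_regret (D := fun v => c r v) hd L r
  have h2 := pathCost_le_cons h0 r L
  obtain ⟨A, B, rfl⟩ := List.append_of_mem hv
  have hl : (r :: (A ++ v :: B)).getLast (List.cons_ne_nil _ _) =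
      (v :: B).getLast (List.cons_ne_nil _ _) := by simp
  rw [hl] at h1
  have h3 : pathCost c (r :: (A ++ v :: B)) =
      pathCost c (r :: A ++ [v]) + pathCost c (v :: B) := pathCost_append_cons c (r :: A) v B
  have h4 : c r v ≤ pathCost c (r :: A ++ [v]) := by
    have := pathCost_cons_sublist hc hct (A ++ [v]) r [v] (List.sublist_append_right _ _)
    simpa [pathCost] using this
  have h5 := le_pathCost_getLast hc0 hct B v
  have h6 := hct r v ((v :: B).getLast (List.cons_ne_nil _ _))
  rw [hsymm ((v :: B).getLast (List.cons_ne_nil _ _)) v] at h6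
  simp only [hc0] at h1
  linarith

/-- The phases of the algorithm. Each phase takes a farthest uncovered node `v`, adds the paths
through `v` to the set `A` of processed paths, and covers the nodes that `A` covers to extent `1/2`
using lists of regret at most `Db - c r v`. The weight of `A` grows by at least `1/2` per phase. -/
theorem exists_phases [Fintype α] {c d : α → α → ℝ} {r : α} (hsymm : ∀ u v, c u v = c v u)
    (hc : ∀ u v, 0 ≤ c u v) (hc0 : ∀ u, c u u = 0) (hct : ∀ u v w, c u v ≤ c u w + c w v)
    (hd : ∀ u v, d u v = c r u + c u v - c r v) {Db : ℝ} {m : ℕ} (P : Fin m → List α)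
    (x : Fin m → ℝ) (hx : ∀ i, 0 ≤ x i) (hP : ∀ i, pathCost c (r :: P i) ≤ Db)
    (hcov1 : ∀ v, v ≠ r → 1 ≤ ∑ i, if v ∈ P i then x i else 0) (hk : 1 ≤ ∑ i, x i) (n : ℕ) :
    ∀ (U : Finset α) (A : Finset (Fin m)), U.card ≤ n → r ∉ U →
      (∀ v ∈ U, 1 / 2 ≤ ∑ i, if i ∉ A ∧ v ∈ P i then x i else 0) →
      (∀ i ∈ A, ∀ v ∈ U, pathCost d ((P i).filter (· ∈ U)) ≤ 2 * (Db - c r v)) →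
      ∃ S : List (List α),
        (S.length : ℝ) ≤ 2 * (∑ i, x i - ∑ i ∈ A, x i) * (78 * ∑ i, x i) ∧
        (∀ L ∈ S, IsRootedPath r L ∧ pathCost c L ≤ Db) ∧ ∀ v ∈ U, ∃ L ∈ S, v ∈ L.tail := by
  have h0 : ∀ u v, 0 ≤ d u v := fun u v => by rw [hd]; linarith [hct r v u]
  have ht : ∀ u v w, d u v ≤ d u w + d w v := fun u v w => by
    rw [hd, hd, hd]; linarith [hct u v w]
  have hxA : ∀ A : Finset (Fin m), ∑ i ∈ A, x i ≤ ∑ i, x i := fun A =>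
    Finset.sum_le_sum_of_subset_of_nonneg (Finset.subset_univ _) fun i _ _ => hx i
  induction n with
  | zero =>
    intro U A hU _ _ _
    have : U = ∅ := Finset.card_eq_zero.mp (by omega)
    subst this
    refine ⟨[], ?_, by simp, by simp⟩
    have := hxA A
    simp only [List.length_nil, Nat.cast_zero]
    exact mul_nonneg (by linarith) (by linarith)
  | succ n ih =>
    intro U A hU hr hcov hA
    rcases U.eq_empty_or_nonempty with hUe | hUne
    · exact ih U A (by simp [hUe]) hr hcov hA
    obtain ⟨v, hv, hmax⟩ := Finset.exists_max_image U (fun v => c r v) hUne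
    set s := Db - c r v with hs
    let A' : Finset (Fin m) := A ∪ Finset.univ.filter fun i => v ∈ P i
    have hA'mem : ∀ i, i ∈ A' ↔ i ∈ A ∨ v ∈ P i := fun i => by simp [A']
    have hgrow : ∑ i ∈ A, x i + 1 / 2 ≤ ∑ i ∈ A', x i := by
      have e : ∑ i ∈ A', x i = ∑ i ∈ A, x i + ∑ i, if i ∉ A ∧ v ∈ P i then x i else 0 := by
        rw [← Finset.sum_filter, ← Finset.sum_union]
        · refine Finset.sum_congr ?_ fun _ _ => rfl
          ext i
          simp only [hA'mem, Finset.mem_union, Finset.mem_filter, Finset.mem_univ, true_and]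
          tauto
        · rw [Finset.disjoint_left]
          intro i hi hi'
          exact (Finset.mem_filter.mp hi').2.1 hi
      linarith [hcov v hv]
    have hreg : ∀ i, v ∈ P i → pathCost d (P i) ≤ 2 * s := fun i hi =>
      regret_le_of_mem hsymm hc hc0 hct hd h0 (hP i) hi
    have hs0 : 0 ≤ s := by
      obtain ⟨i, _, hi⟩ := Finset.exists_ne_zero_of_sum_ne_zero
        (show (∑ i, if i ∉ A ∧ v ∈ P i then x i else 0) ≠ 0 by
          have := hcov v hv
          intro h
          rw [h] at this
          norm_num at this)
      have hi' : v ∈ P i := by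
        by_contra h
        exact hi (by simp [h])
      linarith [hreg i hi', pathCost_nonneg h0 (P i)]
    let U1 : Finset α := U.filter fun u => 1 / 2 ≤ ∑ i, if i ∈ A' ∧ u ∈ P i then x i else 0
    let U' : Finset α := U.filter fun u => ¬ 1 / 2 ≤ ∑ i, if i ∈ A' ∧ u ∈ P i then x i else 0
    have hU1 : U1 ⊆ U := Finset.filter_subset _ _
    have hU' : U' ⊆ U := Finset.filter_subset _ _
    have hne : ∀ u ∈ U, u ≠ r := fun u hu h => hr (h ▸ hu)
    have hv1 : v ∉ U' := by
      intro h
      refine (Finset.mem_filter.mp h).2 ?_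
      refine le_trans (by norm_num) ((hcov1 v (hne v hv)).trans (le_of_eq ?_))
      refine Finset.sum_congr rfl fun i _ => ?_
      refine if_congr ?_ rfl rfl
      rw [hA'mem]; tauto
    have hfilt : ∀ {X Y : Finset α}, X ⊆ Y → ∀ L : List α,
        pathCost d (L.filter (· ∈ X)) ≤ pathCost d (L.filter (· ∈ Y)) := by
      intro X Y h L
      exact pathCost_sublist h0 ht (List.monotone_filter_right L (by simpa using fun a ha => h ha))
    have hA'reg : ∀ X : Finset α, X ⊆ U → ∀ i ∈ A', pathCost d ((P i).filter (· ∈ X)) ≤ 2 * s := by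
      intro X hX i hi
      rcases (hA'mem i).mp hi with h | h
      · exact (hfilt hX _).trans (hA i h v hv)
      · exact (pathCost_sublist h0 ht List.filter_sublist).trans (hreg i h)
    obtain ⟨S1, hS1a, hS1b, hS1c⟩ := exists_cover_of_regret (D := fun v => c r v) hsymm hc hc0 hd h0
      ht hs0 U1 (fun i => (P i).filter (· ∈ U1)) (fun i => if i ∈ A' then 2 * x i else 0)
      (fun i => by split_ifs <;> linarith [hx i])
      (fun i u hu => by simpa using (List.mem_filter.mp hu).2)
      (by
        intro u hu
        have h := (Finset.mem_filter.mp hu).2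
        have e : (∑ i, if u ∈ (P i).filter (· ∈ U1) then (if i ∈ A' then 2 * x i else 0) else 0) =
            2 * ∑ i, if i ∈ A' ∧ u ∈ P i then x i else 0 := by
          rw [Finset.mul_sum]
          refine Finset.sum_congr rfl fun i _ => ?_
          by_cases h1 : i ∈ A' <;> by_cases h2 : u ∈ P i <;> simp [h1, h2, hu]
        rw [e]; linarith)
      (by
        rw [Finset.mul_sum]
        refine Finset.sum_le_sum fun i _ => ?_
        by_cases h : i ∈ A'
        · rw [if_pos h]
          have := mul_le_mul_of_nonneg_left (hA'reg U1 hU1 i h)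
            (show 0 ≤ 2 * x i by linarith [hx i])
          linarith
        · rw [if_neg h]; simp)
    obtain ⟨S2, hS2a, hS2b, hS2c⟩ := ih U' A'
      (by
        have : U'.card < U.card :=
          Finset.card_lt_card ⟨hU', fun h => hv1 (h hv)⟩
        omega)
      (fun h => hr (hU' h))
      (by
        intro u hu
        have h1 := hcov1 u (hne u (hU' hu))
        have h2 := (Finset.mem_filter.mp hu).2
        have e : (∑ i, if u ∈ P i then x i else 0) =
            (∑ i, if i ∈ A' ∧ u ∈ P i then x i else 0) +
            ∑ i, if i ∉ A' ∧ u ∈ P i then x i else 0 := by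
          rw [← Finset.sum_add_distrib]
          refine Finset.sum_congr rfl fun i _ => ?_
          by_cases h1 : i ∈ A' <;> by_cases h2 : u ∈ P i <;> simp [h1, h2]
        linarith)
      (by
        intro i hi u hu
        have := hmax u (hU' hu)
        have := hA'reg U' hU' i hi
        linarith)
    refine ⟨S1.map (fun L => r :: L.dedup) ++ S2, ?_, ?_, ?_⟩
    · have e : (∑ i, if i ∈ A' then 2 * x i else 0) = 2 * ∑ i ∈ A', x i := by
        rw [Finset.mul_sum, Finset.sum_ite_mem, Finset.univ_inter]
      rw [e] at hS1a
      have h1 := hxA A'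
      rw [List.length_append, List.length_map]
      push_cast
      nlinarith
    · intro L hL
      rcases List.mem_append.mp hL with hL | hL
      · obtain ⟨B, hB, rfl⟩ := List.mem_map.mp hL
        obtain ⟨hB1, hB2⟩ := hS1b B hB
        refine ⟨⟨rfl, List.nodup_cons.mpr ⟨?_, List.nodup_dedup B⟩⟩, ?_⟩
        · intro h
          exact hr (hU1 (hB2 r (List.mem_dedup.mp h)))
        · have h1 := pathCost_regret (D := fun v => c r v) hd B.dedup r
          have h2 : pathCost d (r :: B.dedup) ≤ pathCost d B.dedup := by
            cases B.dedup with
            | nil => simp [pathCost]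
            | cons b l => simp only [pathCost, hd r b, hc0]; linarith
          have h3 := pathCost_sublist h0 ht (List.dedup_sublist B)
          have h4 : c r ((r :: B.dedup).getLast (List.cons_ne_nil _ _)) ≤ c r v := by
            rcases List.mem_cons.mp (List.getLast_mem (List.cons_ne_nil r B.dedup)) with h | h
            · rw [h, hc0]; exact hc r v
            · exact hmax _ (hU1 (hB2 _ (List.mem_dedup.mp h)))
          simp only [hc0] at h1
          linarith
      · exact hS2b L hL
    · intro u hu
      by_cases h : u ∈ U1
      · obtain ⟨B, hB, huB⟩ := hS1c u h
        exact ⟨r :: B.dedup, List.mem_append_left _ (List.mem_map.mpr ⟨B, hB, rfl⟩),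
          List.mem_dedup.mpr huB⟩
      · obtain ⟨L, hL, huL⟩ := hS2c u
          (Finset.mem_filter.mpr ⟨hu, fun h' => h (Finset.mem_filter.mpr ⟨hu, h'⟩)⟩)
        exact ⟨L, List.mem_append_right _ hL, huL⟩

end Phases

/-- there is an absolute constant `C > 0` such that for every DVRP instance with
distance bound `D > 0` and every feasible fractional solution `x` to the configuration LP
(DV-P) of value `k*` (note `k* ≥ 1` since `V ≠ ∅`), there exist at most `C·(k*)²` rooted
paths, each of length at most `D`, covering all of `V`.  In particular the integrality gap of
(DV-P) is `O(OPT_LP)`. -/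
theorem dvrp_lp_gap_opt_squared :
    ∃ C : ℝ, 0 < C ∧
      ∀ (α : Type) [Fintype α] [DecidableEq α], ∀ (c : α → α → ℝ) (r : α),
        (∀ u v, c u v = c v u) → (∀ u v, 0 ≤ c u v) →
        (∀ u v w, c u v ≤ c u w + c w v) → (∀ u, c u u = 0) →
        (∀ u v, u ≠ v → 0 < c u v) →
        (∃ v : α, v ≠ r) →
        ∀ (D : ℝ), 0 < D →
        ∀ (m : ℕ) (P : Fin m → List α) (x : Fin m → ℝ),
          (∀ i, IsRootedPath r (P i) ∧ pathCost c (P i) ≤ D) →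
          (∀ i, 0 ≤ x i) →
          (∀ v, v ≠ r → 1 ≤ ∑ i ∈ Finset.univ.filter (fun i => v ∈ (P i).tail), x i) →
          ∃ (n : ℕ) (Q : Fin n → List α),
            (n : ℝ) ≤ C * (∑ i, x i) ^ 2 ∧
            (∀ j, IsRootedPath r (Q j) ∧ pathCost c (Q j) ≤ D) ∧
            (∀ v, v ≠ r → ∃ j, v ∈ (Q j).tail) := by
  classical
  refine ⟨156, by norm_num, ?_⟩
  intro α _ _ c r hsymm hc hct hc0 _ ⟨v0, hv0⟩ D _ m P x hP hx hcov
  have hPr : ∀ i, P i = r :: (P i).tail := fun i => (List.cons_head?_tail (hP i).1.1).symm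
  have hcov' : ∀ v, v ≠ r → 1 ≤ ∑ i, if v ∈ (P i).tail then x i else 0 := by
    intro v hv
    have h := hcov v hv
    rw [Finset.sum_filter] at h
    convert h
  have hk : 1 ≤ ∑ i, x i := (hcov v0 hv0).trans
    (Finset.sum_le_sum_of_subset_of_nonneg (Finset.filter_subset _ _) fun i _ _ => hx i)
  obtain ⟨S, h1, h2, h3⟩ := exists_phases (d := fun u v => c r u + c u v - c r v) hsymm hc hc0 hct
    (fun _ _ => rfl) (fun i => (P i).tail) x hx (fun i => by rw [← hPr i]; exact (hP i).2)
    (by intro v hv; convert hcov' v hv) hk _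
    (Finset.univ.filter (· ≠ r)) ∅ le_rfl (by simp)
    (by
      intro v hv
      have h := hcov' v (Finset.mem_filter.mp hv).2
      refine le_trans (by norm_num) (h.trans (le_of_eq ?_))
      refine Finset.sum_congr rfl fun i _ => ?_
      by_cases hvi : v ∈ (P i).tail <;> simp [hvi])
    (by simp)
  refine ⟨S.length, fun j => S[j], ?_, fun j => h2 _ (List.getElem_mem _), fun v hv => ?_⟩
  · rw [Finset.sum_empty, sub_zero] at h1
    linarith [h1]
  · obtain ⟨L, hL, hvL⟩ := h3 v (Finset.mem_filter.mpr ⟨Finset.mem_univ _, hv⟩)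
    obtain ⟨j, hj, rfl⟩ := List.getElem_of_mem hL
    exact ⟨⟨j, hj⟩, hvL⟩
end
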